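/- arXiv:2507.19293 — 6 statements merged into one kernel-verified Lean document; each statement's English description precedes it below -/
import Mathlib

section
/- For every n ≥ 2 and every m with 2 ≤ m ≤ n, there exists a 2(m−2)!-rainbow cycle for S_n under all transpositions, i.e., a cyclically ordered list of pairwise distinct permutations of [n] in which any two cyclically consecutive permutations differ by applying a transposition and each of the n(n−1)/2 transpositions on [n] is applied exactly 2(m−2)! times around the cycle. In particular, taking m = n, S_n admits a balanced cyclic Gray code under all transpositions. -/
open Equiv

namespace RainbowCycle

/-- `Path a b S M`: a walk from `a` to `b` whose multiset of visited vertices is `S` and whose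
multiset of directed edges is `M`. -/
inductive Path {V : Type} : V → V → Multiset V → Multiset (V × V) → Prop
  | nil (v : V) : Path v v {v} 0
  | cons {u v : V} {S : Multiset V} {M : Multiset (V × V)} (w : V) (h : Path u v S M) :
      Path w v (w ::ₘ S) ((w, u) ::ₘ M)

/-- A closed walk. -/
def Cyc {V : Type} (S : Multiset V) (M : Multiset (V × V)) : Prop :=
  ∃ a b M', Path a b S M' ∧ M = (b, a) ::ₘ M'

theorem Path.start_mem {V : Type} {a b : V} {S M} (h : Path a b S M) : a ∈ S := by
  cases h <;> simp

theorem Path.append {V : Type} {a b c d : V} {S M T M'} (h : Path a b S M)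
    (h' : Path c d T M') : Path a d (S + T) ((b, c) ::ₘ (M + M')) := by
  induction h with
  | nil v =>
    have := Path.cons v h'
    simpa using this
  | cons w h ih =>
    have := Path.cons w (ih)
    rw [Multiset.cons_add, Multiset.cons_add, Multiset.cons_swap]
    exact this

theorem Path.split {V : Type} {a b c d : V} {S M} (h : Path a b S M) (hm : (c, d) ∈ M) :
    ∃ S1 M1 S2 M2, Path a c S1 M1 ∧ Path d b S2 M2 ∧ S = S1 + S2 ∧
      M = (c, d) ::ₘ (M1 + M2) := by
  induction h with
  | nil v => simp at hm
  | @cons u v S M w h ih =>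
    rcases Multiset.mem_cons.1 hm with hm | hm
    · obtain ⟨rfl, rfl⟩ := Prod.mk.inj hm
      exact ⟨{c}, 0, S, M, Path.nil _, h, by simp, by simp⟩
    · obtain ⟨S1, M1, S2, M2, h1, h2, rfl, rfl⟩ := ih hm
      refine ⟨_, _, S2, M2, Path.cons w h1, h2, by simp, ?_⟩
      rw [Multiset.cons_add, Multiset.cons_swap]

theorem Cyc.rotate {V : Type} {c d : V} {S M} (h : Cyc S M) (hm : (c, d) ∈ M) :
    ∃ M', Path d c S M' ∧ M = (c, d) ::ₘ M' := by
  obtain ⟨a, b, M', h, rfl⟩ := h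
  rcases Multiset.mem_cons.1 hm with hm | hm
  · obtain ⟨rfl, rfl⟩ := Prod.mk.inj hm
    exact ⟨M', h, rfl⟩
  · obtain ⟨S1, M1, S2, M2, h1, h2, rfl, rfl⟩ := h.split hm
    refine ⟨_, by rw [add_comm]; exact h2.append h1, ?_⟩
    rw [Multiset.cons_swap, add_comm M1]

theorem Path.map {V W : Type} (f : V → W) {a b : V} {S M} (h : Path a b S M) :
    Path (f a) (f b) (S.map f) (M.map (Prod.map f f)) := by
  induction h with
  | nil v => simpa using Path.nil (f v)
  | cons w h ih => simpa using Path.cons (f w) ih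

theorem Path.edge_mem {V : Type} {a b : V} {S M} (h : Path a b S M) :
    ∀ e ∈ M, e.1 ∈ S ∧ e.2 ∈ S := by
  induction h with
  | nil v => simp
  | cons w h ih =>
    intro e he
    rcases Multiset.mem_cons.1 he with rfl | he
    · simp [h.start_mem]
    · simp [ih e he]

/-- Path as a function on `Fin`. -/
theorem Path.exists_fun {V : Type} {a b : V} {S M} (h : Path a b S M) :
    ∃ (k : ℕ) (f : Fin (k + 1) → V), f 0 = a ∧ f (Fin.last k) = b ∧
      S = (Finset.univ : Finset (Fin (k + 1))).val.map f ∧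
      M = (Finset.univ : Finset (Fin k)).val.map (fun i => (f i.castSucc, f i.succ)) := by
  induction h with
  | nil v => exact ⟨0, fun _ => v, rfl, rfl, by simp, by simp⟩
  | cons w h ih =>
    obtain ⟨k, f, h0, hl, rfl, rfl⟩ := ih
    refine ⟨k + 1, Fin.cons w f, rfl, ?_, ?_, ?_⟩
    · rw [← Fin.succ_last, Fin.cons_succ, hl]
    · rw [Fin.univ_succ]
      simp [Function.comp_def]
    · rw [Fin.univ_succ]
      simp [Function.comp_def, h0]

theorem Cyc.exists_fun {V : Type} {S M} (h : Cyc (V := V) S M) :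
    ∃ (k : ℕ) (f : Fin (k + 1) → V),
      S = (Finset.univ : Finset (Fin (k + 1))).val.map f ∧
      M = (Finset.univ : Finset (Fin (k + 1))).val.map (fun i => (f i, f (i + 1))) := by
  obtain ⟨a, b, M', h, rfl⟩ := h
  obtain ⟨k, f, h0, hl, hS, rfl⟩ := h.exists_fun
  refine ⟨k, f, hS, ?_⟩
  rw [Fin.univ_castSuccEmb]
  simp [Function.comp_def, h0, hl]

/-- Label of a directed edge. -/
def lab {G : Type} [Group G] (e : G × G) : G := e.1⁻¹ * e.2

open Classical in
/-- The multiset of all transpositions. -/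
noncomputable def T (α : Type) [Fintype α] [DecidableEq α] : Multiset (Perm α) :=
  (Finset.univ.filter (fun t : Perm α => t.IsSwap)).val

open Classical in
/-- The multiset of all transpositions fixing `b`. -/
noncomputable def TF {α : Type} [Fintype α] [DecidableEq α] (b : α) : Multiset (Perm α) :=
  (Finset.univ.filter (fun t : Perm α => t.IsSwap ∧ t b = b)).val

/-- `r`-rainbow cycle. -/
def Rb (α : Type) [Fintype α] [DecidableEq α] (r : ℕ) : Prop :=
  ∃ S M, Cyc (V := Perm α) S M ∧ S.Nodup ∧ M.map lab = r • T α

/-- Hamiltonian `r`-rainbow cycle. -/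
def Hb (α : Type) [Fintype α] [DecidableEq α] (r : ℕ) : Prop :=
  ∃ S M, Cyc (V := Perm α) S M ∧ S.Nodup ∧ (∀ g, g ∈ S) ∧ M.map lab = r • T α

theorem Hb.rb {α : Type} [Fintype α] [DecidableEq α] {r : ℕ} (h : Hb α r) : Rb α r := by
  obtain ⟨S, M, h1, h2, -, h3⟩ := h
  exact ⟨S, M, h1, h2, h3⟩

theorem count_T {α : Type} [Fintype α] [DecidableEq α] {t : Perm α} (ht : t.IsSwap) :
    (T α).count t = 1 := by
  classical
  exact Multiset.count_eq_one_of_mem (Finset.nodup _) (by simpa [T] using ht)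

theorem count_T' {α : Type} [Fintype α] [DecidableEq α] {t : Perm α} (ht : ¬ t.IsSwap) :
    (T α).count t = 0 := by
  classical
  exact Multiset.count_eq_zero_of_notMem (by simpa [T] using ht)

theorem mem_T {α : Type} [Fintype α] [DecidableEq α] {t : Perm α} : t ∈ T α ↔ t.IsSwap := by
  simp [T]

theorem mem_TF {α : Type} [Fintype α] [DecidableEq α] {b : α} {t : Perm α} :
    t ∈ TF b ↔ t.IsSwap ∧ t b = b := by
  simp [TF]

theorem nodup_T (α : Type) [Fintype α] [DecidableEq α] : (T α).Nodup := Finset.nodup _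
theorem nodup_TF {α : Type} [Fintype α] [DecidableEq α] (b : α) : (TF b).Nodup := Finset.nodup _

theorem eq_smul_T {α : Type} [Fintype α] [DecidableEq α] {r : ℕ} {L : Multiset (Perm α)}
    (h1 : ∀ t ∈ L, t.IsSwap) (h2 : ∀ i j, i ≠ j → L.count (swap i j) = r) : L = r • T α := by
  ext t
  rw [Multiset.count_nsmul]
  by_cases ht : t.IsSwap
  · rw [count_T ht]
    obtain ⟨i, j, hij, rfl⟩ := ht
    rw [h2 i j hij, mul_one]
  · rw [count_T' ht, mul_zero, Multiset.count_eq_zero]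
    exact fun h => ht (h1 t h)

/-- From a rainbow cycle to the frozen form. -/
theorem Rb.final {n r : ℕ} (h : Rb (Fin n) r) :
    ∃ (N : ℕ) (π : Fin (N + 1) → Equiv.Perm (Fin n)),
      Function.Injective π ∧
      (∀ s : Fin (N + 1), ∃ i j : Fin n, i ≠ j ∧ π (s + 1) = Equiv.swap i j * π s) ∧
      (∀ i j : Fin n, i ≠ j →
        (Finset.univ.filter
            (fun s : Fin (N + 1) => π (s + 1) = Equiv.swap i j * π s)).card
          = r) := by
  obtain ⟨S, M, h1, h2, h3⟩ := h
  obtain ⟨k, f, rfl, rfl⟩ := h1.exists_fun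
  rw [Multiset.map_map] at h3
  have key : ∀ s (t : Perm (Fin n)), (f (s + 1))⁻¹ = t⁻¹ * (f s)⁻¹ ↔ t = lab (f s, f (s + 1)) := by
    intro s t
    unfold lab
    constructor
    · intro h
      have : f (s + 1) = f s * t := by rw [← inv_inj, h, mul_inv_rev]
      simp [this]
    · rintro rfl
      simp
  refine ⟨k, fun s => (f s)⁻¹, ?_, ?_, ?_⟩
  · intro s t hst
    have hst' : f s = f t := inv_injective hst
    exact Multiset.inj_on_of_nodup_map h2 s (by simp) t (by simp) hst'
  · intro s
    have : lab (f s, f (s + 1)) ∈ r • T (Fin n) := by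
      rw [← h3]
      exact Multiset.mem_map.2 ⟨s, by simp, rfl⟩
    obtain ⟨i, j, hij, he⟩ := mem_T.1 (Multiset.mem_of_mem_nsmul this)
    refine ⟨i, j, hij, ?_⟩
    have := (key s (swap i j)).2 he.symm
    simpa using this
  · intro i j hij
    have hc : Multiset.count (swap i j) (r • T (Fin n)) = r := by
      rw [Multiset.count_nsmul, count_T ⟨i, j, hij, rfl⟩, mul_one]
    rw [← h3, Multiset.count_map] at hc
    rw [← hc, Finset.card_def, Finset.filter_val]
    congr 1
    apply Multiset.filter_congr
    intro s _
    have := key s (swap i j)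
    rw [swap_inv] at this
    exact this

theorem T_map_congr {α β : Type} [Fintype α] [DecidableEq α] [Fintype β] [DecidableEq β]
    (e : α ≃ β) : (T α).map (fun g => e.permCongr g) = T β := by
  have hsw : ∀ x y : α, e.permCongr (swap x y) = swap (e x) (e y) := by
    intro x y
    ext z
    simp [Equiv.permCongr_apply, Equiv.swap_apply_def, Equiv.symm_apply_eq]
    split_ifs <;> simp
  rw [Multiset.Nodup.ext ((nodup_T α).map e.permCongr.injective) (nodup_T β)]
  intro t
  simp only [Multiset.mem_map, mem_T]
  constructor
  · rintro ⟨_, ⟨x, y, hxy, rfl⟩, rfl⟩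
    exact ⟨e x, e y, by simpa using hxy, hsw x y⟩
  · rintro ⟨x, y, hxy, rfl⟩
    exact ⟨swap (e.symm x) (e.symm y), ⟨_, _, by simpa using hxy, rfl⟩, by simp [hsw]⟩

theorem Hb.congr {α β : Type} [Fintype α] [DecidableEq α] [Fintype β] [DecidableEq β]
    (e : α ≃ β) {r : ℕ} (h : Hb α r) : Hb β r := by
  obtain ⟨S, M, ⟨a, b, M', h1, rfl⟩, h2, h3, h4⟩ := h
  have hlab : ∀ p : Perm α × Perm α, lab (Prod.map e.permCongr e.permCongr p)
      = e.permCongr (lab p) := by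
    rintro ⟨p, q⟩
    unfold lab
    ext z
    simp only [Prod.map_apply, Perm.mul_apply, Equiv.permCongr_apply, Equiv.Perm.inv_def]
    rw [Equiv.symm_apply_eq]
    simp [Equiv.permCongr_apply]
  refine ⟨_, _, ⟨_, _, _, h1.map e.permCongr, rfl⟩, h2.map e.permCongr.injective, ?_, ?_⟩
  · intro g
    exact Multiset.mem_map.2 ⟨e.permCongr.symm g, h3 _, e.permCongr.apply_symm_apply g⟩
  · rw [← T_map_congr e, ← Multiset.map_nsmul, ← h4]
    simp only [Multiset.map_cons, Multiset.map_map, Function.comp_def, hlab]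
    congr 1
    exact hlab (b, a)

/-- Vertices of the walk from `a` following a word. -/
def verts {G : Type} [Group G] : G → List G → List G
  | a, [] => [a]
  | a, t :: w => a :: verts (a * t) w

theorem path_verts {G : Type} [Group G] (w : List G) : ∀ a : G,
    ∃ M, Path a (a * w.prod) (verts a w : Multiset G) M ∧ M.map lab = (w : Multiset G) := by
  induction w with
  | nil => intro a; exact ⟨0, by simpa [verts] using Path.nil a, rfl⟩
  | cons t w ih =>
    intro a
    obtain ⟨M, h1, h2⟩ := ih (a * t)
    refine ⟨_, by simpa [verts, mul_assoc] using Path.cons a h1, ?_⟩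
    simp [h2, lab]

theorem Hb.of_word {α : Type} [Fintype α] [DecidableEq α] {r : ℕ} (w : List (Perm α)) (t : Perm α)
    (hp : w.prod * t = 1) (hnd : (verts 1 w).Nodup) (hall : (verts 1 w).length = Fintype.card (Perm α))
    (h1 : ∀ s ∈ t :: w, s.IsSwap) (h2 : ∀ i j, i ≠ j → (t :: w).count (swap i j) = r) :
    Hb α r := by
  obtain ⟨M, hM, hl⟩ := path_verts w (1 : Perm α)
  refine ⟨_, _, ⟨_, _, _, hM, rfl⟩, hnd, ?_, ?_⟩
  · intro g
    have := Finset.eq_univ_of_card (⟨_, Multiset.coe_nodup.2 hnd⟩ : Finset (Perm α)) (by simpa using hall)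
    have hg := Finset.mem_univ g
    rw [← this] at hg
    exact hg
  · rw [Multiset.map_cons, hl]
    have : lab ((1 : Perm α) * w.prod, (1 : Perm α)) = t := by
      unfold lab
      simp [← eq_inv_of_mul_eq_one_right hp]
    rw [this, Multiset.cons_coe]
    exact eq_smul_T (by simpa using h1) (by simpa only [Multiset.coe_count] using h2)

/-- Word of transpositions from a list of pairs. -/
def wd {n : ℕ} (l : List (Fin n × Fin n)) : List (Perm (Fin n)) := l.map (fun p => swap p.1 p.2)

theorem Hb.of_pairs {n r : ℕ} (l : List (Fin n × Fin n)) (p : Fin n × Fin n)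
    (hp : (wd l).prod * swap p.1 p.2 = 1) (hnd : (verts 1 (wd l)).Nodup)
    (hall : (verts 1 (wd l)).length = Nat.factorial n)
    (h1 : ∀ q ∈ p :: l, q.1 ≠ q.2)
    (h2 : ∀ i j, i ≠ j → (wd (p :: l)).count (swap i j) = r) :
    Hb (Fin n) r := by
  refine Hb.of_word (wd l) (swap p.1 p.2) hp hnd (by simpa [Fintype.card_perm] using hall) ?_ h2
  intro s hs
  have : s ∈ wd (p :: l) := hs
  obtain ⟨q, hq, rfl⟩ := List.mem_map.1 this
  exact ⟨_, _, h1 q hq, rfl⟩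

theorem Hb.two : Hb (Fin 2) 2 := by
  apply Hb.of_pairs [(0, 1)] (0, 1) <;> decide +kernel

theorem Hb.three : Hb (Fin 3) 2 := by
  apply Hb.of_pairs [(0, 1), (0, 2), (1, 2), (0, 1), (0, 2)] (1, 2) <;> decide +kernel

theorem Hb.four : Hb (Fin 4) 4 := by
  apply Hb.of_pairs [(0, 1), (0, 2), (0, 1), (0, 2), (0, 1), (0, 3), (0, 1), (0, 3), (1, 2),
    (1, 3), (1, 2), (0, 3), (2, 3), (0, 3), (1, 2), (1, 3), (0, 2), (2, 3), (1, 3), (1, 2),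
    (2, 3), (0, 2), (1, 3)] (2, 3) <;> decide +kernel

section Layers

set_option linter.unusedSectionVars false

variable {α : Type} [Fintype α] [DecidableEq α]

theorem exists_ofSubtype {b : α} {τ : Perm α} (h : τ b = b) :
    ∃ σ : Perm {i // i ≠ b}, Perm.ofSubtype σ = τ := by
  refine ⟨τ.subtypePerm ?_, Perm.ofSubtype_subtypePerm _ ?_⟩
  · intro y
    constructor
    · intro hy hyb
      exact hy (by rw [hyb, h])
    · intro hy hyb
      exact hy (τ.injective (by rw [hyb, h]))
  · rintro y hy rfl
    exact hy h

theorem ofSubtype_fix {b : α} (σ : Perm {i // i ≠ b}) : Perm.ofSubtype σ b = b :=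
  Perm.ofSubtype_apply_of_not_mem _ (by simp)

theorem TF_eq (b : α) : TF b = (T {i // i ≠ b}).map (fun σ => Perm.ofSubtype σ) := by
  rw [Multiset.Nodup.ext (nodup_TF b) ((nodup_T _).map Perm.ofSubtype_injective)]
  intro t
  simp only [Multiset.mem_map, mem_T, mem_TF]
  constructor
  · rintro ⟨⟨i, j, hij, rfl⟩, hb⟩
    have hi : i ≠ b := by
      rintro rfl
      rw [swap_apply_left] at hb
      exact hij hb.symm
    have hj : j ≠ b := by
      rintro rfl
      rw [swap_apply_right] at hb
      exact hij hb
    exact ⟨swap ⟨i, hi⟩ ⟨j, hj⟩, ⟨_, _, by simpa using hij, rfl⟩, Perm.ofSubtype_swap_eq _ _⟩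
  · rintro ⟨s, hs, rfl⟩
    exact ⟨hs.of_subtype_isSwap, ofSubtype_fix s⟩

/-- Availability of a directed edge with label `t` inside layer `a`. -/
def Av (x : α) (M : Multiset (Perm α × Perm α)) (a : α) (t : Perm α) : Prop :=
  ∃ g : Perm α, g a = x ∧ (g, g * t) ∈ M

/-- Layer `b` can be traversed with any prescribed closing edge. -/
def LayerOK (x : α) (r : ℕ) (b : α) : Prop :=
  ∀ h t : Perm α, h b = x → t.IsSwap → t b = b →
    ∃ S M, Path (h * t) h S M ∧ S.Nodup ∧ (∀ g, g ∈ S ↔ g b = x) ∧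
      t ::ₘ M.map lab = r • TF b ∧
      ∀ t' : Perm α, t'.IsSwap → t' b = b → t' ≠ t → Av x M b t'

theorem layerOK (x b : α) {r : ℕ} (hr : r ≠ 0) (hH : Hb {i // i ≠ b} r) : LayerOK x r b := by
  intro h t hb ht htb
  obtain ⟨S, M, hC, hS, hall, hl⟩ := hH
  obtain ⟨t0, rfl⟩ := exists_ofSubtype htb
  have ht0 : t0 ∈ M.map lab := by
    have : Perm.ofSubtype t0 ∈ TF b := mem_TF.2 ⟨ht, htb⟩
    rw [TF_eq] at this
    obtain ⟨s, hs, hst⟩ := Multiset.mem_map.1 this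
    rw [Perm.ofSubtype_injective hst] at hs
    rw [hl]
    exact (Multiset.mem_nsmul_of_ne_zero hr).2 hs
  obtain ⟨⟨u, v⟩, huv, hlab⟩ := Multiset.mem_map.1 ht0
  obtain ⟨M1, hP, rfl⟩ := hC.rotate huv
  have hlabf : ∀ p : Perm {i // i ≠ b} × Perm {i // i ≠ b},
      lab (Prod.map (fun σ => h * (Perm.ofSubtype u)⁻¹ * Perm.ofSubtype σ)
        (fun σ => h * (Perm.ofSubtype u)⁻¹ * Perm.ofSubtype σ) p) = Perm.ofSubtype (lab p) := by
    rintro ⟨p, q⟩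
    simp [lab, mul_assoc]
  have hlm : Perm.ofSubtype t0 ::ₘ (M1.map (Prod.map
        (fun σ => h * (Perm.ofSubtype u)⁻¹ * Perm.ofSubtype σ)
        (fun σ => h * (Perm.ofSubtype u)⁻¹ * Perm.ofSubtype σ))).map lab = r • TF b := by
    rw [TF_eq, ← Multiset.map_nsmul, ← hl, Multiset.map_cons, Multiset.map_cons, hlab,
      Multiset.map_map, Multiset.map_map]
    congr 1
    apply Multiset.map_congr rfl
    intro p _
    exact hlabf p
  have hP' := hP.map (fun σ => h * (Perm.ofSubtype u)⁻¹ * Perm.ofSubtype σ)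
  have e1 : h * (Perm.ofSubtype u)⁻¹ * Perm.ofSubtype v = h * Perm.ofSubtype t0 := by
    rw [← hlab]
    simp [lab, mul_assoc]
  have e2 : h * (Perm.ofSubtype u)⁻¹ * Perm.ofSubtype u = h := by simp
  rw [e1, e2] at hP'
  have hfix : (Perm.ofSubtype u)⁻¹ b = b := by
    rw [← map_inv]
    exact ofSubtype_fix _
  have hmem : ∀ g, g ∈ S.map (fun σ => h * (Perm.ofSubtype u)⁻¹ * Perm.ofSubtype σ) ↔ g b = x := by
    intro g
    rw [Multiset.mem_map]
    constructor
    · rintro ⟨σ, -, rfl⟩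
      simp only [Perm.mul_apply, ofSubtype_fix, hfix, hb]
    · intro hg
      have : (Perm.ofSubtype u * h⁻¹ * g) b = b := by
        simp only [Perm.mul_apply, hg, ← hb, Perm.inv_def, symm_apply_apply, ofSubtype_fix]
      obtain ⟨σ, hσ⟩ := exists_ofSubtype this
      exact ⟨σ, hall σ, by simp [hσ, mul_assoc]⟩
  refine ⟨_, _, hP', hS.map ?_, hmem, hlm, ?_⟩
  · intro σ τ hst
    exact Perm.ofSubtype_injective (mul_left_cancel hst)
  · intro t' ht' htb' hne
    have hin : t' ∈ r • TF b := (Multiset.mem_nsmul_of_ne_zero hr).2 (mem_TF.2 ⟨ht', htb'⟩)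
    rw [← hlm] at hin
    rcases Multiset.mem_cons.1 hin with hin | hin
    · exact absurd hin hne
    · obtain ⟨⟨g, g'⟩, hg, hgl⟩ := Multiset.mem_map.1 hin
      refine ⟨g, (hmem g).1 (hP'.edge_mem _ hg).1, ?_⟩
      rw [← hgl]
      simpa [lab] using hg

/-- The invariant of the merging process. -/
def Inv (x : α) (r : ℕ) (B : Finset α) (D E : Multiset (Perm α))
    (M : Multiset (Perm α × Perm α)) : Prop :=
  ∃ S, Cyc S M ∧ S.Nodup ∧ (∀ g : Perm α, g ∈ S ↔ ∃ b ∈ B, g b = x) ∧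
    M.map lab + D = (∑ b ∈ B, r • TF b) + E

theorem inv_start {x : α} {r : ℕ} {a : α} (ha : LayerOK x r a) (t : Perm α) (ht : t.IsSwap)
    (hta : t a = a) :
    ∃ M, Inv x r {a} 0 0 M ∧ ∀ t' : Perm α, t'.IsSwap → t' a = a → Av x M a t' := by
  obtain ⟨S, M, h1, h2, h3, h4, h5⟩ := ha (swap a x) t (by simp) ht hta
  refine ⟨_, ⟨S, ⟨_, _, _, h1, rfl⟩, h2, by simpa using h3, ?_⟩, ?_⟩
  · simp only [Multiset.map_cons, lab, Finset.sum_singleton, add_zero, inv_mul_cancel_left]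
    exact h4
  · intro t' ht' hta'
    by_cases h : t' = t
    · subst h
      exact ⟨swap a x, by simp, by simp⟩
    · obtain ⟨g, hg, hgm⟩ := h5 t' ht' hta' h
      exact ⟨g, hg, Multiset.mem_cons_of_mem hgm⟩

theorem Inv.four {x : α} {r : ℕ} {B : Finset α} {D E M} (h : Inv x r B D E M) {a b c d : α}
    (hb : LayerOK x r b) (hbB : b ∉ B) (hbc : b ≠ c) (hbd : b ≠ d)
    (hac : a ≠ c) (had : a ≠ d) (hcd : c ≠ d) (hav : Av x M a (swap c d)) :
    ∃ M', Inv x r (insert b B) (D + 2 • {swap c d}) (E + 2 • {swap a b}) M' ∧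
      ∀ a' t', Av x M a' t' → t' ≠ swap c d → Av x M' a' t' := by
  obtain ⟨S, hC, hS, hSB, hl⟩ := h
  obtain ⟨g, hga, hgM⟩ := hav
  obtain ⟨M1, hP, rfl⟩ := hC.rotate hgM
  have hcomm : swap c d * swap a b = swap a b * swap c d := by
    rw [mul_swap_eq_swap_mul, swap_apply_of_ne_of_ne hac had, swap_apply_of_ne_of_ne hbc hbd]
  have hcc : swap a b * swap c d * swap c d = swap a b := by simp [mul_assoc]
  obtain ⟨S2, M2, hP2, hS2, hS2m, hl2, -⟩ := hb (g * swap a b * swap c d) (swap c d)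
    (by simp [swap_apply_of_ne_of_ne hbc hbd, hga]) ⟨c, d, hcd, rfl⟩
    (swap_apply_of_ne_of_ne hbc hbd)
  have hPP := hP.append hP2
  refine ⟨_, ⟨S + S2, ⟨_, _, _, hPP, rfl⟩, ?_, ?_, ?_⟩, ?_⟩
  · rw [Multiset.nodup_add]
    refine ⟨hS, hS2, Multiset.disjoint_left.2 ?_⟩
    intro k hk hk2
    obtain ⟨b', hb', hkb⟩ := (hSB k).1 hk
    have := k.injective (hkb.trans ((hS2m k).1 hk2).symm)
    exact hbB (this ▸ hb')
  · intro k
    rw [Multiset.mem_add, hSB, hS2m, Finset.exists_mem_insert, or_comm]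
  · rw [Finset.sum_insert hbB, ← hl2]
    have e1 : lab (g * swap a b * swap c d, g * swap c d) = swap a b := by
      simp only [lab, mul_inv_rev, swap_inv, mul_assoc, inv_mul_cancel_left]
      rw [← hcomm, ← mul_assoc, swap_mul_self, one_mul]
    have e2 : lab (g, g * swap a b * swap c d * swap c d) = swap a b := by
      simp [lab, mul_assoc]
    have e3 : lab (g, g * swap c d) = swap c d := by simp [lab]
    rw [Multiset.map_cons, e3] at hl
    simp only [Multiset.map_cons, Multiset.map_add, e1, e2]
    have := congrArg (fun Z => Z + M2.map lab + 2 • {swap a b} + {swap c d}) hl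
    simp only [← Multiset.singleton_add, two_nsmul] at this ⊢
    calc _ = _ := ?_
      _ = _ := this
      _ = _ := ?_
    all_goals abel
  · rintro a' t' ⟨k, hk, hkM⟩ hne
    refine ⟨k, hk, ?_⟩
    rcases Multiset.mem_cons.1 hkM with hkM | hkM
    · obtain ⟨rfl, h2⟩ := Prod.mk.inj hkM
      exact absurd (mul_left_cancel h2) hne
    · simp [hkM]

theorem Inv.hex {x : α} {r : ℕ} {B : Finset α} {D E M} (h : Inv x r B D E M) {a p q : α}
    (hp : LayerOK x r p) (hq : LayerOK x r q) (hpB : p ∉ B) (hqB : q ∉ B) (hpq : p ≠ q)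
    (hap : a ≠ p) (haq : a ≠ q) (hav : Av x M a (swap p q)) :
    ∃ M', Inv x r (insert p (insert q B)) D E M' ∧
      (∀ a' t', Av x M a' t' → t' ≠ swap p q → Av x M' a' t') ∧
      (∀ t' : Perm α, t'.IsSwap → t' p = p → t' ≠ swap a q → Av x M' p t') ∧
      (∀ t' : Perm α, t'.IsSwap → t' q = q → t' ≠ swap a p → Av x M' q t') := by
  obtain ⟨S, hC, hS, hSB, hl⟩ := h
  obtain ⟨g, hga, hgM⟩ := hav
  obtain ⟨M1, hP, rfl⟩ := hC.rotate hgM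
  have c1 : swap a q * swap a p * swap a q = swap p q := by
    have := mul_swap_eq_swap_mul (swap a q) a p
    rw [this, swap_apply_left, swap_apply_of_ne_of_ne hap.symm hpq, mul_assoc, swap_mul_self,
      mul_one, swap_comm]
  have c2 : swap a p * swap a q * swap p q = swap a q := by
    rw [← c1]
    simp [← mul_assoc]
  obtain ⟨S2, M2, hP2, hS2, hS2m, hl2, hav2⟩ := hp (g * swap a p * swap a q) (swap a q)
    (by simp [swap_apply_of_ne_of_ne hap.symm hpq, hga]) ⟨a, q, haq, rfl⟩
    (swap_apply_of_ne_of_ne hap.symm hpq)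
  obtain ⟨S3, M3, hP3, hS3, hS3m, hl3, hav3⟩ := hq (g * swap a q * swap a p) (swap a p)
    (by simp [swap_apply_of_ne_of_ne haq.symm hpq.symm, hga]) ⟨a, p, hap, rfl⟩
    (swap_apply_of_ne_of_ne haq.symm hpq.symm)
  have hPP := (hP.append hP2).append hP3
  refine ⟨_, ⟨S + S2 + S3, ⟨_, _, _, hPP, rfl⟩, ?_, ?_, ?_⟩, ?_, ?_, ?_⟩
  · rw [Multiset.nodup_add, Multiset.nodup_add]
    refine ⟨⟨hS, hS2, Multiset.disjoint_left.2 ?_⟩, hS3, Multiset.disjoint_left.2 ?_⟩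
    · intro k hk hk2
      obtain ⟨b', hb', hkb⟩ := (hSB k).1 hk
      have := k.injective (hkb.trans ((hS2m k).1 hk2).symm)
      exact hpB (this ▸ hb')
    · intro k hk hk3
      rcases Multiset.mem_add.1 hk with hk | hk
      · obtain ⟨b', hb', hkb⟩ := (hSB k).1 hk
        have := k.injective (hkb.trans ((hS3m k).1 hk3).symm)
        exact hqB (this ▸ hb')
      · exact hpq (k.injective (((hS2m k).1 hk).trans ((hS3m k).1 hk3).symm))
  · intro k
    rw [Multiset.mem_add, Multiset.mem_add, hSB, hS2m, hS3m, Finset.exists_mem_insert,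
      Finset.exists_mem_insert, or_assoc, or_comm, or_assoc]
  · rw [Finset.sum_insert (by simp [hpq, hpB]), Finset.sum_insert hqB, ← hl2, ← hl3]
    have e1 : lab (g * swap a q * swap a p, g * swap p q) = swap a q := by
      simp only [lab, mul_inv_rev, swap_inv, mul_assoc, inv_mul_cancel_left]
      rw [← mul_assoc (swap a p), c2]
    have e2 : lab (g, g * swap a p * swap a q * swap a q) = swap a p := by
      simp [lab, mul_assoc]
    have e4 : lab (g * swap a p * swap a q, g * swap a q * swap a p * swap a p) = swap p q := by
      simp only [lab, mul_inv_rev, swap_inv, mul_assoc, inv_mul_cancel_left, swap_mul_self, mul_one]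
      rw [← mul_assoc (swap a q), c1]
    have e3 : lab (g, g * swap p q) = swap p q := by simp [lab]
    rw [Multiset.map_cons, e3] at hl
    simp only [Multiset.map_cons, Multiset.map_add, e1, e2, e4]
    have := congrArg (fun Z => Z + M2.map lab + M3.map lab + {swap a q} + {swap a p}) hl
    simp only [← Multiset.singleton_add] at this ⊢
    calc _ = _ := ?_
      _ = _ := this
      _ = _ := ?_
    all_goals abel
  · rintro a' t' ⟨k, hk, hkM⟩ hne
    refine ⟨k, hk, ?_⟩
    rcases Multiset.mem_cons.1 hkM with hkM | hkM
    · obtain ⟨rfl, h2⟩ := Prod.mk.inj hkM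
      exact absurd (mul_left_cancel h2) hne
    · simp [hkM]
  · intro t' h1 h2 h3
    obtain ⟨k, hk, hkM⟩ := hav2 t' h1 h2 h3
    exact ⟨k, hk, by simp [hkM]⟩
  · intro t' h1 h2 h3
    obtain ⟨k, hk, hkM⟩ := hav3 t' h1 h2 h3
    exact ⟨k, hk, by simp [hkM]⟩

theorem swap_ne_of {a b p q : α} (h1 : p ≠ q) (h2 : p ≠ a) (h3 : p ≠ b) : swap p q ≠ swap a b := by
  intro h
  have := congrArg (fun f : Perm α => f p) h
  simp only [swap_apply_left, swap_apply_of_ne_of_ne h2 h3] at this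
  exact h1 this.symm

theorem grow {x : α} {r : ℕ} (hL : ∀ b, LayerOK x r b) {a : α} (k : ℕ) :
    ∀ (B : Finset α) M, Inv x r B 0 0 M → a ∈ B → Bᶜ.card = 2 * k →
      (∀ p q, p ∉ B → q ∉ B → p ≠ q → Av x M a (swap p q)) →
      ∃ M', Inv x r Finset.univ 0 0 M' := by
  induction k with
  | zero =>
    intro B M h _ hc _
    have : B = Finset.univ := by simpa using hc
    exact ⟨M, this ▸ h⟩
  | succ k ih =>
    intro B M h haB hc hav
    obtain ⟨p, hp, q, hq, hpq⟩ := Finset.one_lt_card.1 (show 1 < Bᶜ.card by omega)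
    rw [Finset.mem_compl] at hp hq
    obtain ⟨M', h', hav', -, -⟩ := h.hex (hL p) (hL q) hp hq hpq (by rintro rfl; exact hp haB)
      (by rintro rfl; exact hq haB) (hav p q hp hq hpq)
    refine ih _ M' h' (by simp [haB]) ?_ ?_
    · have h1 := Finset.card_add_card_compl B
      have h2 := Finset.card_add_card_compl (insert p (insert q B))
      rw [Finset.card_insert_of_notMem (by simp [hpq, hp]), Finset.card_insert_of_notMem hq] at h2
      omega
    · intro p' q' hp' hq' hne
      simp only [Finset.mem_insert, not_or] at hp' hq'
      exact hav' _ _ (hav p' q' hp'.2.2 hq'.2.2 hne) (swap_ne_of hne hp'.1 hp'.2.1)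

theorem sum_TF {r : ℕ} :
    (∑ b : α, r • TF b) = ((Fintype.card α - 2) * r) • T α := by
  ext t
  simp only [Multiset.count_sum', Multiset.count_nsmul]
  by_cases ht : t.IsSwap
  · rw [count_T ht, ← Finset.mul_sum]
    have h1 : ∀ b, Multiset.count t (TF b) = if t b = b then 1 else 0 := by
      intro b
      rw [Multiset.count_eq_of_nodup (nodup_TF b)]
      simp [mem_TF, ht]
    simp only [h1]
    rw [Finset.sum_boole]
    have h2 := Perm.card_support_eq_two.2 ht
    have h3 := Finset.card_compl t.support
    have h4 : t.supportᶜ = Finset.univ.filter (fun b => t b = b) := by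
      ext b; simp
    rw [h4, h2] at h3
    rw [h3]
    simp [mul_comm]
  · rw [count_T' ht]
    simp only [mul_zero]
    apply Finset.sum_eq_zero
    intro b _
    rw [Multiset.count_eq_zero_of_notMem, mul_zero]
    rw [mem_TF]
    exact fun h => ht h.1

theorem inv_univ {x : α} {r : ℕ} {M} (h : Inv x r Finset.univ 0 0 M) :
    Hb α ((Fintype.card α - 2) * r) := by
  obtain ⟨S, h1, h2, h3, h4⟩ := h
  refine ⟨S, M, h1, h2, fun g => (h3 g).2 ⟨g.symm x, by simp, by simp⟩, ?_⟩
  rw [← sum_TF]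
  simpa using h4

theorem Inv.cancel {x : α} {r : ℕ} {B : Finset α} {D M} (h : Inv x r B D D M) :
    Inv x r B 0 0 M := by
  obtain ⟨S, h1, h2, h3, h4⟩ := h
  exact ⟨S, h1, h2, h3, by simpa using h4⟩

theorem hb_odd {r : ℕ} {x : α} (hL : ∀ b, LayerOK x r b) (k : ℕ)
    (hc : Fintype.card α = 2 * k + 3) : Hb α ((Fintype.card α - 2) * r) := by
  obtain ⟨a, b, c, hab, hac, hbc⟩ := Fintype.two_lt_card_iff.1 (show 2 < Fintype.card α by omega)
  obtain ⟨M, hM, hav⟩ := inv_start (hL a) (swap b c) ⟨b, c, hbc, rfl⟩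
    (swap_apply_of_ne_of_ne hab hac)
  obtain ⟨M', h'⟩ := grow hL (a := a) (k + 1) {a} M hM (by simp)
    (by rw [Finset.card_compl, Finset.card_singleton]; omega)
    (by
      intro p q hp hq hpq
      rw [Finset.mem_singleton] at hp hq
      exact hav _ ⟨p, q, hpq, rfl⟩ (swap_apply_of_ne_of_ne (Ne.symm hp) (Ne.symm hq)))
  exact inv_univ h'

theorem hb_even {r : ℕ} {x : α} (hL : ∀ b, LayerOK x r b) (k : ℕ)
    (hc : Fintype.card α = 2 * k + 6) : Hb α ((Fintype.card α - 2) * r) := by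
  obtain ⟨φ⟩ : Nonempty (Fin 6 ↪ α) :=
    Function.Embedding.nonempty_of_card_le (by rw [Fintype.card_fin]; omega)
  have hφ : ∀ i j, i ≠ j → φ i ≠ φ j := fun i j h h' => h (φ.injective h')
  obtain ⟨a, ha⟩ : ∃ a, a = φ 0 := ⟨_, rfl⟩
  obtain ⟨b, hb⟩ : ∃ a, a = φ 1 := ⟨_, rfl⟩
  obtain ⟨c, hcc⟩ : ∃ a, a = φ 2 := ⟨_, rfl⟩
  obtain ⟨d, hd⟩ : ∃ a, a = φ 3 := ⟨_, rfl⟩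
  obtain ⟨e, he⟩ : ∃ a, a = φ 4 := ⟨_, rfl⟩
  obtain ⟨f, hf⟩ : ∃ a, a = φ 5 := ⟨_, rfl⟩
  have hab : a ≠ b := by subst ha hb; exact hφ _ _ (by decide)
  have hac : a ≠ c := by subst ha hcc; exact hφ _ _ (by decide)
  have had : a ≠ d := by subst ha hd; exact hφ _ _ (by decide)
  have hae : a ≠ e := by subst ha he; exact hφ _ _ (by decide)
  have haf : a ≠ f := by subst ha hf; exact hφ _ _ (by decide)
  have hbc : b ≠ c := by subst hb hcc; exact hφ _ _ (by decide)
  have hbd : b ≠ d := by subst hb hd; exact hφ _ _ (by decide)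
  have hbe : b ≠ e := by subst hb he; exact hφ _ _ (by decide)
  have hbf : b ≠ f := by subst hb hf; exact hφ _ _ (by decide)
  have hcd : c ≠ d := by subst hcc hd; exact hφ _ _ (by decide)
  have hce : c ≠ e := by subst hcc he; exact hφ _ _ (by decide)
  have hcf : c ≠ f := by subst hcc hf; exact hφ _ _ (by decide)
  have hde : d ≠ e := by subst hd he; exact hφ _ _ (by decide)
  have hdf : d ≠ f := by subst hd hf; exact hφ _ _ (by decide)
  have hef : e ≠ f := by subst he hf; exact hφ _ _ (by decide)
  clear ha hb hcc hd he hf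
  obtain ⟨M0, h0, av0⟩ := inv_start (hL a) (swap b c) ⟨b, c, hbc, rfl⟩
    (swap_apply_of_ne_of_ne hab hac)
  obtain ⟨M1, h1, av1, avc, ave⟩ := h0.hex (a := a) (hL c) (hL e) (by simp [hac.symm])
    (by simp [hae.symm]) hce hac hae (av0 _ ⟨c, e, hce, rfl⟩ (swap_apply_of_ne_of_ne hac hae))
  have a1 := av1 a _ (av0 _ ⟨c, d, hcd, rfl⟩ (swap_apply_of_ne_of_ne hac had))
    (by rw [swap_comm]; exact swap_ne_of hcd.symm hcd.symm hde)
  have c1 := avc _ ⟨e, f, hef, rfl⟩ (swap_apply_of_ne_of_ne hce hcf)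
    (by rw [swap_comm]; exact swap_ne_of hef.symm haf.symm hef.symm)
  have e1 := ave _ ⟨a, b, hab, rfl⟩ (swap_apply_of_ne_of_ne hae.symm hbe.symm)
    (by rw [swap_comm]; exact swap_ne_of hab.symm hab.symm hbc)
  obtain ⟨M2, h2, av2⟩ := h1.four (hL b) (by simp [hab.symm, hbc, hbe]) hbc hbd hac had hcd a1
  have c2 := av2 _ _ c1 (swap_ne_of hef hce.symm hde.symm)
  have e2 := av2 _ _ e1 (swap_ne_of hab hac had)
  obtain ⟨M3, h3, av3⟩ := h2.four (hL d) (by simp [hbd.symm, hcd.symm, hde, had.symm]) hde hdf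
    hce hcf hef c2
  have e3 := av3 _ _ e2 (swap_ne_of hab hae haf)
  obtain ⟨M4, h4, av4⟩ := h3.four (hL f)
    (by simp [hdf.symm, hbf.symm, hcf.symm, hef.symm, haf.symm]) haf.symm hbf.symm
    hae.symm hbe.symm hab e3
  have hDE : (0 + 2 • {swap a b} + 2 • {swap c d} + 2 • {swap e f} : Multiset (Perm α)) =
      (0 + 2 • {swap c d} + 2 • {swap e f} + 2 • {swap a b} : Multiset (Perm α)) := by abel
  rw [hDE] at h4
  obtain ⟨M', h'⟩ := grow hL (a := a) k _ M4 h4.cancel (by simp) (by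
      rw [Finset.card_compl, Finset.card_insert_of_notMem, Finset.card_insert_of_notMem,
        Finset.card_insert_of_notMem, Finset.card_insert_of_notMem, Finset.card_insert_of_notMem,
        Finset.card_singleton]
      · omega
      · simp [hae.symm]
      · simp [hac.symm, hce]
      · simp [hab.symm, hbc, hbe]
      · simp [hbd.symm, hcd.symm, hde, had.symm]
      · simp [hdf.symm, hbf.symm, hcf.symm, hef.symm, haf.symm])
    (by
      intro p q hp hq hpq
      simp only [Finset.mem_insert, Finset.mem_singleton, not_or] at hp hq
      obtain ⟨pf, pd, pb, pc, pe, pa⟩ := hp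
      obtain ⟨qf, qd, qb, qc, qe, qa⟩ := hq
      exact av4 _ _ (av3 _ _ (av2 _ _ (av1 _ _ (av0 _ ⟨p, q, hpq, rfl⟩
        (swap_apply_of_ne_of_ne (Ne.symm pa) (Ne.symm qa)))
        (swap_ne_of hpq pc pe)) (swap_ne_of hpq pc pd)) (swap_ne_of hpq pe pf))
        (swap_ne_of hpq pa pb))
  exact inv_univ h'

end Layers

theorem hb_all (n : ℕ) : ∀ (α : Type) [Fintype α] [DecidableEq α], Fintype.card α = n + 2 →
    Hb α (2 * Nat.factorial n) := by
  induction n with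
  | zero =>
    intro α _ _ hc
    exact Hb.two.congr (Fintype.equivFinOfCardEq hc).symm
  | succ n ih =>
    intro α _ _ hc
    rcases n with _ | _ | n
    · exact Hb.three.congr (Fintype.equivFinOfCardEq hc).symm
    · exact Hb.four.congr (Fintype.equivFinOfCardEq hc).symm
    · obtain ⟨x⟩ : Nonempty α := Fintype.card_pos_iff.1 (by omega)
      have hL : ∀ b, LayerOK x (2 * Nat.factorial (n + 2)) b := by
        intro b
        apply layerOK x b (by positivity)
        apply ih
        rw [Fintype.card_subtype_compl, Fintype.card_subtype_eq]
        omega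
      have hr : (Fintype.card α - 2) * (2 * Nat.factorial (n + 2)) =
          2 * Nat.factorial (n + 2 + 1) := by
        rw [Nat.factorial_succ (n + 2), hc]
        have : n + 1 + 1 + 1 + 2 - 2 = n + 2 + 1 := by omega
        rw [this]
        ring
      rw [← hr]
      rcases Nat.even_or_odd' n with ⟨k, hk | hk⟩
      · exact hb_odd hL (k + 1) (by omega)
      · exact hb_even hL k (by omega)

section Extension

set_option linter.unusedSectionVars false

variable {α : Type} [Fintype α] [DecidableEq α]

/-- The new labels caused by a detour at an edge with label `t`. -/
def newLab (x : α) (t : Perm {i // i ≠ x}) : Multiset (Perm α) :=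
  t.support.val.map (fun i => swap (i : α) x)

theorem detour_ne {x b : α} (hb : b ≠ x) (y y' : Perm {i // i ≠ x}) :
    Perm.ofSubtype y * swap b x ≠ Perm.ofSubtype y' := by
  intro h
  have h1 := congrArg (fun f : Perm α => f b) h
  simp only [Perm.mul_apply, swap_apply_left, ofSubtype_fix] at h1
  have h2 := ofSubtype_fix (b := x) y'
  exact hb ((Perm.ofSubtype y').injective (h1.symm.trans h2.symm))

theorem detour_inj {x b b' : α} (hb : b ≠ x) {y y' : Perm {i // i ≠ x}}
    (h : Perm.ofSubtype y * swap b x = Perm.ofSubtype y' * swap b' x) : b = b' ∧ y = y' := by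
  have hbb : b = b' := by
    have h1 := congrArg (fun f : Perm α => f b) h
    simp only [Perm.mul_apply, swap_apply_left, ofSubtype_fix] at h1
    have h2 := (Perm.ofSubtype y').injective (h1.symm.trans (ofSubtype_fix (b := x) y').symm)
    by_contra hne
    rw [swap_apply_of_ne_of_ne hne hb] at h2
    exact hb h2
  subst hbb
  exact ⟨rfl, Perm.ofSubtype_injective (mul_right_cancel h)⟩

theorem ext_path {x : α} {u w : Perm {i // i ≠ x}} {S M} (h : Path u w S M) :
    S.Nodup → (∀ e ∈ M, (lab e).IsSwap) → ∀ K ≤ M, ∃ S' M' z,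
      Path (Perm.ofSubtype u) (Perm.ofSubtype w) S' M' ∧ S'.Nodup ∧
      (∀ s ∈ S', (∃ y ∈ S, s = Perm.ofSubtype y) ∨
        ∃ y ∈ S, ∃ b, b ≠ x ∧ s = Perm.ofSubtype y * swap b x ∧ (y = u → b = z)) ∧
      M'.map lab = (M.map lab).map (fun σ => Perm.ofSubtype σ) +
        (K.map lab).bind (newLab x) := by
  induction h with
  | nil v =>
    intro _ _ K hK
    have : K = 0 := Multiset.le_zero.1 hK
    subst this
    exact ⟨_, _, x, Path.nil _, by simp, by simp, by simp⟩
  | @cons u v S M w h ih =>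
    intro hS hM K hK
    rw [Multiset.nodup_cons] at hS
    have hwu : w ≠ u := fun hwu => hS.1 (hwu ▸ h.start_mem)
    have hM' : ∀ e ∈ M, (lab e).IsSwap := fun e he => hM e (Multiset.mem_cons_of_mem he)
    have hlabι : lab (Perm.ofSubtype w, Perm.ofSubtype u) = Perm.ofSubtype (lab (w, u)) := by
      simp [lab]
    by_cases hmem : (w, u) ∈ K
    · obtain ⟨K', rfl⟩ := Multiset.exists_cons_of_mem hmem
      rw [Multiset.cons_le_cons_iff] at hK
      obtain ⟨S', M', z, hP, hnd, hform, hl⟩ := ih hS.2 hM' K' hK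
      obtain ⟨a, b, hab, haz, hlab⟩ : ∃ a b : {i // i ≠ x}, a ≠ b ∧ (a : α) ≠ z ∧
          lab (w, u) = swap a b := by
        obtain ⟨p, q, hpq, hl⟩ := hM (w, u) (by simp)
        by_cases hp : (p : α) = z
        · exact ⟨q, p, hpq.symm, fun hq => hpq (Subtype.ext (hp.trans hq.symm)),
            by rw [hl, swap_comm]⟩
        · exact ⟨p, q, hpq, hp, hl⟩
      have hab' : (a : α) ≠ b := fun h => hab (Subtype.ext h)
      have hP' := Path.cons (Perm.ofSubtype w) (Path.cons (Perm.ofSubtype w * swap (b : α) x)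
        (Path.cons (Perm.ofSubtype u * swap (a : α) x) hP))
      refine ⟨_, _, (b : α), hP', ?_, ?_, ?_⟩
      · rw [Multiset.nodup_cons, Multiset.nodup_cons, Multiset.nodup_cons]
        refine ⟨?_, ?_, ?_, hnd⟩
        · rw [Multiset.mem_cons, Multiset.mem_cons, not_or, not_or]
          refine ⟨(detour_ne b.2 _ _).symm, (detour_ne a.2 _ _).symm, fun hin => ?_⟩
          rcases hform _ hin with ⟨y, hy, he⟩ | ⟨y, hy, b', hb', he, -⟩
          · exact hS.1 (Perm.ofSubtype_injective he ▸ hy)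
          · exact (detour_ne hb' _ _) he.symm
        · rw [Multiset.mem_cons, not_or]
          refine ⟨fun he => hwu (detour_inj b.2 he).2, fun hin => ?_⟩
          rcases hform _ hin with ⟨y, hy, he⟩ | ⟨y, hy, b', hb', he, -⟩
          · exact (detour_ne b.2 _ _) he
          · exact hS.1 ((detour_inj b.2 he).2 ▸ hy)
        · intro hin
          rcases hform _ hin with ⟨y, hy, he⟩ | ⟨y, hy, b', hb', he, hz⟩
          · exact (detour_ne a.2 _ _) he
          · obtain ⟨h1, h2⟩ := detour_inj a.2 he
            exact haz (h1.trans (hz h2.symm))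
      · intro s hs
        rcases Multiset.mem_cons.1 hs with rfl | hs
        · exact Or.inl ⟨w, by simp, rfl⟩
        rcases Multiset.mem_cons.1 hs with rfl | hs
        · exact Or.inr ⟨w, by simp, b, b.2, rfl, fun _ => rfl⟩
        rcases Multiset.mem_cons.1 hs with rfl | hs
        · exact Or.inr ⟨u, by simp [h.start_mem], a, a.2, rfl, fun hh => absurd hh.symm hwu⟩
        rcases hform _ hs with ⟨y, hy, he⟩ | ⟨y, hy, b', hb', he, -⟩
        · exact Or.inl ⟨y, by simp [hy], he⟩
        · exact Or.inr ⟨y, by simp [hy], b', hb', he, fun hh => absurd (hh ▸ hy) hS.1⟩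
      · have hu : Perm.ofSubtype u = Perm.ofSubtype w * swap (a : α) b := by
          rw [← Perm.ofSubtype_swap_eq, ← hlab]
          simp [lab]
        have e1 : lab (Perm.ofSubtype w, Perm.ofSubtype w * swap (b : α) x) = swap (b : α) x := by
          simp [lab]
        have e3 : lab (Perm.ofSubtype u * swap (a : α) x, Perm.ofSubtype u) = swap (a : α) x := by
          simp [lab]
        have e2 : lab (Perm.ofSubtype w * swap (b : α) x, Perm.ofSubtype u * swap (a : α) x)
            = swap (a : α) b := by
          rw [hu]
          simp only [lab, mul_inv_rev, swap_inv, mul_assoc, inv_mul_cancel_left]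
          rw [mul_swap_eq_swap_mul (swap (a : α) b), swap_apply_left,
            swap_apply_of_ne_of_ne a.2.symm b.2.symm, ← mul_assoc, swap_mul_self, one_mul]
        have hnew : newLab x (swap a b) = {swap (a : α) x} + {swap (b : α) x} := by
          unfold newLab
          rw [Perm.support_swap hab, Finset.insert_val_of_notMem (by simpa using hab)]
          simp
        simp only [Multiset.map_cons, e1, e2, e3, hl, hlab, Multiset.cons_bind, hnew,
          Perm.ofSubtype_swap_eq]
        simp only [← Multiset.singleton_add]
        abel
    · rw [Multiset.le_cons_of_notMem hmem] at hK
      obtain ⟨S', M', z, hP, hnd, hform, hl⟩ := ih hS.2 hM' K hK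
      refine ⟨_, _, x, Path.cons (Perm.ofSubtype w) hP, ?_, ?_, ?_⟩
      · rw [Multiset.nodup_cons]
        refine ⟨fun hin => ?_, hnd⟩
        rcases hform _ hin with ⟨y, hy, he⟩ | ⟨y, hy, b', hb', he, -⟩
        · exact hS.1 (Perm.ofSubtype_injective he ▸ hy)
        · exact (detour_ne hb' _ _) he.symm
      · intro s hs
        rcases Multiset.mem_cons.1 hs with rfl | hs
        · exact Or.inl ⟨w, by simp, rfl⟩
        rcases hform _ hs with ⟨y, hy, he⟩ | ⟨y, hy, b', hb', he, -⟩
        · exact Or.inl ⟨y, by simp [hy], he⟩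
        · exact Or.inr ⟨y, by simp [hy], b', hb', he, fun hh => absurd (hh ▸ hy) hS.1⟩
      · simp only [Multiset.map_cons, hl, hlabι, Multiset.cons_add]

theorem exists_le_map_eq {V W : Type} [DecidableEq W] (f : V → W) (M : Multiset V) :
    ∀ L ≤ M.map f, ∃ K ≤ M, K.map f = L := by
  induction M using Multiset.induction with
  | empty =>
    intro L hL
    exact ⟨0, le_rfl, (Multiset.le_zero.1 hL).symm⟩
  | cons a M ih =>
    intro L hL
    rw [Multiset.map_cons] at hL
    by_cases h : f a ∈ L
    · obtain ⟨L', rfl⟩ := Multiset.exists_cons_of_mem h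
      obtain ⟨K, hK, rfl⟩ := ih L' (by simpa using hL)
      exact ⟨a ::ₘ K, by simpa using hK, by simp⟩
    · obtain ⟨K, hK, rfl⟩ := ih L ((Multiset.le_cons_of_notMem h).1 hL)
      exact ⟨K, hK.trans (Multiset.le_cons_self _ _), rfl⟩

theorem T_split (x : α) : T α = TF x +
    (Finset.univ : Finset {i // i ≠ x}).val.map (fun i : {i // i ≠ x} => swap (i : α) x) := by
  have hnd : ((Finset.univ : Finset {i // i ≠ x}).val.map (fun i : {i // i ≠ x} => swap (i : α) x)).Nodup := by
    refine (Finset.nodup _).map ?_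
    intro i j hij
    have := congrArg (fun f : Perm α => f x) hij
    simp only [swap_apply_right] at this
    exact Subtype.ext this
  rw [Multiset.Nodup.ext (nodup_T α)]
  · intro t
    rw [Multiset.mem_add, mem_T, mem_TF, Multiset.mem_map]
    constructor
    · rintro ⟨i, j, hij, rfl⟩
      by_cases hi : i = x
      · subst hi
        exact Or.inr ⟨⟨j, hij.symm⟩, by simp, swap_comm _ _⟩
      · by_cases hj : j = x
        · subst hj
          exact Or.inr ⟨⟨i, hij⟩, by simp, rfl⟩
        · exact Or.inl ⟨⟨i, j, hij, rfl⟩, swap_apply_of_ne_of_ne (Ne.symm hi) (Ne.symm hj)⟩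
    · rintro (h | ⟨i, -, rfl⟩)
      · exact h.1
      · exact ⟨i, x, i.2, rfl⟩
  · rw [Multiset.nodup_add]
    refine ⟨nodup_TF x, hnd, Multiset.disjoint_left.2 ?_⟩
    intro t h1 h2
    obtain ⟨i, -, rfl⟩ := Multiset.mem_map.1 h2
    have := (mem_TF.1 h1).2
    rw [swap_apply_right] at this
    exact i.2 this

theorem rb_ext (x : α) {k : ℕ} (hk : 0 < k) (hc : 3 ≤ Fintype.card {i // i ≠ x})
    (h : Rb {i // i ≠ x} (2 * k)) : Rb α (2 * k) := by
  obtain ⟨S, M, hC, hS, hl⟩ := h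
  obtain ⟨c, hcyc, -⟩ := (Finset.univ : Finset {i // i ≠ x}).exists_cycleOn
  have hcne : ∀ i, c i ≠ i := by
    intro i
    apply hcyc.apply_ne _ (by simp)
    rw [Finset.coe_univ, Set.nontrivial_univ_iff]
    exact Fintype.one_lt_card_iff_nontrivial.1 (by omega)
  obtain ⟨A, hA⟩ : ∃ A : Multiset (Perm {i // i ≠ x}),
    A = Finset.univ.val.map (fun i => swap i (c i)) := ⟨_, rfl⟩
  have hcount : ∀ t, A.count t = (Finset.univ.filter (fun i => t = swap i (c i))).card := by
    intro t
    rw [hA, Multiset.count_map, Finset.card_def, Finset.filter_val]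
  have hLle : k • A ≤ M.map lab := by
    rw [hl, Multiset.le_iff_count]
    intro t
    rw [Multiset.count_nsmul, Multiset.count_nsmul]
    by_cases ht : t.IsSwap
    · rw [count_T ht, mul_one, mul_comm]
      apply Nat.mul_le_mul_right
      rw [hcount, ← Perm.card_support_eq_two.2 ht]
      apply Finset.card_le_card
      intro i hi
      rw [Finset.mem_filter] at hi
      rw [hi.2, Perm.mem_support, swap_apply_left]
      exact hcne i
    · rw [Multiset.count_eq_zero_of_notMem]
      · simp
      · rw [hA, Multiset.mem_map]
        rintro ⟨i, -, rfl⟩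
        exact ht ⟨i, c i, (hcne i).symm, rfl⟩
  obtain ⟨K, hK, hKL⟩ := exists_le_map_eq lab M _ hLle
  obtain ⟨U, rfl⟩ := Multiset.le_iff_exists_add.1 hK
  have hU : U ≠ 0 := by
    rintro rfl
    rw [add_zero, hKL] at hl
    obtain ⟨i⟩ : Nonempty {i // i ≠ x} := Fintype.card_pos_iff.1 (by omega)
    obtain ⟨l, hlm⟩ : ∃ l, l ∉ ({i, c i} : Finset _) := by
      by_contra hcon
      push Not at hcon
      have h1 := Finset.card_le_two (a := i) (b := c i)
      have h2 : ({i, c i} : Finset _) = Finset.univ := by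
        ext j
        simpa using hcon j
      rw [h2, Finset.card_univ] at h1
      omega
    simp only [Finset.mem_insert, Finset.mem_singleton, not_or] at hlm
    have h1 := congrArg (Multiset.count (swap i l)) hl
    rw [Multiset.count_nsmul, Multiset.count_nsmul, count_T ⟨i, l, Ne.symm hlm.1, rfl⟩,
      hcount] at h1
    have h2 : (Finset.univ.filter (fun j => swap i l = swap j (c j))).card ≤ 1 := by
      rw [← Finset.card_singleton l]
      apply Finset.card_le_card
      intro j hj
      rw [Finset.mem_filter] at hj
      rw [Finset.mem_singleton]
      by_contra hjl
      have h3 := congrArg (fun f : Perm _ => f j) hj.2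
      simp only [swap_apply_left] at h3
      by_cases hji : j = i
      · subst hji
        rw [swap_apply_left] at h3
        exact hlm.2 h3
      · rw [swap_apply_of_ne_of_ne hji hjl] at h3
        exact hcne j h3.symm
    nlinarith
  obtain ⟨⟨v, u⟩, he⟩ := Multiset.exists_mem_of_ne_zero hU
  obtain ⟨U', rfl⟩ := Multiset.exists_cons_of_mem he
  obtain ⟨M1, hP, hM1⟩ := hC.rotate (c := v) (d := u) (by simp)
  have hKM1 : K ≤ M1 := by
    rw [Multiset.add_cons, Multiset.cons_inj_right] at hM1
    rw [← hM1]
    exact Multiset.le_add_right _ _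
  rw [hM1] at hl
  obtain ⟨S', M', z, hP', hnd, -, hl'⟩ := ext_path hP hS (by
    intro e he
    have : lab e ∈ (2 * k) • T {i // i ≠ x} := by
      rw [← hl]
      exact Multiset.mem_map_of_mem _ (Multiset.mem_cons_of_mem he)
    exact mem_T.1 (Multiset.mem_of_mem_nsmul this)) K hKM1
  refine ⟨S', _, ⟨_, _, _, hP', rfl⟩, hnd, ?_⟩
  have e1 : lab (Perm.ofSubtype v, Perm.ofSubtype u) = Perm.ofSubtype (lab (v, u)) := by
    simp [lab]
  have e2 : (K.map lab).bind (newLab x) = (2 * k) •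
      (Finset.univ : Finset {i // i ≠ x}).val.map (fun i : {i // i ≠ x} => swap (i : α) x) := by
    have hb : ∀ j : ℕ, (j • A).bind (newLab x) = j • (A.bind (newLab x)) := by
      intro j
      induction j with
      | zero => simp
      | succ j ih => rw [succ_nsmul, Multiset.add_bind, ih, succ_nsmul]
    have hnew : ∀ i, newLab x (swap i (c i)) = {swap (i : α) x} + {swap (c i : α) x} := by
      intro i
      unfold newLab
      rw [Perm.support_swap (hcne i).symm,
        Finset.insert_val_of_notMem (by simpa using (hcne i).symm)]
      simp
    have hm : (Finset.univ : Finset {i // i ≠ x}).val.map (fun i => swap (c i : α) x) =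
        (Finset.univ : Finset {i // i ≠ x}).val.map (fun i : {i // i ≠ x} => swap (i : α) x) := by
      conv_rhs => rw [← Multiset.map_univ_val_equiv c, Multiset.map_map]
      rfl
    rw [hKL, hb, hA, Multiset.bind_map]
    simp only [hnew]
    rw [Multiset.bind_add, Multiset.bind_singleton, Multiset.bind_singleton, hm, ← two_nsmul,
      smul_smul, mul_comm]
  rw [Multiset.map_cons, hl', e1, e2, T_split x, nsmul_add, TF_eq,
    ← Multiset.map_nsmul (fun σ : Perm {i // i ≠ x} => Perm.ofSubtype σ) (2 * k) (T {i // i ≠ x}), ← hl,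
    Multiset.map_cons, Multiset.map_cons, Multiset.cons_add]

end Extension

theorem rb_all (m d : ℕ) : ∀ (α : Type) [Fintype α] [DecidableEq α],
    Fintype.card α = m + 2 + d → Rb α (2 * Nat.factorial m) := by
  induction d with
  | zero =>
    intro α _ _ hc
    exact (hb_all m α hc).rb
  | succ d ih =>
    intro α _ _ hc
    by_cases h3 : m + 2 + d < 3
    · obtain ⟨rfl, rfl⟩ : m = 0 ∧ d = 0 := by omega
      exact (hb_all 1 α hc).rb
    · obtain ⟨x⟩ : Nonempty α := Fintype.card_pos_iff.1 (by omega)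
      have hcard : Fintype.card {i // i ≠ x} = m + 2 + d := by
        rw [Fintype.card_subtype_compl, Fintype.card_subtype_eq]
        omega
      exact rb_ext x (Nat.factorial_pos m) (by omega) (ih _ hcard)

end RainbowCycle

/-- For every `n ≥ 2` and every `m` with `2 ≤ m ≤ n`, there exists a
`2*(m−2)!`-rainbow cycle for `S_n` under all transpositions: a cyclically indexed
family `π : Fin (N+1) → Perm (Fin n)` of pairwise distinct permutations in which any
two cyclically consecutive permutations differ by applying a transposition
(`π (s+1) = swap i j * π s`), and each of the `n(n−1)/2` transpositions is applied
exactly `2*(m−2)!` times around the cycle. -/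
theorem balanced_rainbow_cycle_all_transpositions (n m : ℕ) (hn : 2 ≤ n)
    (hm : 2 ≤ m) (hmn : m ≤ n) :
    ∃ (N : ℕ) (π : Fin (N + 1) → Equiv.Perm (Fin n)),
      Function.Injective π ∧
      (∀ s : Fin (N + 1), ∃ i j : Fin n, i ≠ j ∧ π (s + 1) = Equiv.swap i j * π s) ∧
      (∀ i j : Fin n, i ≠ j →
        (Finset.univ.filter
            (fun s : Fin (N + 1) => π (s + 1) = Equiv.swap i j * π s)).card
          = 2 * Nat.factorial (m - 2)) := by
  have h := RainbowCycle.rb_all (m - 2) (n - m) (Fin n) (by rw [Fintype.card_fin]; omega)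
  exact h.final
end

section
/- Let n ≥ 2 be even. Then there exists a balanced Gray code for S_n under cyclically adjacent position-swaps: a cyclically ordered list of all n! permutations of [n], each appearing exactly once, in which any two cyclically consecutive permutations differ by a cyclically adjacent position-swap, and each of the n cyclically adjacent position-swaps is used exactly n!/n = (n−1)! times around the cycle. -/
namespace BalGray

open Equiv

/-- Adjacency in the Cayley graph of cyclically adjacent position-swaps. -/
def Adj (m : ℕ) (a b : Perm (Fin (m + 1))) : Prop :=
  ∃ i : Fin (m + 1), b = a * swap i (finRotate (m + 1) i)

/-- There is a Hamiltonian path of the vertex set `V` from `x` to `y`. -/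
def HP {α : Type} (R : α → α → Prop) (V : Set α) (x y : α) : Prop :=
  ∃ l : List α, l.Nodup ∧ (∀ v, v ∈ l ↔ v ∈ V) ∧ l.IsChain R ∧
    l.head? = some x ∧ l.getLast? = some y

theorem HP.append {α : Type} {R : α → α → Prop} {V W U : Set α} {x y x' y' : α}
    (h1 : HP R V x y) (h2 : HP R W x' y') (hR : R y x')
    (hd : ∀ v, v ∈ V → v ∈ W → False) (hU : ∀ v, v ∈ U ↔ v ∈ V ∨ v ∈ W) : HP R U x y' := by
  obtain ⟨l, ln, lm, lc, lh, ll⟩ := h1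
  obtain ⟨k, kn, km, kc, kh, kl⟩ := h2
  refine ⟨l ++ k, ?_, ?_, ?_, ?_, ?_⟩
  · rw [List.nodup_append']
    refine ⟨ln, kn, ?_⟩
    intro v hv hv'
    exact hd v ((lm v).1 hv) ((km v).1 hv')
  · intro v
    rw [List.mem_append, lm, km, hU]
  · rw [List.isChain_append]
    refine ⟨lc, kc, ?_⟩
    rw [ll, kh]
    simpa using hR
  · simp [List.head?_append, lh]
  · simp [List.getLast?_append, kl]

theorem HP.insert {α : Type} {R : α → α → Prop} {V W U : Set α} {x y p q p' q' : α}
    {l1 l2 : List α} (hn : (l1 ++ p :: q :: l2).Nodup)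
    (hm : ∀ v, v ∈ l1 ++ p :: q :: l2 ↔ v ∈ V) (hc : (l1 ++ p :: q :: l2).IsChain R)
    (hh : (l1 ++ p :: q :: l2).head? = some x) (hl : (l1 ++ p :: q :: l2).getLast? = some y)
    (h2 : HP R W p' q') (hp : R p p') (hq : R q' q)
    (hd : ∀ v, v ∈ V → v ∈ W → False) (hU : ∀ v, v ∈ U ↔ v ∈ V ∨ v ∈ W) : HP R U x y := by
  have e : l1 ++ p :: q :: l2 = (l1 ++ [p]) ++ (q :: l2) := by simp
  have h1 : HP R {v | v ∈ l1 ++ [p]} x p := by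
    refine ⟨l1 ++ [p], ?_, fun v => Iff.rfl, ?_, ?_, by simp⟩
    · rw [e, List.nodup_append'] at hn; exact hn.1
    · rw [e, List.isChain_append] at hc; exact hc.1
    · rw [← hh]; cases l1 <;> simp
  have h3 : HP R {v | v ∈ q :: l2} q y := by
    refine ⟨q :: l2, ?_, fun v => Iff.rfl, ?_, by simp, ?_⟩
    · rw [e, List.nodup_append'] at hn; exact hn.2.1
    · rw [e, List.isChain_append] at hc; exact hc.2.1
    · rw [← hl, e, List.getLast?_append]; simp [List.getLast?_cons]
  have hdis : ∀ v, v ∈ l1 ++ [p] → v ∈ q :: l2 → False := by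
    rw [e, List.nodup_append'] at hn
    intro v a b; exact hn.2.2 a b
  have hm' : ∀ v, v ∈ V ↔ v ∈ l1 ++ [p] ∨ v ∈ q :: l2 := by
    intro v; rw [← hm, e, List.mem_append]
  have h12 : HP R ({v | v ∈ l1 ++ [p]} ∪ W) x q' :=
    h1.append h2 hp (fun v a b => hd v ((hm' v).2 (Or.inl a)) b) (fun v => Iff.rfl)
  refine h12.append h3 hq ?_ ?_
  · rintro v (a | a) b
    · exact hdis v a b
    · exact hd v ((hm' v).2 (Or.inr b)) a
  · intro v
    rw [hU, hm']
    simp only [Set.mem_union, Set.mem_ofPred_eq]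
    tauto

theorem exists_change {α β : Type} (f : α → β) : ∀ (l : List α) (u v : α), u ∈ l → v ∈ l →
    f u ≠ f v → ∃ l1 p q l2, l = l1 ++ p :: q :: l2 ∧ f p ≠ f q := by
  intro l
  induction l with
  | nil => intro u v hu; simp at hu
  | cons a t ih =>
    intro u v hu hv huv
    cases t with
    | nil => simp at hu hv; subst hu; subst hv; exact absurd rfl huv
    | cons b t =>
      by_cases hab : f a = f b
      · have key : ∀ w, w ∈ a :: b :: t → ∃ w' ∈ b :: t, f w' = f w := by
          intro w hw
          rcases List.mem_cons.1 hw with rfl | hw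
          · exact ⟨b, by simp, hab.symm⟩
          · exact ⟨w, hw, rfl⟩
        obtain ⟨u', hu', eu⟩ := key u hu
        obtain ⟨v', hv', ev⟩ := key v hv
        obtain ⟨l1, p, q, l2, e, h⟩ := ih u' v' hu' hv' (by rwa [eu, ev])
        exact ⟨a :: l1, p, q, l2, by simp [e], h⟩
      · exact ⟨[], a, b, t, rfl, hab⟩

/-- Words agreeing with `x` at all positions `≥ k`. -/
def C {m : ℕ} (k : ℕ) (x : Perm (Fin (m + 1))) : Set (Perm (Fin (m + 1))) :=
  {z | ∀ i : Fin (m + 1), k ≤ i.val → z i = x i}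

/-- Hamilton-laceability of the cosets of `S_k`. -/
def Lace (m k : ℕ) : Prop :=
  ∀ x y : Perm (Fin (m + 1)), y ∈ C k x → Perm.sign x ≠ Perm.sign y → HP (Adj m) (C k x) x y

theorem adj_swap {m k : ℕ} (hk : k + 1 < m + 1) (a : Perm (Fin (m + 1))) :
    Adj m a (a * swap ⟨k, by omega⟩ ⟨k + 1, hk⟩) := by
  refine ⟨⟨k, by omega⟩, ?_⟩
  rw [finRotate_of_lt (by omega)]

theorem Adj.sign {m : ℕ} (hm : 1 ≤ m) {a b : Perm (Fin (m + 1))} (h : Adj m a b) :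
    Perm.sign b = - Perm.sign a := by
  obtain ⟨i, rfl⟩ := h
  rw [map_mul, Perm.sign_swap]
  · simp
  · intro h
    rw [finRotate_apply] at h
    have h1 := congrArg Fin.val h
    rw [Fin.val_add_one] at h1
    split_ifs at h1 with h2
    · rw [h2] at h1; simp at h1; omega
    · omega

/-! ### Base case -/

def gen4 (i : Fin 3) : Perm (Fin 4) := swap i.castSucc i.succ

def walk4 : Perm (Fin 4) → List (Fin 3) → List (Perm (Fin 4))
  | x, [] => [x]
  | x, i :: w => x :: walk4 (x * gen4 i) w

def words4 : List (List (Fin 3)) :=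
 [[0, 1, 0, 1, 0, 2, 0, 1, 0, 1, 0, 2, 0, 1, 2, 1, 0, 1, 0, 1, 2, 1, 0],
  [0, 1, 0, 1, 0, 2, 0, 1, 0, 1, 0, 2, 1, 0, 1, 2, 1, 0, 1, 0, 1, 2, 1],
  [0, 1, 0, 1, 0, 2, 0, 1, 0, 1, 2, 1, 2, 1, 0, 1, 0, 1, 2, 1, 0, 1, 2],
  [0, 1, 0, 1, 0, 2, 0, 1, 0, 2, 0, 1, 0, 1, 0, 2, 1, 2, 0, 2, 1, 0, 1],
  [0, 1, 0, 1, 0, 2, 0, 1, 0, 2, 0, 1, 0, 1, 2, 1, 0, 1, 2, 0, 2, 1, 2],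
  [0, 1, 0, 1, 0, 2, 0, 1, 0, 2, 1, 2, 1, 2, 0, 2, 1, 0, 1, 2, 1, 0, 1],
  [0, 1, 0, 1, 0, 2, 0, 1, 2, 1, 0, 1, 2, 1, 0, 1, 2, 0, 2, 1, 2, 1, 2],
  [0, 1, 0, 1, 0, 2, 1, 0, 1, 2, 1, 2, 1, 0, 1, 0, 1, 2, 1, 0, 1, 2, 1],
  [0, 1, 0, 1, 2, 1, 0, 1, 2, 1, 2, 1, 0, 1, 0, 1, 2, 1, 0, 1, 2, 1, 2],
  [0, 1, 0, 2, 1, 0, 1, 2, 1, 2, 1, 0, 1, 2, 0, 2, 1, 2, 1, 0, 1, 2, 1],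
  [0, 1, 2, 1, 0, 1, 2, 1, 2, 1, 0, 1, 0, 1, 2, 1, 2, 0, 2, 1, 2, 1, 2],
  [1, 0, 1, 0, 2, 0, 1, 0, 1, 0, 2, 0, 1, 2, 1, 0, 1, 0, 1, 2, 1, 0, 2]]

/-- A word of length four, as four natural numbers. -/
structure Quad where
  (p0 p1 p2 p3 : ℕ)

def Quad.step (x : Quad) : Fin 3 → Quad
  | 0 => ⟨x.p1, x.p0, x.p2, x.p3⟩
  | 1 => ⟨x.p0, x.p2, x.p1, x.p3⟩
  | 2 => ⟨x.p0, x.p1, x.p3, x.p2⟩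

def Quad.code (x : Quad) : ℕ := ((x.p0 * 4 + x.p1) * 4 + x.p2) * 4 + x.p3

def quad (h : Perm (Fin 4)) : Quad := ⟨(h 0).val, (h 1).val, (h 2).val, (h 3).val⟩

def walkQ : Quad → List (Fin 3) → List ℕ
  | x, [] => [x.code]
  | x, i :: w => x.code :: walkQ (x.step i) w

theorem quad_gen (x : Perm (Fin 4)) (i : Fin 3) : quad (x * gen4 i) = (quad x).step i := by
  have h0 : ∀ j, gen4 0 j = ![1, 0, 2, 3] j := by decide
  have h1 : ∀ j, gen4 1 j = ![0, 2, 1, 3] j := by decide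
  have h2 : ∀ j, gen4 2 j = ![0, 1, 3, 2] j := by decide
  fin_cases i <;> simp [quad, Quad.step, h0, h1, h2]

theorem code_injective : Function.Injective (fun h : Perm (Fin 4) => (quad h).code) := by
  intro a b h
  simp only [Quad.code, quad] at h
  have e3 : a 3 = b 3 := by apply Fin.ext; omega
  have e2 : a 2 = b 2 := by apply Fin.ext; omega
  have e1 : a 1 = b 1 := by apply Fin.ext; omega
  have e0 : a 0 = b 0 := by apply Fin.ext; omega
  ext1 j
  fin_cases j
  · exact e0
  · exact e1
  · exact e2
  · exact e3

theorem walkQ_eq (x : Perm (Fin 4)) (w : List (Fin 3)) :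
    (walk4 x w).map (fun h => (quad h).code) = walkQ (quad x) w := by
  induction w generalizing x with
  | nil => rfl
  | cons i w ih => rw [walk4, walkQ, List.map_cons, ih, quad_gen]

theorem quad_one : quad 1 = ⟨0, 1, 2, 3⟩ := rfl

set_option maxRecDepth 100000 in
theorem words4_nodup : ∀ w ∈ words4, (walkQ ⟨0, 1, 2, 3⟩ w).Nodup := by decide +kernel

theorem words4_length : ∀ w ∈ words4, w.length = 23 := by decide

/-- The codes of the odd words. -/
def oddCodes : List ℕ := [30, 39, 57, 75, 108, 114, 141, 147, 180, 198, 216, 225]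

set_option maxRecDepth 100000 in
theorem oddCodes_last : ∀ c ∈ oddCodes, ∃ w ∈ words4,
    (walkQ ⟨0, 1, 2, 3⟩ w).getLast? = some c := by decide +kernel

set_option maxRecDepth 100000 in
theorem mem_oddCodes : ∀ h : Perm (Fin 4), (quad h).code ∈ oddCodes ∨ Perm.sign h = 1 := by
  decide +kernel

theorem words4_last (h : Perm (Fin 4)) (hs : Perm.sign h = -1) : ∃ w ∈ words4,
    (walk4 1 w).getLast? = some h := by
  rcases mem_oddCodes h with hc | h1
  · obtain ⟨w, hw, hl⟩ := oddCodes_last _ hc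
    refine ⟨w, hw, ?_⟩
    rw [← quad_one, ← walkQ_eq, List.getLast?_map, Option.map_eq_some_iff] at hl
    obtain ⟨g, hg, e⟩ := hl
    rw [hg, code_injective e]
  · rw [h1] at hs; exact absurd hs (by decide)

theorem walk4_length (x) (w) : (walk4 x w).length = w.length + 1 := by
  induction w generalizing x with
  | nil => rfl
  | cons i w ih => simp [walk4, ih]

theorem walk4_head (x) (w) : (walk4 x w).head? = some x := by
  cases w <;> rfl

theorem walk4_chain (x) (w) : (walk4 x w).IsChain (fun a b => ∃ i, b = a * gen4 i) := by
  induction w generalizing x with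
  | nil => simp [walk4]
  | cons i w ih =>
    rw [walk4, List.isChain_cons]
    refine ⟨?_, ih _⟩
    rw [walk4_head]
    rintro y hy
    simp at hy
    exact ⟨i, hy.symm⟩

theorem walk4_nodup (w) (hw : w ∈ words4) : (walk4 1 w).Nodup := by
  have h := words4_nodup w hw
  rw [← quad_one, ← walkQ_eq] at h
  exact h.of_map

theorem words4_full (w) (hw : w ∈ words4) (h : Perm (Fin 4)) : h ∈ walk4 1 w := by
  have hc : (walk4 1 w).toFinset.card = Fintype.card (Perm (Fin 4)) := by
    rw [List.toFinset_card_of_nodup (walk4_nodup w hw), Fintype.card_perm, Fintype.card_fin,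
      walk4_length, words4_length w hw]
    rfl
  have := (Finset.card_eq_iff_eq_univ _).1 hc
  rw [← List.mem_toFinset, this]
  exact Finset.mem_univ h

theorem hp4 (h : Perm (Fin 4)) (hs : Perm.sign h = -1) :
    HP (fun a b => ∃ i, b = a * gen4 i) Set.univ 1 h := by
  obtain ⟨w, hw, hl⟩ := words4_last h hs
  exact ⟨walk4 1 w, walk4_nodup w hw, fun v => by simp [words4_full w hw v], walk4_chain 1 w,
    walk4_head 1 w, hl⟩


def emb4 {m : ℕ} (hm : 4 ≤ m + 1) : Fin 4 ≃ {i : Fin (m + 1) // i.val < 4} where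
  toFun i := ⟨⟨i.val, by omega⟩, i.isLt⟩
  invFun i := ⟨i.val.val, i.prop⟩
  left_inv i := rfl
  right_inv i := rfl

theorem ext_gen4 {m : ℕ} (hm : 4 ≤ m + 1) (i : Fin 3) :
    (gen4 i).extendDomain (emb4 hm) = swap ⟨i.val, by omega⟩ ⟨i.val + 1, by omega⟩ := by
  ext1 j
  by_cases hj : j.val < 4
  · have : j = ((emb4 hm ⟨j.val, hj⟩ : {i : Fin (m + 1) // i.val < 4}) : Fin (m + 1)) := rfl
    rw [this, Perm.extendDomain_apply_image, ← this]
    unfold gen4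
    simp only [swap_apply_def, Fin.ext_iff, emb4, Fin.val_castSucc, Fin.val_succ, Equiv.coe_fn_mk]
    split_ifs <;> simp
  · rw [Perm.extendDomain_apply_not_subtype (p := fun i : Fin (m + 1) => i.val < 4) _ _ hj]
    rw [swap_apply_of_ne_of_ne] <;> (rw [ne_eq, Fin.ext_iff]; simp only; omega)

theorem lace4 {m : ℕ} (hm : 4 ≤ m + 1) : Lace m 4 := by
  intro x y hy hs
  have surj : ∀ z ∈ C 4 x, ∃ h : Perm (Fin 4), x * h.extendDomain (emb4 hm) = z := by
    intro z hz
    have h1 : ∀ i : Fin (m + 1), ((x⁻¹ * z) i).val < 4 ↔ i.val < 4 := by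
      have hfix : ∀ i : Fin (m + 1), 4 ≤ i.val → (x⁻¹ * z) i = i := by
        intro i hi
        rw [Perm.mul_apply, hz i hi]; simp
      intro i
      constructor
      · intro h
        by_contra hi
        rw [hfix i (by omega)] at h
        exact hi h
      · intro h
        by_contra hi
        have := hfix _ (not_lt.1 hi)
        have := (x⁻¹ * z).injective this
        rw [this] at hi
        exact hi h
    refine ⟨(emb4 hm).symm.permCongr ((x⁻¹ * z).subtypePerm h1), ?_⟩
    ext1 j
    by_cases hj : j.val < 4
    · have : j = ((emb4 hm ⟨j.val, hj⟩ : {i : Fin (m + 1) // i.val < 4}) : Fin (m + 1)) := rfl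
      rw [Perm.mul_apply]
      nth_rewrite 1 [this]
      rw [Perm.extendDomain_apply_image]
      simp [emb4]
    · rw [Perm.mul_apply, Perm.extendDomain_apply_not_subtype (p := fun i : Fin (m + 1) => i.val < 4) _ _ hj, hz j (by omega)]
  obtain ⟨h, rfl⟩ := surj y hy
  have hs' : Perm.sign h = -1 := by
    rw [map_mul, Perm.sign_extendDomain] at hs
    rcases Int.units_eq_one_or (Perm.sign h) with h1 | h1
    · rw [h1] at hs; simp at hs
    · exact h1
  obtain ⟨l, ln, lm, lc, lh, ll⟩ := hp4 h hs'
  refine ⟨l.map (fun g => x * g.extendDomain (emb4 hm)), ?_, ?_, ?_, ?_, ?_⟩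
  · refine ln.map ?_
    intro a b hab
    exact Perm.extendDomainHom_injective (emb4 hm) (mul_left_cancel hab)
  · intro v
    rw [List.mem_map]
    constructor
    · rintro ⟨g, -, rfl⟩ i hi
      rw [Perm.mul_apply, Perm.extendDomain_apply_not_subtype (p := fun i : Fin (m + 1) => i.val < 4) _ _ (by omega)]
    · intro hv
      obtain ⟨g, hg⟩ := surj v hv
      exact ⟨g, (lm g).2 trivial, hg⟩
  · rw [List.isChain_map]
    refine lc.imp ?_
    rintro a _ ⟨i, rfl⟩
    have := adj_swap (m := m) (k := i.val) (by omega) (x * a.extendDomain (emb4 hm))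
    rw [← Perm.extendDomain_mul, ext_gen4, ← mul_assoc]
    exact this
  · simp [lh]
  · simp [ll]

/-! ### Inductive step -/

theorem C_self {m k : ℕ} (x : Perm (Fin (m + 1))) : x ∈ C k x := fun _ _ => rfl

theorem C_mul_swap {m k : ℕ} {w x : Perm (Fin (m + 1))} (hx : x ∈ C k w) {i j : Fin (m + 1)}
    (hi : i.val < k) (hj : j.val < k) : x * swap i j ∈ C k w := by
  intro l hl
  rw [Perm.mul_apply, swap_apply_of_ne_of_ne, hx l hl]
  · rintro rfl; omega
  · rintro rfl; omega

theorem C_val {m k : ℕ} {w x : Perm (Fin (m + 1))} (hx : x ∈ C k w) {i j : Fin (m + 1)}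
    (h : x i = w j) : i.val < k ↔ j.val < k := by
  constructor
  · intro hi
    by_contra hj
    rw [← hx j (by omega)] at h
    have := x.injective h
    subst this; omega
  · intro hj
    by_contra hi
    rw [hx i (by omega)] at h
    have := w.injective h
    subst this; omega

/-- splitting off the last free position -/
theorem C_succ {m k : ℕ} (hk : k < m + 1) {w x : Perm (Fin (m + 1))} (hx : x ∈ C (k + 1) w)
    (v : Perm (Fin (m + 1))) : v ∈ C k x ↔ v ∈ C (k + 1) w ∧ v ⟨k, hk⟩ = x ⟨k, hk⟩ := by
  constructor
  · intro hv
    refine ⟨fun i hi => ?_, hv _ le_rfl⟩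
    rw [hv i (by omega), hx i hi]
  · rintro ⟨h1, h2⟩ i hi
    rcases Nat.eq_or_lt_of_le hi with h | h
    · have : i = ⟨k, hk⟩ := Fin.ext h.symm
      rw [this, h2]
    · rw [h1 i h, hx i h]

theorem sign_mul_swap {m : ℕ} (x : Perm (Fin (m + 1))) {i j : Fin (m + 1)} (h : i ≠ j) :
    Perm.sign (x * swap i j) = - Perm.sign x := by
  rw [map_mul, Perm.sign_swap h, mul_neg, mul_one]

theorem units_ne {a b : ℤˣ} : a ≠ b ↔ b = -a := by
  rcases Int.units_eq_one_or a with rfl | rfl <;> rcases Int.units_eq_one_or b with rfl | rfl <;>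
    decide

/-- exit vertex -/
theorem exists_exit {m k : ℕ} (hk : k + 1 < m + 1) (hk3 : 2 ≤ k) {w x : Perm (Fin (m + 1))}
    (hx : x ∈ C (k + 2) w) (b : Fin (m + 1)) (hb : ∃ j : Fin (m + 1), j.val < k + 2 ∧ w j = b)
    (hne : x ⟨k + 1, hk⟩ ≠ b) :
    ∃ e ∈ C (k + 2) w, e ⟨k + 1, hk⟩ = x ⟨k + 1, hk⟩ ∧ e ⟨k, by omega⟩ = b ∧
      Perm.sign x ≠ Perm.sign e := by
  obtain ⟨j, hj, rfl⟩ := hb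
  set i := x⁻¹ (w j) with hi
  have hxi : x i = w j := by simp [hi]
  have hi2 : i.val < k + 2 := (C_val hx hxi).2 hj
  have hi1 : i ≠ ⟨k + 1, hk⟩ := by
    rintro h; rw [h] at hxi; exact hne hxi
  have hkk : (⟨k + 1, hk⟩ : Fin (m + 1)) ≠ ⟨k, by omega⟩ := by simp
  have h0 : x * swap ⟨k, by omega⟩ i ∈ C (k + 2) w := C_mul_swap hx (by simp) hi2
  have h1 : (x * swap ⟨k, by omega⟩ i) ⟨k + 1, hk⟩ = x ⟨k + 1, hk⟩ := by
    rw [Perm.mul_apply, swap_apply_of_ne_of_ne hkk hi1.symm]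
  have h2 : (x * swap ⟨k, by omega⟩ i) ⟨k, by omega⟩ = w j := by
    rw [Perm.mul_apply, swap_apply_left, hxi]
  set e := x * swap ⟨k, by omega⟩ i
  by_cases hs : Perm.sign x ≠ Perm.sign e
  · exact ⟨e, h0, h1, h2, hs⟩
  · push Not at hs
    refine ⟨e * swap ⟨0, by omega⟩ ⟨1, by omega⟩, C_mul_swap h0 (by simp) (by simp), ?_, ?_, ?_⟩
    · rw [Perm.mul_apply, swap_apply_of_ne_of_ne, h1] <;> simp [Fin.ext_iff] <;> omega
    · rw [Perm.mul_apply, swap_apply_of_ne_of_ne, h2] <;> simp [Fin.ext_iff] <;> omega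
    · rw [units_ne, sign_mul_swap _ (by simp [Fin.ext_iff]), hs]

theorem chain_copies {m k : ℕ} (hk : k + 1 < m + 1) (hk3 : 2 ≤ k) (hL : Lace m (k + 1))
    (w : Perm (Fin (m + 1))) : ∀ (vs : List (Fin (m + 1))) (_ : vs.Nodup)
    (_ : ∀ v ∈ vs, ∃ j : Fin (m + 1), j.val < k + 2 ∧ w j = v)
    (x y : Perm (Fin (m + 1))) (_ : x ∈ C (k + 2) w) (_ : y ∈ C (k + 2) w)
    (_ : vs.head? = some (x ⟨k + 1, hk⟩)) (_ : vs.getLast? = some (y ⟨k + 1, hk⟩))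
    (_ : Perm.sign x ≠ Perm.sign y),
    HP (Adj m) {z | z ∈ C (k + 2) w ∧ z ⟨k + 1, hk⟩ ∈ vs} x y := by
  intro vs
  induction vs with
  | nil => intro _ _ x y _ _ h; simp at h
  | cons a t ih =>
    intro hn hv x y hx hy hh hl hs
    simp only [List.head?_cons, Option.some.injEq] at hh
    cases t with
    | nil =>
      simp only [List.getLast?_singleton, Option.some.injEq] at hl
      have := hL x y ((C_succ hk hx y).2 ⟨hy, by rw [← hl, hh]⟩) hs
      convert this using 1
      ext v
      rw [C_succ hk hx v, ← hh]
      simp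
    | cons b t =>
      have hab : a ≠ b := by
        intro h; simp [h] at hn
      obtain ⟨e, he, e1, e2, es⟩ := exists_exit hk hk3 hx b (hv b (by simp)) (hh ▸ hab)
      have p1 := hL x e ((C_succ hk hx e).2 ⟨he, e1⟩) es
      have hkm : k < m + 1 := by omega
      have p2 := ih (List.nodup_cons.1 hn).2 (fun v h => hv v (List.mem_cons_of_mem _ h))
        (e * swap ⟨k, hkm⟩ ⟨k + 1, hk⟩) y (C_mul_swap he (by simp) (by simp)) hy
        (by simp [e2]) (by simpa [List.getLast?_cons_cons] using hl)
        (by rw [sign_mul_swap _ (by simp [Fin.ext_iff]), units_ne.1 es, neg_neg]; exact hs)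
      refine p1.append p2 (adj_swap hk e) ?_ ?_
      · rintro v h1 ⟨-, h2⟩
        rw [C_succ hk hx v, ← hh] at h1
        rw [h1.2] at h2
        exact (List.nodup_cons.1 hn).1 h2
      · intro v
        rw [C_succ hk hx v, ← hh]
        simp only [Set.mem_ofPred_eq, List.mem_cons]
        tauto

theorem exists_list {α : Type} [DecidableEq α] (A : Finset α) (a b : α) (ha : a ∈ A) (hb : b ∈ A)
    (hab : a ≠ b) : ∃ l : List α, l.Nodup ∧ (∀ v, v ∈ l ↔ v ∈ A) ∧ l.head? = some a ∧
      l.getLast? = some b := by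
  refine ⟨a :: (((A.erase a).erase b).toList ++ [b]), ?_, ?_, by simp, ?_⟩
  · rw [List.nodup_cons, List.nodup_append']
    refine ⟨by simp [hab], Finset.nodup_toList _, by simp, ?_⟩
    intro v h1 h2
    simp at h1 h2
    exact h1.1 h2
  · intro v
    simp only [List.mem_cons, List.mem_append, Finset.mem_toList, Finset.mem_erase,
      List.not_mem_nil, or_false]
    constructor
    · rintro (rfl | h | rfl)
      · exact ha
      · exact h.2.2
      · exact hb
    · intro h
      by_cases h1 : v = a <;> by_cases h2 : v = b <;> simp [h1, h2, h] 
  · rw [← List.cons_append, List.getLast?_append]; simp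

theorem lace_succ {m k : ℕ} (hk : k + 1 < m + 1) (hk3 : 2 ≤ k) (hL : Lace m (k + 1)) :
    Lace m (k + 2) := by
  intro x y hy hs
  have hx : x ∈ C (k + 2) x := C_self x
  set p : Fin (m + 1) := ⟨k + 1, hk⟩ with hp
  set A : Finset (Fin (m + 1)) := Finset.univ.filter (fun v => ∃ j : Fin (m + 1), j.val < k + 2 ∧ x j = v)
    with hA
  have memA : ∀ z ∈ C (k + 2) x, ∀ i : Fin (m + 1), i.val < k + 2 → z i ∈ A := by
    intro z hz i hi
    rw [hA, Finset.mem_filter]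
    refine ⟨Finset.mem_univ _, x⁻¹ (z i), ?_, by simp⟩
    exact (C_val hz (i := i) (by simp)).1 hi
  by_cases hab : x p = y p
  · have h1 := hL x y ((C_succ hk hx y).2 ⟨hy, hab.symm⟩) hs
    obtain ⟨l, ln, lm, lc, lh, ll⟩ := h1
    have hx' : x ∈ l := (lm x).2 (C_self x)
    have hz' : x * swap ⟨0, by omega⟩ ⟨k, by omega⟩ ∈ l :=
      (lm _).2 (C_mul_swap (C_self x) (by simp) (by simp))
    obtain ⟨l1, a, b, l2, rfl, hf⟩ := exists_change (fun z : Perm (Fin (m + 1)) => z ⟨k, by omega⟩)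
      l _ _ hx' hz' (by
        simp only [Perm.mul_apply, swap_apply_right]
        intro h
        have := x.injective h
        simp at this; omega)
    have ha : a ∈ C (k + 2) x ∧ a p = x p := (C_succ hk hx a).1 ((lm a).1 (by simp))
    have hb : b ∈ C (k + 2) x ∧ b p = x p := (C_succ hk hx b).1 ((lm b).1 (by simp))
    have hadj : Adj m a b := by
      rw [List.isChain_append_cons_cons] at lc; exact lc.2.1
    have hkp : (⟨k, by omega⟩ : Fin (m + 1)) ≠ p := by simp [hp]
    have hnv : ∀ z : Perm (Fin (m + 1)), z p = x p → z ⟨k, by omega⟩ ≠ x p := by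
      intro z hz h
      rw [← hz] at h
      exact hkp (z.injective h)
    obtain ⟨vs, vn, vm, vh, vl⟩ := exists_list (A.erase (x p)) (a ⟨k, by omega⟩) (b ⟨k, by omega⟩)
      (Finset.mem_erase.2 ⟨hnv a ha.2, memA a ha.1 _ (by simp)⟩)
      (Finset.mem_erase.2 ⟨hnv b hb.2, memA b hb.1 _ (by simp)⟩) hf
    have h2 := chain_copies hk hk3 hL x vs vn
      (fun v hv => by
        have := (Finset.mem_erase.1 ((vm v).1 hv)).2
        rw [hA, Finset.mem_filter] at this
        exact this.2)
      (a * swap ⟨k, by omega⟩ p) (b * swap ⟨k, by omega⟩ p)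
      (C_mul_swap ha.1 (by simp) (by simp [hp])) (C_mul_swap hb.1 (by simp) (by simp [hp]))
      (by rw [vh, Perm.mul_apply, ← hp, swap_apply_right])
      (by rw [vl, Perm.mul_apply, ← hp, swap_apply_right])
      (by
        rw [units_ne, sign_mul_swap _ hkp, sign_mul_swap _ hkp, hadj.sign (by omega)])
    refine HP.insert ln lm lc lh ll h2 (adj_swap hk a) ?_ ?_ ?_
    · have := adj_swap hk (b * swap ⟨k, by omega⟩ p)
      rwa [mul_assoc, ← hp, swap_mul_self, mul_one] at this
    · rintro v h3 ⟨-, h4⟩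
      rw [C_succ hk hx v] at h3
      have := (vm _).1 h4
      rw [← hp, h3.2] at this
      simp [hp] at this
    · intro v
      rw [C_succ hk hx v]
      simp only [Set.mem_ofPred_eq, vm, Finset.mem_erase]
      constructor
      · intro hv
        by_cases h : v p = x p
        · exact Or.inl ⟨hv, h⟩
        · exact Or.inr ⟨hv, h, memA v hv _ (by simp)⟩
      · rintro (h | h) <;> exact h.1
  · obtain ⟨vs, vn, vm, vh, vl⟩ := exists_list A (x p) (y p) (memA x hx p (by simp [hp]))
      (memA y hy p (by simp [hp])) hab
    have h2 := chain_copies hk hk3 hL x vs vn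
      (fun v hv => by
        have := (vm v).1 hv
        rw [hA, Finset.mem_filter] at this
        exact this.2) x y hx hy vh vl hs
    convert h2 using 1
    ext v
    simp only [Set.mem_ofPred_eq, vm]
    exact ⟨fun h => ⟨h, memA v h _ (by simp)⟩, fun h => h.1⟩

theorem lace {m : ℕ} (k : ℕ) (hk : k + 4 ≤ m + 1) : Lace m (k + 4) := by
  induction k with
  | zero => exact lace4 hk
  | succ k ih => exact lace_succ (k := k + 3) (by omega) (by omega) (ih (by omega))

/-! ### Lifting through the symmetry `σ ↦ τ σ ρ⁻¹` -/

open scoped Fin.NatCast in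
theorem rot_pow {m : ℕ} (q : ℕ) (i : Fin (m + 1)) :
    ((finRotate (m + 1)) ^ q) i = i + (q : Fin (m + 1)) := by
  induction q with
  | zero => simp
  | succ q ih =>
    rw [pow_succ', Perm.mul_apply, ih, finRotate_apply]
    apply Fin.ext
    simp only [Fin.val_add, Fin.val_natCast, Fin.val_one']
    simp only [Nat.mod_add_mod, Nat.add_mod_mod, add_assoc]

open scoped Fin.NatCast in
theorem rot_pow_self (m : ℕ) : (finRotate (m + 1)) ^ (m + 1) = 1 := by
  ext1 i
  rw [rot_pow]
  simp

open scoped Fin.NatCast in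
theorem lift_cycle {m L : ℕ} (hL : 0 < L) (τ : Perm (Fin (m + 1))) (hτ : τ ^ (m + 1) = 1)
    (hτl : τ (Fin.last m) = Fin.last m) (g : ℕ → Perm (Fin (m + 1))) (t0 : ℕ → Fin (m + 1))
    (g0 : g 0 = 1) (ginj : ∀ r < L, ∀ r' < L, g r = g r' → r = r')
    (gmem : ∀ r < L, g r (Fin.last m) = Fin.last m)
    (gsurj : ∀ z : Perm (Fin (m + 1)), z (Fin.last m) = Fin.last m → ∃ r < L, g r = z)
    (hstep : ∀ r < L, (if r + 1 < L then g (r + 1) else τ * (finRotate (m + 1))⁻¹)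
      = g r * swap (t0 r) (finRotate (m + 1) (t0 r))) :
    ∃ (N : ℕ), N + 1 = Nat.factorial (m + 1) ∧
    ∃ (π : Fin (N + 1) → Equiv.Perm (Fin (m + 1))) (t : Fin (N + 1) → Fin (m + 1)),
      Function.Bijective π ∧
      (∀ s : Fin (N + 1), π (s + 1) = π s * Equiv.swap (t s) (finRotate (m + 1) (t s))) ∧
      (∀ i : Fin (m + 1),
        (Finset.univ.filter (fun s : Fin (N + 1) => t s = i)).card
          = Nat.factorial (m + 1 - 1)) := by
  set ρ := finRotate (m + 1) with hρ
  obtain ⟨N, hN⟩ : ∃ N, N + 1 = (m + 1) * L :=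
    ⟨(m + 1) * L - 1, Nat.sub_add_cancel (Nat.mul_pos (Nat.succ_pos _) hL)⟩
  have hτq : ∀ q, (τ ^ q) (Fin.last m) = Fin.last m := by
    intro q
    induction q with
    | zero => simp
    | succ q ih => rw [pow_succ, Perm.mul_apply, hτl, ih]
  set F : ℕ → Perm (Fin (m + 1)) := fun s => τ ^ (s / L) * g (s % L) * (ρ ^ (s / L))⁻¹ with hF
  set T : ℕ → Fin (m + 1) := fun s => (ρ ^ (s / L)) (t0 (s % L)) with hT
  have F0 : F 0 = 1 := by simp [hF, g0]
  have Fend : F (N + 1) = 1 := by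
    simp only [hF]
    rw [hN, Nat.mul_div_cancel _ hL, Nat.mul_mod_left, g0, hτ, rot_pow_self]
    simp
  have divL : ∀ q r, r < L → (q * L + r) / L = q := by
    intro q r hr
    rw [Nat.add_comm, Nat.add_mul_div_right _ _ hL, Nat.div_eq_of_lt hr, Nat.zero_add]
  have modL : ∀ q r, r < L → (q * L + r) % L = r := by
    intro q r hr
    rw [Nat.add_comm, Nat.add_mul_mod_self_right, Nat.mod_eq_of_lt hr]
  have Fval : ∀ q r, r < L → F (q * L + r) = τ ^ q * g r * (ρ ^ q)⁻¹ := by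
    intro q r hr
    simp only [hF]
    rw [divL q r hr, modL q r hr]
  have Tval : ∀ q r, r < L → T (q * L + r) = t0 r + (q : Fin (m + 1)) := by
    intro q r hr
    simp only [hT]
    rw [divL q r hr, modL q r hr, rot_pow]
  have decomp : ∀ s, ∃ q r, r < L ∧ s = q * L + r := fun s =>
    ⟨s / L, s % L, Nat.mod_lt _ hL, by rw [Nat.mul_comm, Nat.div_add_mod]⟩
  have Fstep : ∀ s, F (s + 1) = F s * swap (T s) (ρ (T s)) := by
    intro s
    obtain ⟨q, r, hr, rfl⟩ := decomp s
    have hs := hstep r hr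
    have hconj : swap (T (q * L + r)) (ρ (T (q * L + r)))
        = ρ ^ q * swap (t0 r) (ρ (t0 r)) * (ρ ^ q)⁻¹ := by
      have e1 : T (q * L + r) = (ρ ^ q) (t0 r) := by rw [Tval q r hr, rot_pow]
      have e2 : ρ (T (q * L + r)) = (ρ ^ q) (ρ (t0 r)) := by
        rw [e1, ← Perm.mul_apply, ← Perm.mul_apply, ← pow_succ, ← pow_succ']
      rw [e1, ← Perm.mul_apply, ← pow_succ', pow_succ, Perm.mul_apply, Equiv.swap_apply_apply]
    rw [hconj, Fval q r hr]
    have : τ ^ q * g r * (ρ ^ q)⁻¹ * (ρ ^ q * swap (t0 r) (ρ (t0 r)) * (ρ ^ q)⁻¹)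
      = τ ^ q * (g r * swap (t0 r) (ρ (t0 r))) * (ρ ^ q)⁻¹ := by group
    rw [this, ← hs]
    split_ifs with h
    · rw [add_assoc, Fval q (r + 1) h]
    · have hr' : r + 1 = L := by omega
      have : q * L + r + 1 = (q + 1) * L + 0 := by rw [add_assoc, hr']; ring
      rw [this, Fval (q + 1) 0 hL, g0, pow_succ, pow_succ' ρ]
      group
  have qlt : ∀ q r, q * L + r < N + 1 → q < m + 1 := by
    intro q r h
    rw [hN] at h
    by_contra hq
    have := Nat.mul_le_mul_right L (not_lt.1 hq)
    omega
  have slt : ∀ q r, q < m + 1 → r < L → q * L + r < N + 1 := by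
    intro q r hq hr
    rw [hN]
    have := Nat.mul_le_mul_right L (Nat.succ_le_of_lt hq)
    rw [Nat.succ_mul] at this
    omega
  have castinj : ∀ q q' : ℕ, q < m + 1 → q' < m + 1 →
      (q : Fin (m + 1)) = (q' : Fin (m + 1)) → q = q' := by
    intro q q' h h' e
    have := congrArg Fin.val e
    rwa [Fin.val_natCast, Fin.val_natCast, Nat.mod_eq_of_lt h, Nat.mod_eq_of_lt h'] at this
  have bij : Function.Bijective (fun s : Fin (N + 1) => F s.val) := by
    constructor
    · rintro ⟨s, hs⟩ ⟨s', hs'⟩ h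
      simp only at h
      obtain ⟨q, r, hr, rfl⟩ := decomp s
      obtain ⟨q', r', hr', rfl⟩ := decomp s'
      have pos : ∀ q r, r < L → F (q * L + r) ((ρ ^ q) (Fin.last m)) = Fin.last m := by
        intro q r hr
        rw [Fval q r hr]
        simp only [Perm.mul_apply]
        rw [Perm.inv_def, Equiv.symm_apply_apply, gmem r hr, hτq]
      have e : (ρ ^ q) (Fin.last m) = (ρ ^ q') (Fin.last m) := by
        apply (F (q * L + r)).injective
        rw [pos q r hr, h, pos q' r' hr']
      rw [rot_pow, rot_pow] at e
      have hq := castinj q q' (qlt q r hs) (qlt q' r' hs') (add_left_cancel e)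
      subst hq
      rw [Fval q r hr, Fval q r' hr'] at h
      have := ginj r hr r' hr' (mul_left_cancel (mul_right_cancel h))
      subst this
      rfl
    · intro σ
      set q : ℕ := (σ⁻¹ (Fin.last m) - Fin.last m).val with hq
      have hqm : q < m + 1 := Fin.isLt _
      have hρq : (ρ ^ q) (Fin.last m) = σ⁻¹ (Fin.last m) := by
        rw [rot_pow, hq, Fin.cast_val_eq_self]
        abel
      obtain ⟨r, hr, e⟩ := gsurj ((τ ^ q)⁻¹ * σ * ρ ^ q) (by
        simp only [Perm.mul_apply]
        rw [hρq, Perm.inv_eq_iff_eq, hτq]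
        simp)
      refine ⟨⟨q * L + r, slt q r hqm hr⟩, ?_⟩
      simp only
      rw [Fval q r hr, e]
      group
  have hcard : N + 1 = Nat.factorial (m + 1) := by
    have := Fintype.card_of_bijective bij
    rwa [Fintype.card_fin, Fintype.card_perm, Fintype.card_fin] at this
  have hLf : L = Nat.factorial m := by
    rw [hN, Nat.factorial_succ] at hcard
    exact Nat.eq_of_mul_eq_mul_left (Nat.succ_pos m) hcard
  refine ⟨N, hcard, fun s => F s.val, fun s => T s.val, bij, ?_, ?_⟩
  · intro s
    have hs := s.isLt
    simp only
    rw [← Fstep s.val, Fin.val_add_one]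
    split_ifs with h
    · rw [F0, h, Fin.val_last, Fend]
    · rfl
  · intro i
    rw [Nat.add_sub_cancel, ← hLf]
    conv_rhs => rw [← Finset.card_range L]
    refine Finset.card_bij' (fun s _ => s.val % L)
      (fun r hr => ⟨(i - t0 r).val * L + r, slt _ _ (Fin.isLt _) (Finset.mem_range.1 hr)⟩)
      ?_ ?_ ?_ ?_
    · intro s _
      exact Finset.mem_range.2 (Nat.mod_lt _ hL)
    · intro r hr
      rw [Finset.mem_filter]
      refine ⟨Finset.mem_univ _, ?_⟩
      simp only
      rw [Tval _ r (Finset.mem_range.1 hr), Fin.cast_val_eq_self]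
      abel
    · rintro ⟨s, hs⟩ h
      rw [Finset.mem_filter] at h
      have h := h.2
      simp only at h
      obtain ⟨q, r, hr, rfl⟩ := decomp s
      rw [Tval q r hr] at h
      have hrr : (q * L + r) % L = r := by
        rw [Nat.add_comm, Nat.add_mul_mod_self_right, Nat.mod_eq_of_lt hr]
      apply Fin.ext
      simp only [hrr]
      rw [← h, add_sub_cancel_left, Fin.val_natCast, Nat.mod_eq_of_lt (qlt q r hs)]
    · intro r hr
      simp only
      rw [Nat.add_comm, Nat.add_mul_mod_self_right, Nat.mod_eq_of_lt (Finset.mem_range.1 hr)]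

theorem lift_path {m : ℕ} (τ : Perm (Fin (m + 1))) (hτ : τ ^ (m + 1) = 1)
    (hτl : τ (Fin.last m) = Fin.last m) (y : Perm (Fin (m + 1)))
    (hy : y * swap (Fin.last m) (finRotate (m + 1) (Fin.last m)) = τ * (finRotate (m + 1))⁻¹)
    (hp : HP (Adj m) {z | z (Fin.last m) = Fin.last m} 1 y) :
    ∃ (N : ℕ), N + 1 = Nat.factorial (m + 1) ∧
    ∃ (π : Fin (N + 1) → Equiv.Perm (Fin (m + 1))) (t : Fin (N + 1) → Fin (m + 1)),
      Function.Bijective π ∧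
      (∀ s : Fin (N + 1), π (s + 1) = π s * Equiv.swap (t s) (finRotate (m + 1) (t s))) ∧
      (∀ i : Fin (m + 1),
        (Finset.univ.filter (fun s : Fin (N + 1) => t s = i)).card
          = Nat.factorial (m + 1 - 1)) := by
  obtain ⟨l, ln, lm, lc, lh, ll⟩ := hp
  have hL : 0 < l.length := by
    rcases l with _ | ⟨a, l⟩
    · simp at lh
    · simp
  have gd : ∀ r (h : r < l.length), l.getD r 1 = l[r] := by
    intro r h; simp [h]
  have hs : ∀ r, ∃ i, r < l.length →
      (if r + 1 < l.length then l.getD (r + 1) 1 else τ * (finRotate (m + 1))⁻¹)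
        = l.getD r 1 * swap i (finRotate (m + 1) i) := by
    intro r
    by_cases hr : r < l.length
    · split_ifs with h
      · obtain ⟨i, hi⟩ := List.isChain_iff_getElem.1 lc r h
        exact ⟨i, fun _ => by rw [gd _ h, gd _ hr, hi]⟩
      · refine ⟨Fin.last m, fun _ => ?_⟩
        have : l.getD r 1 = y := by
          have hr' : r = l.length - 1 := by omega
          rw [List.getLast?_eq_getElem?, ← hr'] at ll
          simp [List.getD, ll]
        rw [this, hy]
    · exact ⟨0, fun h => absurd h hr⟩
  choose t0 ht0 using hs
  refine lift_cycle hL τ hτ hτl (fun r => l.getD r 1) t0 ?_ ?_ ?_ ?_ ht0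
  · rcases l with _ | ⟨a, l⟩
    · simp at lh
    · simpa using lh
  · intro r hr r' hr' h
    simp only [gd r hr, gd r' hr'] at h
    exact (ln.getElem_inj_iff).1 h
  · intro r hr
    simp only [gd r hr]
    exact (lm _).1 (List.getElem_mem hr)
  · intro z hz
    obtain ⟨r, hr, e⟩ := List.getElem_of_mem ((lm z).2 hz)
    exact ⟨r, hr, by simp only [gd r hr, e]⟩

theorem case_large {m : ℕ} (hm : 4 ≤ m) (he : Even (m + 1)) :
    ∃ (τ y : Perm (Fin (m + 1))), τ ^ (m + 1) = 1 ∧ τ (Fin.last m) = Fin.last m ∧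
      y * swap (Fin.last m) (finRotate (m + 1) (Fin.last m)) = τ * (finRotate (m + 1))⁻¹ ∧
      HP (Adj m) {z | z (Fin.last m) = Fin.last m} 1 y := by
  have hl0 : Fin.last m ≠ 0 := by simp [Fin.ext_iff]; omega
  have h01 : (⟨0, by omega⟩ : Fin (m + 1)) ≠ ⟨1, by omega⟩ := by simp
  set τ : Perm (Fin (m + 1)) := swap ⟨0, by omega⟩ ⟨1, by omega⟩ with hτ
  have hτl : τ (Fin.last m) = Fin.last m := by
    rw [hτ, swap_apply_of_ne_of_ne] <;> simp [Fin.ext_iff] <;> omega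
  set y : Perm (Fin (m + 1)) := τ * (finRotate (m + 1))⁻¹ * swap (Fin.last m) 0 with hy
  have hyl : y (Fin.last m) = Fin.last m := by
    rw [hy, Perm.mul_apply, Perm.mul_apply, swap_apply_left]
    have : (finRotate (m + 1))⁻¹ 0 = Fin.last m := by
      rw [Perm.inv_eq_iff_eq, finRotate_last]
    rw [this, hτl]
  refine ⟨τ, y, ?_, hτl, ?_, ?_⟩
  · obtain ⟨r, hr⟩ := he
    have : ∀ j, m + 1 = j → τ ^ j = 1 := by
      intro j hj
      rw [← hj.symm.trans (hr.trans (two_mul r).symm) |>.symm, pow_mul, pow_two, hτ,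
        swap_mul_self, one_pow]
    exact this _ rfl
  · rw [finRotate_last, hy, mul_assoc, swap_mul_self, mul_one]
  · obtain ⟨k, rfl⟩ : ∃ k, m = k + 4 := ⟨m - 4, by omega⟩
    have h := lace (m := k + 4) k (by omega) 1 y ?_ ?_
    · convert h using 1
      ext z
      constructor
      · intro hz i hi
        have : i = Fin.last (k + 4) := by
          apply Fin.ext
          have := i.isLt
          simp only [Fin.val_last]; omega
        rw [this, Perm.one_apply]; exact hz
      · intro hz
        exact hz (Fin.last (k + 4)) (by simp)
    · intro i hi
      have : i = Fin.last (k + 4) := by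
        apply Fin.ext
        have := i.isLt
        simp only [Fin.val_last]; omega
      rw [this, hyl, Perm.one_apply]
    · have hodd : Odd (k + 4) := by
        rcases Nat.even_or_odd (k + 4) with h | h
        · exact absurd he (by simpa [Nat.even_add_one] using h)
        · exact h
      rw [hy, map_mul, map_mul, Perm.sign_swap hl0, Perm.sign_inv, sign_finRotate, hτ,
        Perm.sign_swap h01, Nat.add_sub_cancel, hodd.neg_one_pow]
      rw [Perm.sign_one]; decide

theorem case_four :
    ∃ (τ y : Perm (Fin (3 + 1))), τ ^ (3 + 1) = 1 ∧ τ (Fin.last 3) = Fin.last 3 ∧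
      y * swap (Fin.last 3) (finRotate (3 + 1) (Fin.last 3)) = τ * (finRotate (3 + 1))⁻¹ ∧
      HP (Adj 3) {z | z (Fin.last 3) = Fin.last 3} 1 y := by
  refine ⟨swap 1 2, swap 0 1, by decide, by decide, by decide,
    [1, swap 1 2, swap 1 2 * swap 0 1, swap 0 2, swap 0 2 * swap 0 1, swap 0 1],
    by decide, ?_, ?_, by decide, by decide⟩
  · show ∀ v : Perm (Fin 4), _ ↔ v 3 = 3
    decide
  · unfold Adj
    decide

end BalGray

theorem balanced_gray_code_cyclically_adjacent (n : ℕ) (hn : 2 ≤ n) (hne : Even n) :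
    ∃ (N : ℕ), N + 1 = Nat.factorial n ∧
    ∃ (π : Fin (N + 1) → Equiv.Perm (Fin n)) (t : Fin (N + 1) → Fin n),
      Function.Bijective π ∧
      (∀ s : Fin (N + 1), π (s + 1) = π s * Equiv.swap (t s) (finRotate n (t s))) ∧
      (∀ i : Fin n,
        (Finset.univ.filter (fun s : Fin (N + 1) => t s = i)).card
          = Nat.factorial (n - 1)) := by
  obtain ⟨m, rfl⟩ : ∃ m, n = m + 1 := ⟨n - 1, by omega⟩
  rcases lt_or_ge m 4 with h | h
  · have hm : m = 1 ∨ m = 3 := by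
      have : m = 1 ∨ m = 2 ∨ m = 3 := by omega
      rcases this with h | rfl | h
      · exact Or.inl h
      · exact absurd hne (by decide)
      · exact Or.inr h
    rcases hm with rfl | rfl
    · exact ⟨1, rfl, ![1, Equiv.swap 0 1], ![0, 1], by decide, by decide, by decide⟩
    · obtain ⟨τ, y, h1, h2, h3, h4⟩ := BalGray.case_four
      exact BalGray.lift_path τ h1 h2 y h3 h4
  · obtain ⟨τ, y, h1, h2, h3, h4⟩ := BalGray.case_large h hne
    exact BalGray.lift_path τ h1 h2 y h3 h4
end

section
/- For every n ≥ 5, there exists a 2-rainbow cycle in the permutahedron P^adj_n: a cyclically ordered list of pairwise distinct permutations of [n] in which any two cyclically consecutive permutations differ by an adjacent position-swap, and each of the n−1 adjacent position-swaps (i, i+1), i ∈ [n−1], is used exactly 2 times around the cycle. -/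
/-- Product of the adjacent transpositions along a word, acting on `ℕ`. -/
def wordPerm (w : List ℕ) : Equiv.Perm ℕ := (w.map (fun i => Equiv.swap i (i + 1))).prod

theorem wordPerm_nil : wordPerm [] = 1 := rfl

theorem wordPerm_cons (a : ℕ) (w : List ℕ) :
    wordPerm (a :: w) = Equiv.swap a (a + 1) * wordPerm w := by
  simp [wordPerm]

theorem wordPerm_append (v w : List ℕ) : wordPerm (v ++ w) = wordPerm v * wordPerm w := by
  simp [wordPerm]

theorem wordPerm_fix (w : List ℕ) (k : ℕ) (h : ∀ i ∈ w, i + 1 < k) : wordPerm w k = k := by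
  induction w with
  | nil => rfl
  | cons a w ih =>
    have h1 := h a (by simp)
    rw [wordPerm_cons, Equiv.Perm.mul_apply, ih (fun i hi => h i (by simp [hi]))]
    exact Equiv.swap_apply_of_ne_of_ne (by omega) (by omega)

/-- The inductive invariant: `0 :: w` is a rainbow word. -/
structure GoodWord (n : ℕ) (w : List ℕ) : Prop where
  count : ∀ i, (0 :: w).count i = if i + 1 < n then 2 else 0
  closed : wordPerm (0 :: w) = 1
  factor : ∀ a b c, w = a ++ b ++ c → wordPerm b = 1 → b = []
  pre : ∀ b c, w = b ++ c → wordPerm (0 :: b) = 1 → c = []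

theorem GoodWord.lt {n : ℕ} {w : List ℕ} (h : GoodWord n w) (i : ℕ) (hi : i ∈ (0 :: w)) :
    i + 1 < n := by
  have := h.count i
  have h2 := List.count_pos_iff.mpr hi
  by_contra h3
  simp only [h3, if_false] at this
  omega

theorem GoodWord.step {m : ℕ} {w : List ℕ} (hm : 4 ≤ m) (h : GoodWord (m + 1) w) :
    GoodWord (m + 2) (m :: (w ++ [m])) := by
  have hlt : ∀ i ∈ w, i + 1 < m + 1 := fun i hi => h.lt i (by simp [hi])
  have hw : wordPerm w = Equiv.swap 0 1 := by
    have := h.closed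
    rw [wordPerm_cons] at this
    have h2 := eq_inv_of_mul_eq_one_right this
    simpa using h2
  have hcomm : Equiv.swap 0 1 * Equiv.swap m (m + 1) = Equiv.swap m (m + 1) * Equiv.swap 0 1 := by
    apply Equiv.Perm.Disjoint.commute
    intro x
    rcases Nat.lt_or_ge x 2 with hx | hx
    · right; exact Equiv.swap_apply_of_ne_of_ne (by omega) (by omega)
    · left; exact Equiv.swap_apply_of_ne_of_ne (by omega) (by omega)
  have h01 : (Equiv.swap 0 1 : Equiv.Perm ℕ) ≠ 1 := by
    intro h; have := congrArg (fun f => f 0) h; simp at this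
  refine ⟨?_, ?_, ?_, ?_⟩
  · intro i
    have := h.count i
    have e : (0 :: m :: (w ++ [m])).count i = (0 :: w).count i + 2 * (if m = i then 1 else 0) := by
      simp only [List.count_cons, List.count_append, List.count_nil, beq_iff_eq]
      split_ifs <;> omega
    rw [e, this]
    split_ifs <;> omega
  · simp only [wordPerm_cons, wordPerm_append, wordPerm_nil, hw, mul_one, zero_add]
    rw [hcomm]
    simp
  · intro a b c e hb
    rcases List.eq_nil_or_concat c with rfl | ⟨c', z, rfl⟩
    · rcases a with _ | ⟨y, a'⟩
      · exfalso
        simp only [List.nil_append, List.append_nil] at e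
        subst e
        simp only [wordPerm_cons, wordPerm_append, wordPerm_nil, hw, mul_one] at hb
        rw [hcomm, ← mul_assoc] at hb
        simp at hb
      · rcases List.eq_nil_or_concat b with rfl | ⟨b', z, rfl⟩
        · rfl
        · exfalso
          simp only [List.cons_append, List.append_nil, List.cons.injEq, List.concat_eq_append,
            ← List.append_assoc] at e
          obtain ⟨-, e⟩ := e
          obtain ⟨e3, e2⟩ := List.append_inj' e rfl
          simp only [List.cons.injEq, and_true] at e2
          subst e2
          have hf := wordPerm_fix b' (m + 1) (fun i hi => hlt i (by rw [e3]; simp [hi]))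
          have := congrArg (fun f => f m) hb
          simp only [List.concat_eq_append, wordPerm_append, wordPerm_cons, wordPerm_nil, mul_one,
            Equiv.Perm.mul_apply, Equiv.swap_apply_left, hf, Equiv.Perm.one_apply] at this
          omega
    · simp only [List.concat_eq_append, ← List.append_assoc, ← List.cons_append] at e
      obtain ⟨e3, e2⟩ := List.append_inj' e rfl
      rcases a with _ | ⟨y, a'⟩
      · rcases b with _ | ⟨y, b'⟩
        · rfl
        · exfalso
          simp only [List.nil_append, List.cons_append, List.cons.injEq] at e3
          obtain ⟨rfl, e3⟩ := e3
          have hf := wordPerm_fix b' (m + 1) (fun i hi => hlt i (by rw [e3]; simp [hi]))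
          have := congrArg (fun f => f (m + 1)) hb
          simp only [wordPerm_cons, Equiv.Perm.mul_apply, hf, Equiv.swap_apply_right,
            Equiv.Perm.one_apply] at this
          omega
      · simp only [List.cons_append, List.cons.injEq] at e3
        exact h.factor a' b c' e3.2 hb
  · intro b c e hb
    rcases List.eq_nil_or_concat c with rfl | ⟨c', z, rfl⟩
    · rfl
    · exfalso
      simp only [List.concat_eq_append, ← List.append_assoc, ← List.cons_append] at e
      obtain ⟨e3, e2⟩ := List.append_inj' e rfl
      rcases b with _ | ⟨y, b'⟩
      · exact h01 (by simp [wordPerm_cons, wordPerm_nil] at hb)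
      · simp only [List.cons_append, List.cons.injEq] at e3
        obtain ⟨rfl, e3⟩ := e3
        have hf := wordPerm_fix b' (m + 1) (fun i hi => hlt i (by rw [e3]; simp [hi]))
        have := congrArg (fun f => f (m + 1)) hb
        simp only [wordPerm_cons, Equiv.Perm.mul_apply, hf, Equiv.swap_apply_right,
            Equiv.Perm.one_apply] at this
        rw [Equiv.swap_apply_of_ne_of_ne (by omega) (by omega)] at this
        omega

theorem GoodWord.base : GoodWord 5 [1, 3, 1, 2, 0, 2, 3] := by
  refine ⟨?_, ?_, ?_, ?_⟩
  · intro i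
    rcases Nat.lt_or_ge i 4 with hi | hi
    · interval_cases i <;> rfl
    · rw [if_neg (by omega)]
      simp only [List.count_cons, List.count_nil, beq_iff_eq]
      split_ifs <;> omega
  · ext x
    rcases Nat.lt_or_ge x 5 with hi | hi
    · interval_cases x <;> rfl
    · rw [wordPerm_fix _ _ (by simp; omega)]
      rfl
  · intro a b c e hb
    have key : ∀ i ≤ 7, ∀ j ≤ 7,
        (∀ x < 5, wordPerm ((([1, 3, 1, 2, 0, 2, 3] : List ℕ).drop i).take j) x = x) →
          (([1, 3, 1, 2, 0, 2, 3] : List ℕ).drop i).take j = [] := by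
      decide
    have hl := congrArg List.length e
    simp only [List.length_append, List.length_cons, List.length_nil] at hl
    have hb2 : (([1, 3, 1, 2, 0, 2, 3] : List ℕ).drop a.length).take b.length = b := by
      rw [e]; simp
    have := key a.length (by omega) b.length (by omega)
    rw [hb2] at this
    exact this (fun x _ => by rw [hb]; rfl)
  · intro b c e hb
    have key : ∀ j < 7,
        ¬ (∀ x < 5, wordPerm (0 :: ([1, 3, 1, 2, 0, 2, 3] : List ℕ).take j) x = x) := by
      decide
    have hl := congrArg List.length e
    simp only [List.length_append, List.length_cons, List.length_nil] at hl
    have hb2 : ([1, 3, 1, 2, 0, 2, 3] : List ℕ).take b.length = b := by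
      rw [e]; simp
    by_contra hc
    have hc2 := List.length_pos_iff.mpr hc
    have := key b.length (by omega)
    rw [hb2] at this
    exact this (fun x _ => by rw [hb]; rfl)

theorem GoodWord.exists (n : ℕ) (hn : 5 ≤ n) : ∃ w, GoodWord n w := by
  induction n, hn using Nat.le_induction with
  | base => exact ⟨_, GoodWord.base⟩
  | succ n hn ih =>
    obtain ⟨w, hw⟩ := ih
    obtain ⟨m, rfl⟩ : ∃ m, n = m + 1 := ⟨n - 1, by omega⟩
    exact ⟨_, hw.step (by omega)⟩

theorem GoodWord.prefix_ne {n : ℕ} {w : List ℕ} (h : GoodWord n w) (i j : ℕ) (hij : i < j)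
    (hj : j < w.length + 1) :
    wordPerm ((0 :: w).take i) ≠ wordPerm ((0 :: w).take j) := by
  intro he
  have e1 : (0 :: w).take j = (0 :: w).take i ++ ((0 :: w).drop i).take (j - i) := by
    rw [← List.take_add]; congr 1; omega
  rw [e1, wordPerm_append] at he
  have he2 := (left_eq_mul.mp he)
  rcases i with _ | i
  · obtain ⟨k, rfl⟩ : ∃ k, j = k + 1 := ⟨j - 1, by omega⟩
    have := h.pre (w.take k) (w.drop k) (by simp) (by simpa using he2)
    have := congrArg List.length this
    simp at this
    omega
  · have := h.factor (w.take i) ((w.drop i).take (j - (i + 1))) ((w.drop i).drop (j - (i + 1)))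
      (by rw [List.append_assoc, List.take_append_drop, List.take_append_drop]) (by simpa using he2)
    have := congrArg List.length this
    simp at this
    omega


/-- For every `n ≥ 5` there is a 2-rainbow cycle in the permutahedron
`P^adj_n`: a cyclically indexed family `π : Fin (N+1) → Perm (Fin n)` of pairwise
distinct permutations in which any two cyclically consecutive permutations differ by
an adjacent position-swap (`π (s+1) = π s * swap i (i+1)`), and each of the `n−1`
adjacent position-swaps is used exactly `2` times around the cycle. -/
theorem two_rainbow_cycle_permutahedron (n : ℕ) (hn : 5 ≤ n) :
    ∃ (N : ℕ) (π : Fin (N + 1) → Equiv.Perm (Fin n)),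
      Function.Injective π ∧
      (∀ s : Fin (N + 1), ∃ i : ℕ, ∃ h : i + 1 < n,
        π (s + 1) = π s * Equiv.swap ⟨i, by omega⟩ ⟨i + 1, h⟩) ∧
      (∀ i : ℕ, ∀ h : i + 1 < n,
        (Finset.univ.filter (fun s : Fin (N + 1) =>
          π (s + 1) = π s * Equiv.swap ⟨i, by omega⟩ ⟨i + 1, h⟩)).card = 2) := by
  obtain ⟨w, hw⟩ := GoodWord.exists n hn
  let sw : ℕ → Equiv.Perm (Fin n) := fun i =>
    if h : i + 1 < n then Equiv.swap ⟨i, by omega⟩ ⟨i + 1, h⟩ else 1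
  have hsw : ∀ i (h : i + 1 < n), sw i = Equiv.swap ⟨i, by omega⟩ ⟨i + 1, h⟩ :=
    fun i h => dif_pos h
  have hswinj : ∀ i j, i + 1 < n → j + 1 < n → sw i = sw j → i = j := by
    intro i j hi hj e
    rw [hsw i hi, hsw j hj] at e
    have h1 := congrArg (fun f => (f ⟨i, by omega⟩ : Fin n).val) e
    have h2 := congrArg (fun f => (f ⟨j, by omega⟩ : Fin n).val) e
    simp only [Equiv.swap_apply_def, Fin.mk.injEq] at h1 h2
    split_ifs at h1 h2 <;> simp at h1 h2 <;> omega
  let P : List ℕ → Equiv.Perm (Fin n) := fun l => (l.map sw).prod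
  have hP : ∀ l : List ℕ, (∀ i ∈ l, i + 1 < n) → ∀ x : Fin n, (P l x : ℕ) = wordPerm l x := by
    intro l
    induction l with
    | nil => intro _ x; rfl
    | cons a l ih =>
      intro hl x
      have h1 := hl a (by simp)
      have h2 := ih (fun i hi => hl i (by simp [hi])) x
      have h3 : P (a :: l) = sw a * P l := by simp [P]
      rw [h3, wordPerm_cons, hsw a h1, Equiv.Perm.mul_apply, Equiv.Perm.mul_apply, ← h2]
      simp only [Equiv.swap_apply_def, Fin.ext_iff]
      split_ifs <;> simp
  have hPinj : ∀ l l' : List ℕ, (∀ i ∈ l, i + 1 < n) → (∀ i ∈ l', i + 1 < n) → P l = P l' →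
      wordPerm l = wordPerm l' := by
    intro l l' hl hl' e
    ext x
    by_cases hx : x < n
    · rw [← hP l hl ⟨x, hx⟩, ← hP l' hl' ⟨x, hx⟩, e]
    · rw [wordPerm_fix l x (fun i hi => by have := hl i hi; omega),
        wordPerm_fix l' x (fun i hi => by have := hl' i hi; omega)]
  have htake : ∀ k, ∀ i ∈ (0 :: w).take k, i + 1 < n :=
    fun k i hi => hw.lt i (List.mem_of_mem_take hi)
  have hclosed : P (0 :: w) = 1 := by
    ext x
    rw [hP _ (fun i hi => hw.lt i hi), hw.closed]
    rfl
  let N := w.length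
  let π : Fin (N + 1) → Equiv.Perm (Fin n) := fun s => P ((0 :: w).take s)
  have hstep : ∀ s : Fin (N + 1), π (s + 1) = π s * sw ((0 :: w).get s) := by
    intro s
    have e : P ((0 :: w).take (s + 1)) = π s * sw ((0 :: w).get s) := by
      have hs : (s : ℕ) < (0 :: w).length := s.2
      rw [List.take_succ_eq_append_getElem hs]
      simp only [P, π, List.map_append, List.prod_append, List.map_cons, List.map_nil,
        List.prod_cons, List.prod_nil, mul_one, List.get_eq_getElem]
    rw [← e]
    by_cases hs : (s : ℕ) = N
    · have : s = Fin.last N := Fin.ext hs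
      subst this
      have h1 : P ((0 :: w).take (N + 1)) = 1 := by
        rw [List.take_of_length_le (by simp [N]), hclosed]
      rw [Fin.last_add_one, Fin.val_last, h1]
      simp [π, P]
    · have : ((s + 1 : Fin (N + 1)) : ℕ) = s + 1 :=
        Fin.val_add_one_of_lt (by rw [Fin.lt_def, Fin.val_last]; have := s.2; omega)
      simp only [π, this]
  have hget : ∀ s : Fin (N + 1), (0 :: w).get s + 1 < n := fun s => hw.lt _ (List.get_mem _ _)
  refine ⟨N, π, ?_, ?_, ?_⟩
  · intro s t e
    have e2 := hPinj _ _ (htake s) (htake t) e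
    rcases lt_trichotomy (s : ℕ) t with h | h | h
    · exact absurd e2 (hw.prefix_ne _ _ h t.2)
    · exact Fin.ext h
    · exact absurd e2.symm (hw.prefix_ne _ _ h s.2)
  · intro s
    exact ⟨_, hget s, by rw [hstep, hsw _ (hget s)]⟩
  · intro i h
    have hc := hw.count i
    rw [if_pos h] at hc
    have hv := Fin.card_filter_univ_eq_vector_get_eq_count i
      (⟨0 :: w, rfl⟩ : List.Vector ℕ (N + 1))
    have hv2 : (List.Vector.toList (⟨0 :: w, rfl⟩ : List.Vector ℕ (N + 1))).count i = 2 := hc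
    rw [hv2] at hv
    rw [← hv]
    congr 1
    ext s
    simp only [Finset.mem_filter, Finset.mem_univ, true_and]
    rw [hstep, ← hsw i h, mul_right_inj]
    constructor
    · intro e
      exact hswinj _ _ (hget s) h e
    · intro e
      exact congrArg sw e
end

section
/- For every odd n ≥ 3, there exists a 3-rainbow cycle in the permutahedron P^adj_n: a cyclically ordered list of pairwise distinct permutations of [n] in which any two cyclically consecutive permutations differ by an adjacent position-swap, and each of the n−1 adjacent position-swaps (i, i+1), i ∈ [n−1], is used exactly 3 times around the cycle. -/
/-- The adjacent transposition of positions `i, i+1`, as a permutation of `ℕ`. -/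
def adjSwap (i : ℕ) : Equiv.Perm ℕ := Equiv.swap i (i + 1)

/-- Vertices visited when reading the word from `g` (the final endpoint is omitted). -/
def wordVerts (g : Equiv.Perm ℕ) : List ℕ → List (Equiv.Perm ℕ)
  | [] => []
  | i :: l => g :: wordVerts (g * adjSwap i) l

/-- Product of the adjacent transpositions of a word. -/
def wordProd (l : List ℕ) : Equiv.Perm ℕ := (l.map adjSwap).prod

theorem wordProd_cons (i : ℕ) (l : List ℕ) : wordProd (i :: l) = adjSwap i * wordProd l := by
  simp [wordProd]

theorem wordProd_append (l l' : List ℕ) : wordProd (l ++ l') = wordProd l * wordProd l' := by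
  simp [wordProd]

theorem wordVerts_append (l l' : List ℕ) : ∀ g, wordVerts g (l ++ l') =
    wordVerts g l ++ wordVerts (g * wordProd l) l' := by
  induction l with
  | nil => intro g; simp [wordVerts, wordProd]
  | cons i l ih => intro g; simp [wordVerts, ih, wordProd_cons, mul_assoc]

theorem wordVerts_length (l : List ℕ) : ∀ g, (wordVerts g l).length = l.length := by
  induction l with
  | nil => intro g; simp [wordVerts]
  | cons i l ih => intro g; simp [wordVerts, ih]

theorem wordVerts_getElem (l : List ℕ) : ∀ g (k : ℕ) (h : k < (wordVerts g l).length),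
    (wordVerts g l)[k] = g * wordProd (l.take k) := by
  induction l with
  | nil => intro g k h; simp [wordVerts] at h
  | cons i l ih =>
    intro g k h
    cases k with
    | zero => simp [wordVerts, wordProd]
    | succ k => simp [wordVerts, ih, wordProd_cons, mul_assoc]

theorem adjSwap_sq (i : ℕ) : adjSwap i * adjSwap i = 1 := by simp [adjSwap]

theorem adjSwap_comm (i c : ℕ) (h : i + 1 < c) : adjSwap i * adjSwap c = adjSwap c * adjSwap i := by
  ext x; simp only [adjSwap, Equiv.Perm.mul_apply, Equiv.swap_apply_def]; grind

theorem adjSwap_braid (b : ℕ) : adjSwap b * adjSwap (b + 1) * adjSwap b * adjSwap (b + 1) * adjSwap b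
    = adjSwap (b + 1) := by
  ext x; simp only [adjSwap, Equiv.Perm.mul_apply, Equiv.swap_apply_def]; grind

theorem adjSwap_fix (i x : ℕ) (h : i + 1 < x) : adjSwap i x = x := by
  simp only [adjSwap, Equiv.swap_apply_def]; grind

theorem wordVerts_comm (c : ℕ) (l : List ℕ) (hl : ∀ i ∈ l, i + 1 < c) : ∀ g,
    wordVerts (g * adjSwap c) l = (wordVerts g l).map (· * adjSwap c) := by
  induction l with
  | nil => intro g; simp [wordVerts]
  | cons i l ih =>
    intro g
    simp only [wordVerts, List.map_cons]
    rw [← ih (fun j hj => hl j (by simp [hj])), mul_assoc, mul_assoc,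
      adjSwap_comm i c (hl i (by simp))]

theorem wordVerts_fix (x : ℕ) (l : List ℕ) (hl : ∀ i ∈ l, i + 1 < x) : ∀ g : Equiv.Perm ℕ, g x = x →
    ∀ v ∈ wordVerts g l, v x = x := by
  induction l with
  | nil => intro g _ v hv; simp [wordVerts] at hv
  | cons i l ih =>
    intro g hg v hv
    simp only [wordVerts, List.mem_cons] at hv
    rcases hv with rfl | hv
    · exact hg
    · refine ih (fun j hj => hl j (by simp [hj])) _ ?_ v hv
      rw [Equiv.Perm.mul_apply, adjSwap_fix i x (hl i (by simp)), hg]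

theorem wordProd_comm (c : ℕ) (l : List ℕ) (hl : ∀ i ∈ l, i + 1 < c) :
    adjSwap c * wordProd l = wordProd l * adjSwap c := by
  induction l with
  | nil => simp [wordProd]
  | cons i l ih =>
    rw [wordProd_cons, ← mul_assoc, ← adjSwap_comm i c (hl i (by simp)), mul_assoc,
      ih (fun j hj => hl j (by simp [hj])), mul_assoc]

/-- `0 :: T` is the word of a 3-rainbow cycle on `m` positions. -/
structure RainbowWord (m : ℕ) (T : List ℕ) : Prop where
  bound : ∀ i ∈ 0 :: T, i + 1 < m
  count : ∀ i, i + 1 < m → (0 :: T).count i = 3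
  prod : wordProd (0 :: T) = 1
  nodup : (wordVerts 1 (0 :: T)).Nodup

theorem rainbowWord_three : RainbowWord 3 [1, 0, 1, 0, 1] where
  bound := by decide
  count := by
    intro i hi
    have : i = 0 ∨ i = 1 := by omega
    rcases this with rfl | rfl <;> decide
  prod := by
    ext x
    simp only [wordProd, List.map_cons, List.map_nil, List.prod_cons, List.prod_nil, adjSwap,
      Equiv.Perm.mul_apply, Equiv.swap_apply_def, Equiv.Perm.one_apply]
    grind
  nodup := by
    apply List.Nodup.of_map (fun g : Equiv.Perm ℕ => (g 0, g 1, g 2))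
    decide

theorem rainbowWord_step (b : ℕ) (hb : 2 ≤ b) (T : List ℕ) (h : RainbowWord (b + 1) T) :
    RainbowWord (b + 3) (b :: (b + 1) :: b :: (b + 1) :: b :: (T ++ [b + 1])) where
  bound := by
    intro i hi
    have := h.bound i
    simp only [List.mem_cons, List.mem_append, List.not_mem_nil, or_false] at hi this
    grind
  count := by
    intro i hi
    have h1 := h.count i
    have h2 : b ≤ i → (0 :: T).count i = 0 := by
      intro hbi
      rw [List.count_eq_zero]
      intro hm
      have := h.bound i hm
      omega
    simp only [List.count_cons, List.count_append, List.count_nil, beq_iff_eq] at h1 h2 ⊢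
    grind
  prod := by
    have hc := wordProd_comm (b + 1) T (fun i hi => by have := h.bound i (by simp [hi]); omega)
    have hp := h.prod
    have hbr := adjSwap_braid b
    simp only [wordProd_cons, wordProd_append] at hp ⊢
    have : wordProd [] = 1 := rfl
    rw [this, mul_one]
    calc _ = adjSwap 0 * ((adjSwap b * adjSwap (b + 1) * adjSwap b * adjSwap (b + 1) * adjSwap b)
              * wordProd T) * adjSwap (b + 1) := by simp only [mul_assoc]
      _ = (adjSwap 0 * wordProd T) * (adjSwap (b + 1) * adjSwap (b + 1)) := by
          rw [hbr, hc]; simp only [mul_assoc]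
      _ = 1 := by rw [hp, adjSwap_sq, one_mul]
  nodup := by
    have hT : ∀ i ∈ T, i + 1 < b + 1 := fun i hi => h.bound i (by simp [hi])
    have hp := h.prod
    have hn := h.nodup
    have hc := wordProd_comm (b + 1) T (fun i hi => by have := hT i hi; omega)
    rw [wordProd_cons] at hp
    simp only [wordVerts, one_mul] at hn
    -- the second half of the cycle
    have key : wordVerts (adjSwap 0 * adjSwap (b + 1)) (T ++ [b + 1]) =
        (wordVerts (adjSwap 0) T ++ [1]).map (· * adjSwap (b + 1)) := by
      rw [wordVerts_append, wordVerts_comm (b + 1) T (fun i hi => by have := hT i hi; omega),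
        List.map_append, mul_assoc, hc, ← mul_assoc, hp]
      simp [wordVerts]
    have e0 : ∀ x, 2 ≤ x → adjSwap 0 x = x := fun x hx => adjSwap_fix 0 x (by omega)
    have split : wordVerts 1 (0 :: b :: (b + 1) :: b :: (b + 1) :: b :: (T ++ [b + 1])) =
        [1, adjSwap 0, adjSwap 0 * adjSwap b, adjSwap 0 * adjSwap b * adjSwap (b + 1),
          adjSwap 0 * adjSwap b * adjSwap (b + 1) * adjSwap b,
          adjSwap 0 * adjSwap b * adjSwap (b + 1) * adjSwap b * adjSwap (b + 1)] ++
        (wordVerts (adjSwap 0) T ++ [1]).map (· * adjSwap (b + 1)) := by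
      rw [← key]
      have : adjSwap 0 * adjSwap b * adjSwap (b + 1) * adjSwap b * adjSwap (b + 1) * adjSwap b =
        adjSwap 0 * adjSwap (b + 1) := by
        conv_rhs => rw [← adjSwap_braid b]
        simp only [mul_assoc]
      simp [wordVerts, this]
    have s1 : adjSwap b b = b + 1 := by simp [adjSwap]
    have s2 : adjSwap b (b + 1) = b := by simp [adjSwap]
    have s3 : adjSwap b (b + 2) = b + 2 := adjSwap_fix _ _ (by omega)
    have s4 : adjSwap (b + 1) b = b := by
      simp only [adjSwap]; exact Equiv.swap_apply_of_ne_of_ne (by omega) (by omega)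
    have s5 : adjSwap (b + 1) (b + 1) = b + 2 := by simp [adjSwap]
    have s6 : adjSwap (b + 1) (b + 2) = b + 1 := by simp [adjSwap]
    have z1 := e0 b hb
    have z2 := e0 (b + 1) (by omega)
    have z3 := e0 (b + 2) (by omega)
    have fixes : ∀ x, b < x → ∀ v ∈ wordVerts (adjSwap 0) T ++ [1], v x = x := by
      intro x hx v hv
      rw [List.mem_append, List.mem_singleton] at hv
      rcases hv with hv | rfl
      · exact wordVerts_fix x T (fun i hi => by have := hT i hi; omega) _ (e0 x (by omega)) v hv
      · rfl
    rw [split, List.nodup_append]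
    refine ⟨?_, ?_, ?_⟩
    · have hne : (1 : Equiv.Perm ℕ) ≠ adjSwap 0 := by
        intro hh
        have := congrArg (fun g : Equiv.Perm ℕ => g 0) hh
        simp [adjSwap] at this
      rw [List.nodup_cons]
      constructor
      · simp only [List.mem_cons, List.not_mem_nil, or_false, not_or]
        refine ⟨hne, ?_, ?_, ?_, ?_⟩ <;> intro hh <;>
        · have t1 := congrArg (fun g : Equiv.Perm ℕ => g (b + 1)) hh
          have t2 := congrArg (fun g : Equiv.Perm ℕ => g (b + 2)) hh
          simp only [Equiv.Perm.mul_apply, Equiv.Perm.one_apply, s1, s2, s3, s4, s5, s6, z1, z2, z3]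
            at t1 t2
          omega
      · apply List.Nodup.of_map (fun g : Equiv.Perm ℕ => (g (b + 1), g (b + 2)))
        simp [Equiv.Perm.mul_apply, s1, s2, s3, s4, s5, s6, z1, z2, z3]
    · apply List.Nodup.map (mul_left_injective _)
      rw [List.nodup_append_comm]
      exact hn
    · intro u hu v hv huv
      subst huv
      rw [List.mem_map] at hv
      obtain ⟨g, hg, hgu⟩ := hv
      have f1 : u (b + 1) = b + 2 := by
        rw [← hgu, Equiv.Perm.mul_apply, s5]; exact fixes _ (by omega) g hg
      have f2 : u (b + 2) = b + 1 := by
        rw [← hgu, Equiv.Perm.mul_apply, s6]; exact fixes _ (by omega) g hg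
      simp only [List.mem_cons, List.not_mem_nil, or_false] at hu
      rcases hu with rfl | rfl | rfl | rfl | rfl | rfl <;>
      · simp only [Equiv.Perm.mul_apply, Equiv.Perm.one_apply, s1, s2, s3, s4, s5, s6, z1, z2, z3]
          at f1 f2
        omega

theorem exists_rainbowWord (k : ℕ) : ∃ T, RainbowWord (2 * k + 3) T := by
  induction k with
  | zero => exact ⟨_, rainbowWord_three⟩
  | succ k ih =>
    obtain ⟨T, hT⟩ := ih
    exact ⟨_, rainbowWord_step (2 * k + 2) (by omega) T hT⟩

/-- The adjacent transposition on `Fin n`, trivial when out of range. -/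
def finSwap (n i : ℕ) : Equiv.Perm (Fin n) :=
  if h : i + 1 < n then Equiv.swap ⟨i, Nat.lt_of_succ_lt h⟩ ⟨i + 1, h⟩ else 1

theorem viaEmbedding_finSwap (n i : ℕ) (h : i + 1 < n) :
    Equiv.Perm.viaEmbeddingHom (Fin.valEmbedding : Fin n ↪ ℕ) (finSwap n i) = adjSwap i := by
  ext x
  rw [Equiv.Perm.viaEmbeddingHom_apply]
  by_cases hx : x < n
  · have := Equiv.Perm.viaEmbedding_apply (finSwap n i) (Fin.valEmbedding : Fin n ↪ ℕ) ⟨x, hx⟩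
    simp only [Fin.valEmbedding_apply] at this
    rw [this]
    simp only [finSwap, h, dif_pos, adjSwap, Equiv.swap_apply_def, Fin.mk.injEq]
    split_ifs <;> rfl
  · rw [Equiv.Perm.viaEmbedding_apply_of_notMem, adjSwap_fix i x (by omega)]
    rintro ⟨y, rfl⟩
    exact hx y.2

theorem viaEmbedding_prod (n : ℕ) (l : List ℕ) (hl : ∀ i ∈ l, i + 1 < n) :
    Equiv.Perm.viaEmbeddingHom (Fin.valEmbedding : Fin n ↪ ℕ) (l.map (finSwap n)).prod
      = wordProd l := by
  induction l with
  | nil => simp [wordProd]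
  | cons i l ih =>
    rw [List.map_cons, List.prod_cons, map_mul, viaEmbedding_finSwap n i (hl i (by simp)),
      ih (fun j hj => hl j (by simp [hj])), wordProd_cons]


/-- For every odd `n ≥ 3` there is a 3-rainbow cycle in the permutahedron
`P^adj_n`: a cyclically indexed family `π : Fin (N+1) → Perm (Fin n)` of pairwise
distinct permutations in which any two cyclically consecutive permutations differ by
an adjacent position-swap (`π (s+1) = π s * swap i (i+1)`), and each of the `n−1`
adjacent position-swaps is used exactly `3` times around the cycle. -/
theorem three_rainbow_cycle_permutahedron (n : ℕ) (hn : 3 ≤ n) (hodd : Odd n) :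
    ∃ (N : ℕ) (π : Fin (N + 1) → Equiv.Perm (Fin n)),
      Function.Injective π ∧
      (∀ s : Fin (N + 1), ∃ i : ℕ, ∃ h : i + 1 < n,
        π (s + 1) = π s * Equiv.swap ⟨i, by omega⟩ ⟨i + 1, h⟩) ∧
      (∀ i : ℕ, ∀ h : i + 1 < n,
        (Finset.univ.filter (fun s : Fin (N + 1) =>
          π (s + 1) = π s * Equiv.swap ⟨i, by omega⟩ ⟨i + 1, h⟩)).card = 3) := by
  obtain ⟨k, rfl⟩ : ∃ k, n = 2 * k + 3 := by
    obtain ⟨r, hr⟩ := hodd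
    exact ⟨r - 1, by omega⟩
  obtain ⟨T, hT⟩ := exists_rainbowWord k
  set n := 2 * k + 3 with hn'
  have hlen : (0 :: T).length = T.length + 1 := rfl
  have hb := hT.bound
  have hc := hT.count
  have hp := hT.prod
  have hnd := hT.nodup
  generalize (0 :: T) = W at *
  generalize T.length = N at *
  have hφ := Equiv.Perm.viaEmbeddingHom_injective (Fin.valEmbedding : Fin n ↪ ℕ)
  have htake : ∀ j, ∀ i ∈ W.take j, i + 1 < n := fun j i hi => hb i (List.mem_of_mem_take hi)
  have hprod : (W.map (finSwap n)).prod = 1 := by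
    apply hφ
    rw [viaEmbedding_prod n W hb, hp, map_one]
  have hswap : ∀ i (h : i + 1 < n), Equiv.swap (⟨i, by omega⟩ : Fin n) ⟨i + 1, h⟩ = finSwap n i := by
    intro i h; simp [finSwap, h]
  have hinj : ∀ i j, i + 1 < n → j + 1 < n → finSwap n i = finSwap n j → i = j := by
    intro i j hi hj hij
    have := congrArg (Equiv.Perm.viaEmbeddingHom (Fin.valEmbedding : Fin n ↪ ℕ)) hij
    rw [viaEmbedding_finSwap n i hi, viaEmbedding_finSwap n j hj] at this
    have t1 := congrArg (fun g : Equiv.Perm ℕ => g i) this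
    have t2 := congrArg (fun g : Equiv.Perm ℕ => g j) this
    simp only [adjSwap, Equiv.swap_apply_def] at t1 t2
    grind
  let π : Fin (N + 1) → Equiv.Perm (Fin n) := fun s => ((W.take s.1).map (finSwap n)).prod
  have hstep : ∀ s : Fin (N + 1), π (s + 1) = π s * finSwap n (W[s.1]'(by omega)) := by
    intro s
    have h1 : π s * finSwap n (W[s.1]'(by omega)) = ((W.take (s.1 + 1)).map (finSwap n)).prod := by
      rw [List.take_succ_eq_append_getElem (by omega), List.map_append, List.prod_append]
      simp only [π, List.map_cons, List.map_nil, List.prod_cons, List.prod_nil, mul_one]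
    rw [h1]
    by_cases hs : s = Fin.last N
    · subst hs
      rw [Fin.last_add_one, List.take_of_length_le (by simp; omega), hprod]
      simp [π]
    · have : ((s + 1 : Fin (N + 1)) : ℕ) = s.1 + 1 := by
        rw [Fin.val_add_one, if_neg hs]
      simp only [π, this]
  refine ⟨N, π, ?_, ?_, ?_⟩
  · intro s t hst
    have := congrArg (Equiv.Perm.viaEmbeddingHom (Fin.valEmbedding : Fin n ↪ ℕ)) hst
    simp only [π] at this
    rw [viaEmbedding_prod n _ (htake _), viaEmbedding_prod n _ (htake _)] at this
    have ls : s.1 < (wordVerts 1 W).length := by rw [wordVerts_length]; omega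
    have lt : t.1 < (wordVerts 1 W).length := by rw [wordVerts_length]; omega
    have h2 : (wordVerts 1 W)[s.1] = (wordVerts 1 W)[t.1] := by
      rw [wordVerts_getElem, wordVerts_getElem, this]
    exact Fin.ext ((hnd.getElem_inj_iff).1 h2)
  · intro s
    have hlt := hb (W[s.1]'(by omega)) (List.getElem_mem _)
    exact ⟨W[s.1]'(by omega), hlt, by rw [hswap, hstep]⟩
  · intro i h
    rw [← hc i h]
    have hf : ∀ s : Fin (N + 1), (π (s + 1) = π s * Equiv.swap ⟨i, by omega⟩ ⟨i + 1, h⟩) ↔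
        W[s.1]'(by omega) = i := by
      intro s
      rw [hswap i h, hstep, mul_right_inj]
      constructor
      · exact hinj _ _ (hb _ (List.getElem_mem _)) h
      · intro hh; rw [hh]
    simp only [hf]
    have := Fin.card_filter_univ_eq_vector_get_eq_count i (⟨W, hlen⟩ : List.Vector ℕ (N + 1))
    exact this
end

section
/- Let n ≥ 3 be odd. Suppose there exists a balanced cyclic Gray code for S_n under all transpositions from 12⋯(n−1)n to 12⋯n(n−1) whose closing transposition is (n−1, n). Then there exists an almost balanced Gray code L for S_{n+1} from the word 12⋯(n+1) to the word 23⋯(n+1)1, i.e., a Gray code for S_{n+1} in which every wide transposition on [n+1] is applied exactly 2(n−1)! times. -/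
/-- A balanced cyclic Gray code for `S_n` under all transpositions: a cyclic listing
`π : Fin (N+1) → Perm (Fin n)` of all `n!` permutations of `[n]`, each appearing exactly
once, in which any two cyclically consecutive permutations differ by applying a
transposition, and each of the `n(n−1)/2` transpositions is applied exactly `2·(n−2)!`
times along the cycle. -/
def IsBalancedCyclicGrayCode (n N : ℕ) (π : Fin (N + 1) → Equiv.Perm (Fin n)) : Prop :=
  N + 1 = Nat.factorial n ∧
  Function.Bijective π ∧
  (∀ s : Fin (N + 1), ∃ i j : Fin n, i ≠ j ∧ π (s + 1) = Equiv.swap i j * π s) ∧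
  (∀ i j : Fin n, i ≠ j →
    (Finset.univ.filter (fun s : Fin (N + 1) =>
      π (s + 1) = Equiv.swap i j * π s)).card = 2 * Nat.factorial (n - 2))

/-- An embedding of `Fin n` into `Fin (n+1)` avoiding `k` with two prescribed values. -/
theorem gc_exists_emb (n : ℕ) (p q : Fin n) (hpq : p ≠ q) (k a b : Fin (n + 1))
    (hab : a ≠ b) (hak : a ≠ k) (hbk : b ≠ k) :
    ∃ e : Fin n ↪ Fin (n + 1), (∀ y, y ≠ k ↔ ∃ x, e x = y) ∧ e p = a ∧ e q = b := by
  obtain ⟨x, rfl⟩ := Fin.exists_succAbove_eq hak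
  obtain ⟨y, rfl⟩ := Fin.exists_succAbove_eq hbk
  have hxy : x ≠ y := fun h => hab (by rw [h])
  let g1 : Equiv.Perm (Fin n) := Equiv.swap p x
  have h1 : g1 p = x := Equiv.swap_apply_left _ _
  have h2 : g1 q ≠ x := fun h => hpq (g1.injective (h1.trans h.symm))
  let g : Equiv.Perm (Fin n) := Equiv.swap (g1 q) y * g1
  have hg1 : g p = x := by
    simp only [g, Equiv.Perm.mul_apply, h1]
    exact Equiv.swap_apply_of_ne_of_ne h2.symm hxy
  have hg2 : g q = y := by
    simp only [g, Equiv.Perm.mul_apply]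
    exact Equiv.swap_apply_left _ _
  refine ⟨g.toEmbedding.trans (Fin.succAboveEmb k), ?_, ?_, ?_⟩
  · intro z
    constructor
    · intro hz
      obtain ⟨w, rfl⟩ := Fin.exists_succAbove_eq hz
      exact ⟨g.symm w, by simp⟩
    · rintro ⟨w, rfl⟩
      simpa using Fin.succAbove_ne k (g w)
  · simp [hg1]
  · simp [hg2]

theorem gc_via_swap {α β : Type*} [DecidableEq α] [DecidableEq β] (e : α ↪ β) (i j : α) :
    Equiv.Perm.viaEmbeddingHom e (Equiv.swap i j) = Equiv.swap (e i) (e j) := by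
  ext y
  rw [Equiv.Perm.viaEmbeddingHom_apply]
  by_cases hy : y ∈ Set.range e
  · obtain ⟨x, rfl⟩ := hy
    rw [Equiv.Perm.viaEmbedding_apply, e.injective.map_swap]
  · rw [Equiv.Perm.viaEmbedding_apply_of_notMem _ _ _ hy, Equiv.swap_apply_of_ne_of_ne]
    · rintro rfl; exact hy ⟨_, rfl⟩
    · rintro rfl; exact hy ⟨_, rfl⟩

theorem gc_swap_eq {α : Type*} [DecidableEq α] {a b c d : α} (hab : a ≠ b)
    (h : Equiv.swap a b = Equiv.swap c d) : (a = c ∧ b = d) ∨ (a = d ∧ b = c) := by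
  have h1 : Equiv.swap c d a = b := by rw [← h]; simp
  have h2 : Equiv.swap c d b = a := by rw [← h]; simp
  by_cases hac : a = c
  · subst hac; left; simpa using h1.symm
  · by_cases had : a = d
    · subst had; right; simpa using h1.symm
    · rw [Equiv.swap_apply_of_ne_of_ne hac had] at h1; exact absurd h1 hab

/-- Products of adjacent transpositions `(n-b, n-b+1) ⋯ (n-1, n)`. -/
def gcC (n : ℕ) : ℕ → Equiv.Perm (Fin (n + 1))
  | 0 => 1
  | b + 1 => Equiv.swap (Fin.ofNat (n + 1) (n - b)) (Fin.ofNat (n + 1) (n - (b + 1))) * gcC n b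

theorem gcC_val (n b : ℕ) (hb : b ≤ n) (i : Fin (n + 1)) :
    (gcC n b i : ℕ) = if (i : ℕ) < n - b then (i : ℕ) else if (i : ℕ) < n then i + 1 else n - b := by
  induction b with
  | zero => have := i.2; simp only [gcC, Equiv.Perm.one_apply]; grind
  | succ b ih =>
    have ih := ih (by omega)
    have := i.2
    simp only [gcC, Equiv.Perm.mul_apply, Equiv.swap_apply_def, Fin.ext_iff]
    have e1 : ((Fin.ofNat (n + 1) (n - b) : Fin (n + 1)) : ℕ) = n - b := by
      simp [Fin.ofNat]
    have e2 : ((Fin.ofNat (n + 1) (n - (b + 1)) : Fin (n + 1)) : ℕ) = n - (b + 1) := by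
      simp [Fin.ofNat]
    rw [e1, e2, ih]
    split_ifs <;> first | omega | (simp only [e1, e2, ih]; split_ifs <;> omega)

theorem gcC_last (n : ℕ) : gcC n n = finRotate (n + 1) := by
  ext i
  rw [gcC_val n n le_rfl]
  by_cases h : i = Fin.last n
  · subst h; simp
  · have h' : (i : ℕ) < n := Fin.val_lt_last h
    rw [coe_finRotate_of_ne_last h]; simp [h']

theorem gc_count_blocks (P : ℕ → Prop) [DecidablePred P] (L m : ℕ) :
    Nat.count P (m * L) = ∑ b ∈ Finset.range m, Nat.count (fun r => P (b * L + r)) L := by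
  induction m with
  | zero => simp
  | succ m ih => rw [Nat.succ_mul, Nat.count_add, ih, Finset.sum_range_succ]

theorem gc_card_fin (P : ℕ → Prop) [DecidablePred P] (m : ℕ) :
    (Finset.univ.filter (fun s : Fin m => P s)).card = Nat.count P m := by
  rw [Nat.count_eq_card_filter_range]
  apply Finset.card_bij (fun (s : Fin m) _ => (s : ℕ))
  · intro a ha; simpa using ha
  · intro a _ b _ h; exact Fin.ext h
  · intro b hb
    simp only [Finset.mem_filter, Finset.mem_range] at hb
    exact ⟨⟨b, hb.1⟩, by simpa using hb.2, rfl⟩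

/-- Let `n ≥ 3` be odd. If `S_n` has a balanced cyclic Gray code under all
transpositions from `12⋯(n−1)n` to `12⋯n(n−1)` with closing transposition `(n−1, n)`,
then `S_{n+1}` has an almost balanced Gray code `L` from the word `12⋯(n+1)` (the
identity) to the word `23⋯(n+1)1` (the rotation `finRotate (n+1)`): a (non-cyclic)
listing of all `(n+1)!` permutations, each exactly once, consecutive ones differing by
applying a transposition, in which every wide transposition (`|i−j| ≠ 1`) on `[n+1]` is
applied exactly `2·(n−1)!` times. -/
theorem almost_balanced_gray_code_succ (n : ℕ) (hn : 3 ≤ n) (hodd : Odd n)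
    (h : ∃ (N : ℕ) (π : Fin (N + 1) → Equiv.Perm (Fin n)),
      IsBalancedCyclicGrayCode n N π ∧
      π 0 = 1 ∧
      π (Fin.last N) = Equiv.swap ⟨n - 2, by omega⟩ ⟨n - 1, by omega⟩ ∧
      π 0 = Equiv.swap ⟨n - 2, by omega⟩ ⟨n - 1, by omega⟩ * π (Fin.last N)) :
    ∃ (M : ℕ) (ρ : Fin (M + 1) → Equiv.Perm (Fin (n + 1))),
      M + 1 = Nat.factorial (n + 1) ∧
      Function.Bijective ρ ∧
      ρ 0 = 1 ∧
      ρ (Fin.last M) = finRotate (n + 1) ∧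
      (∀ s : Fin (M + 1), (s : ℕ) < M →
        ∃ i j : Fin (n + 1), i ≠ j ∧ ρ (s + 1) = Equiv.swap i j * ρ s) ∧
      (∀ i j : Fin (n + 1), i ≠ j →
        ¬((i : ℕ) + 1 = (j : ℕ) ∨ (j : ℕ) + 1 = (i : ℕ)) →
        (Finset.univ.filter (fun s : Fin (M + 1) =>
          (s : ℕ) < M ∧ ρ (s + 1) = Equiv.swap i j * ρ s)).card
            = 2 * Nat.factorial (n - 1)) := by
    classical
  obtain ⟨N, π, ⟨hN, hbij, hstep, hcount⟩, hπ0, hπN, -⟩ := h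
  obtain ⟨X, hX⟩ : ∃ X : Fin n, X = ⟨n - 2, by omega⟩ := ⟨_, rfl⟩
  obtain ⟨Y, hY⟩ : ∃ Y : Fin n, Y = ⟨n - 1, by omega⟩ := ⟨_, rfl⟩
  have hXY : X ≠ Y := by rw [hX, hY]; simp only [ne_eq, Fin.mk.injEq]; omega
  rw [← hX, ← hY] at hπN
  -- the cyclic code as a function on the natural numbers
  obtain ⟨p, hp⟩ : ∃ p : ℕ → Equiv.Perm (Fin n), ∀ r, p r = π (Fin.ofNat (N + 1) r) :=
    ⟨_, fun _ => rfl⟩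
  have hpv : ∀ s : Fin (N + 1), p s = π s := by
    intro s; rw [hp]; congr 1; ext; simp [Fin.ofNat, Nat.mod_eq_of_lt s.2]
  have hpv1 : ∀ s : Fin (N + 1), p (s + 1) = π (s + 1) := by
    intro s; rw [hp]; congr 1; ext; simp [Fin.ofNat, Fin.val_add]
  have hp0 : p 0 = 1 := by rw [← hπ0]; exact hpv 0
  have hpN : p N = Equiv.swap X Y := by rw [← hπN]; exact hpv (Fin.last N)
  have hpN1 : p (N + 1) = 1 := by
    have := hpv1 (Fin.last N)
    simpa [hπ0] using this
  have hpstep : ∀ r, r < N + 1 → ∃ i j : Fin n, i ≠ j ∧ p (r + 1) = Equiv.swap i j * p r := by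
    intro r hr
    obtain ⟨i, j, hij, he⟩ := hstep ⟨r, hr⟩
    refine ⟨i, j, hij, ?_⟩
    rw [← hpv1, ← hpv] at he
    exact he
  have hpinj : ∀ r r', r < N + 1 → r' < N + 1 → p r = p r' → r = r' := by
    intro r r' hr hr' he
    have h1 := hpv ⟨r, hr⟩
    have h2 := hpv ⟨r', hr'⟩
    simp only at h1 h2
    have := hbij.1 (h1.symm.trans (he.trans h2))
    simpa using this
  have hpcount : ∀ i j : Fin n, i ≠ j →
      Nat.count (fun r => p (r + 1) = Equiv.swap i j * p r) (N + 1) = 2 * Nat.factorial (n - 2) := by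
    intro i j hij
    rw [← hcount i j hij, ← gc_card_fin]
    congr 1
    ext s
    simp only [Finset.mem_filter, hpv, hpv1]
  -- block data
  obtain ⟨K, hK⟩ : ∃ K : ℕ → Fin (n + 1), ∀ b, K b = Fin.ofNat (n + 1) (n - b) := ⟨_, fun _ => rfl⟩
  have hKv : ∀ b, (K b : ℕ) = n - b := by
    intro b; rw [hK]; simp [Fin.ofNat]
  obtain ⟨A, hA⟩ : ∃ A : ℕ → Fin (n + 1), ∀ b, (A b : ℕ) = if b + 1 < n then 0 else 2 :=
    ⟨fun b => ⟨if b + 1 < n then 0 else 2, by split_ifs <;> omega⟩, fun _ => rfl⟩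
  obtain ⟨B, hB⟩ : ∃ B : ℕ → Fin (n + 1), ∀ b, (B b : ℕ) = (A b : ℕ) + 1 :=
    ⟨fun b => ⟨(A b : ℕ) + 1, by rw [hA]; split_ifs <;> omega⟩, fun _ => rfl⟩
  have hAB : ∀ b, A b ≠ B b := by
    intro b h; have := congrArg Fin.val h; rw [hB] at this; omega
  have hAK : ∀ b, A b ≠ K b := by
    intro b h; have := congrArg Fin.val h; rw [hA, hKv] at this; split_ifs at this <;> omega
  have hBK : ∀ b, B b ≠ K b := by
    intro b h; have := congrArg Fin.val h; rw [hB, hA, hKv] at this; split_ifs at this <;> omega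
  choose e he heX heY using fun b => gc_exists_emb n X Y hXY (K b) (A b) (B b) (hAB b) (hAK b) (hBK b)
  obtain ⟨E, hE⟩ : ∃ E : ℕ → (Equiv.Perm (Fin n) →* Equiv.Perm (Fin (n + 1))),
    ∀ b, E b = Equiv.Perm.viaEmbeddingHom (e b) := ⟨_, fun _ => rfl⟩
  have hEinj : ∀ b, Function.Injective (E b) := by
    intro b; rw [hE]; exact Equiv.Perm.viaEmbeddingHom_injective _
  have hEswap : ∀ b i j, E b (Equiv.swap i j) = Equiv.swap (e b i) (e b j) := by
    intro b i j; rw [hE, gc_via_swap]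
  have hEK : ∀ b σ, E b σ (K b) = K b := by
    intro b σ
    rw [hE, Equiv.Perm.viaEmbeddingHom_apply, Equiv.Perm.viaEmbedding_apply_of_notMem]
    rintro ⟨x, hx⟩
    exact (he b _).2 ⟨x, hx⟩ rfl
  obtain ⟨t, ht⟩ : ∃ t : ℕ → Equiv.Perm (Fin (n + 1)), ∀ b, t b = Equiv.swap (A b) (B b) :=
    ⟨_, fun _ => rfl⟩
  have hEN : ∀ b, E b (p N) = t b := by
    intro b; rw [hpN, hEswap, heX, heY, ht]
  have htt : ∀ b x, t b * (t b * x) = x := by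
    intro b x; rw [ht, Equiv.swap_mul_self_mul]
  have htK : ∀ b, t b (K b) = K b := by
    intro b; rw [ht]; exact Equiv.swap_apply_of_ne_of_ne (hAK b).symm (hBK b).symm
  obtain ⟨u, hu⟩ : ∃ u : ℕ → Equiv.Perm (Fin (n + 1)),
    ∀ b, u b = (if Even b then 1 else t b) * gcC n b := ⟨_, fun _ => rfl⟩
  have hcK : ∀ b, b ≤ n → gcC n b (Fin.last n) = K b := by
    intro b hb; ext; rw [gcC_val n b hb, hKv]; simp
  have huK : ∀ b, b ≤ n → u b (Fin.last n) = K b := by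
    intro b hb
    rw [hu, Equiv.Perm.mul_apply, hcK b hb]
    split_ifs
    · rfl
    · exact htK b
  obtain ⟨R, hR⟩ : ∃ R : ℕ → ℕ → Equiv.Perm (Fin (n + 1)), ∀ b r, R b r = E b (p r) * u b :=
    ⟨_, fun _ _ => rfl⟩
  have hRK : ∀ b r, b ≤ n → R b r (Fin.last n) = K b := by
    intro b r hb; rw [hR, Equiv.Perm.mul_apply, huK b hb, hEK]
  have hRinj : ∀ b r b' r', b ≤ n → b' ≤ n → r < N + 1 → r' < N + 1 →
      R b r = R b' r' → b = b' ∧ r = r' := by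
    intro b r b' r' hb hb' hr hr' h
    have h1 := hRK b r hb
    rw [h, hRK b' r' hb'] at h1
    have h2 := congrArg Fin.val h1
    rw [hKv, hKv] at h2
    have h3 : b = b' := by omega
    subst h3
    rw [hR, hR] at h
    exact ⟨rfl, hpinj _ _ hr hr' (hEinj b (mul_right_cancel h))⟩
  have hjoin : ∀ b, b < n → R (b + 1) 0 = Equiv.swap (K b) (K (b + 1)) * R b N := by
    intro b hb
    have hc : gcC n (b + 1) = Equiv.swap (K b) (K (b + 1)) * gcC n b := by rw [hK, hK]; rfl
    rw [hR, hR, hEN, hp0, map_one, one_mul, hu, hu, hc]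
    by_cases hev : Even b
    · have hno : ¬ Even (b + 1) := by rw [Nat.even_add_one]; simpa using hev
      rw [if_pos hev, if_neg hno, one_mul, ← mul_assoc, ← mul_assoc]
      congr 1
      have hAA : (A (b + 1) : ℕ) = A b := by
        rw [hA, hA]
        obtain ⟨m, rfl⟩ := hodd
        obtain ⟨l, rfl⟩ := hev
        split_ifs <;> omega
      have ht' : t (b + 1) = t b := by
        have h2 : B (b + 1) = B b := by ext; rw [hB, hB, hAA]
        rw [ht, ht, Fin.ext hAA, h2]
      have hAA' : A (b + 1) = A b := Fin.ext hAA
      have hBB' : B (b + 1) = B b := by ext; rw [hB, hB, hAA]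
      have d1 := hAK b
      have d2 := hBK b
      have d3 := hAK (b + 1)
      have d4 := hBK (b + 1)
      rw [hAA'] at d3
      rw [hBB'] at d4
      have d5 : K b ≠ K (b + 1) := by
        intro h; have := congrArg Fin.val h; rw [hKv, hKv] at this; omega
      rw [ht', ht]
      have hdis : Equiv.Perm.Disjoint (Equiv.swap (A b) (B b)) (Equiv.swap (K b) (K (b + 1))) := by
        apply Equiv.Perm.disjoint_swap_swap
        simp [hAB b, d1, d2, d3, d4, d5]
      exact hdis.commute
    · have hno : Even (b + 1) := by rw [Nat.even_add_one]; exact hev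
      rw [if_neg hev, if_pos hno, one_mul, htt]
  have hfinal : R n N = finRotate (n + 1) := by
    rw [hR, hEN, hu, if_neg (Nat.not_even_iff_odd.2 hodd), htt, gcC_last]
  have hRstart : R 0 0 = 1 := by
    rw [hR, hp0, map_one, hu]; simp [gcC]
  obtain ⟨F, hF⟩ : ∃ F : ℕ → Equiv.Perm (Fin (n + 1)),
    ∀ s, F s = R (s / (N + 1)) (s % (N + 1)) := ⟨_, fun _ => rfl⟩
  have hFR : ∀ b r, r < N + 1 → F (b * (N + 1) + r) = R b r := by
    intro b r hr
    rw [hF]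
    congr 1
    · rw [mul_comm, Nat.mul_add_div (by omega), Nat.div_eq_of_lt hr, add_zero]
    · rw [mul_comm, Nat.mul_add_mod, Nat.mod_eq_of_lt hr]
  have hFR1 : ∀ b, F (b * (N + 1) + N + 1) = R (b + 1) 0 := by
    intro b
    rw [← hFR (b + 1) 0 (by omega)]; congr 1; ring
  have hRstep : ∀ b r, R b (r + 1) = (E b (p (r + 1) * (p r)⁻¹)) * R b r := by
    intro b r; rw [hR, hR, ← mul_assoc, ← map_mul]; simp
  obtain ⟨M, hM⟩ : ∃ M, M + 1 = (n + 1) * (N + 1) := ⟨(n + 1) * (N + 1) - 1, by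
    have : 0 < (n + 1) * (N + 1) := by positivity
    omega⟩
  have hM' : M = n * (N + 1) + N := by
    have : (n + 1) * (N + 1) = n * (N + 1) + N + 1 := by ring
    omega
  have hdecomp : ∀ s, s < M + 1 → ∃ b r, b ≤ n ∧ r < N + 1 ∧ s = b * (N + 1) + r := by
    intro s hs
    refine ⟨s / (N + 1), s % (N + 1), ?_, Nat.mod_lt _ (by omega), ?_⟩
    · rw [hM] at hs
      exact Nat.lt_succ_iff.1 ((Nat.div_lt_iff_lt_mul (Nat.succ_pos N)).2 hs)
    · rw [mul_comm]; exact (Nat.div_add_mod s (N + 1)).symm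
  have hblt : ∀ b r, b ≤ n → r < N + 1 → b * (N + 1) + r < M → r = N → b < n := by
    intro b r hb hr h hrN
    by_contra hcon
    have : b = n := by omega
    subst this
    omega
  have hρ1 : ∀ s : Fin (M + 1), (s : ℕ) < M → F ((s + 1 : Fin (M + 1)) : ℕ) = F (s + 1) := by
    intro s hs
    rw [Fin.val_add_one_of_lt (Fin.lt_def.2 (by simpa using hs))]
  have hfac : M + 1 = Nat.factorial (n + 1) := by rw [hM, hN, Nat.factorial_succ]
  refine ⟨M, fun s => F s, hfac, ?_, ?_, ?_, ?_, ?_⟩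
  · rw [Fintype.bijective_iff_injective_and_card]
    refine ⟨?_, ?_⟩
    · intro s s' h
      obtain ⟨b, r, hb, hr, hs⟩ := hdecomp s s.2
      obtain ⟨b', r', hb', hr', hs'⟩ := hdecomp s' s'.2
      simp only [hs, hs', hFR _ _ hr, hFR _ _ hr'] at h
      obtain ⟨h1, h2⟩ := hRinj _ _ _ _ hb hb' hr hr' h
      ext
      rw [hs, hs', h1, h2]
    · rw [Fintype.card_fin, Fintype.card_perm, Fintype.card_fin, hfac]
  · show F 0 = 1
    rw [← hRstart, ← hFR 0 0 (by omega)]; simp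
  · show F M = _
    rw [hM', hFR _ _ (by omega), hfinal]
  · intro s hs
    simp only [hρ1 s hs]
    obtain ⟨b, r, hb, hr, hsb⟩ := hdecomp s s.2
    by_cases hrN : r = N
    · have hbn := hblt b r hb hr (hsb ▸ hs) hrN
      subst hrN
      refine ⟨K b, K (b + 1), ?_, ?_⟩
      · intro h; have := congrArg Fin.val h; rw [hKv, hKv] at this; omega
      · rw [hsb, hFR1, hFR _ _ hr, hjoin b hbn]
    · obtain ⟨i, j, hij, hs1⟩ := hpstep r hr
      refine ⟨e b i, e b j, fun h => hij ((e b).injective h), ?_⟩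
      rw [hsb, add_assoc, hFR _ _ hr, hFR _ _ (by omega), hRstep, hs1, mul_inv_cancel_right, hEswap]
  · intro i j hij hwide
    have hnotAB : ∀ b, Equiv.swap (A b) (B b) ≠ Equiv.swap i j := by
      intro b h
      have hb := hB b
      rcases gc_swap_eq (hAB b) h with ⟨h1, h2⟩ | ⟨h1, h2⟩ <;> rw [h1, h2] at hb <;> omega
    have hblock : ∀ b ∈ Finset.range (n + 1),
        Nat.count (fun r => b * (N + 1) + r < M ∧
          F (b * (N + 1) + r + 1) = Equiv.swap i j * F (b * (N + 1) + r)) (N + 1)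
        = if i ≠ K b ∧ j ≠ K b then 2 * Nat.factorial (n - 2) else 0 := by
      intro b hbr
      have hb : b ≤ n := by simpa [Nat.lt_succ_iff] using hbr
      have hlast : ¬ (b * (N + 1) + N < M ∧
          F (b * (N + 1) + N + 1) = Equiv.swap i j * F (b * (N + 1) + N)) := by
        rintro ⟨h1, h2⟩
        have hbn := hblt b N hb (by omega) h1 rfl
        rw [hFR1, hFR _ _ (by omega), hjoin b hbn] at h2
        have h3 := mul_right_cancel h2
        have d5 : K b ≠ K (b + 1) := by
          intro h; have := congrArg Fin.val h; rw [hKv, hKv] at this; omega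
        have k1 := hKv b
        have k2 := hKv (b + 1)
        rcases gc_swap_eq d5 h3 with ⟨h4, h5⟩ | ⟨h4, h5⟩ <;> rw [h4] at k1 <;>
          rw [h5] at k2 <;> omega
      have hmid : ∀ r, r < N → ((b * (N + 1) + r < M ∧
          F (b * (N + 1) + r + 1) = Equiv.swap i j * F (b * (N + 1) + r)) ↔
          E b (p (r + 1) * (p r)⁻¹) = Equiv.swap i j) := by
        intro r hr
        have hlt : b * (N + 1) + r < M := by
          have := Nat.mul_le_mul_right (N + 1) hb
          omega
        rw [add_assoc, hFR _ _ (by omega), hFR _ _ (by omega), hRstep]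
        constructor
        · rintro ⟨-, h⟩; exact mul_right_cancel h
        · intro h; exact ⟨hlt, by rw [h]⟩
      split_ifs with hK'
      · obtain ⟨i', rfl⟩ := (he b i).1 hK'.1
        obtain ⟨j', rfl⟩ := (he b j).1 hK'.2
        have hij' : i' ≠ j' := fun h => hij (by rw [h])
        rw [← hpcount i' j' hij', Nat.count_eq_card_filter_range, Nat.count_eq_card_filter_range]
        congr 1
        apply Finset.filter_congr
        intro r hr
        rw [Finset.mem_range] at hr
        by_cases hrN : r = N
        · subst hrN
          refine iff_of_false hlast ?_
          intro h
          rw [hpN1, hpN] at h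
          have h5 : Equiv.swap X Y = Equiv.swap i' j' := by
            have := congrArg (fun z => Equiv.swap i' j' * z) h
            simp only [Equiv.swap_mul_self_mul, mul_one] at this
            exact this.symm
          have h6 := congrArg (E b) h5
          rw [hEswap, hEswap, heX, heY] at h6
          exact hnotAB b h6
        · rw [hmid r (by omega), ← hEswap, (hEinj b).eq_iff, mul_inv_eq_iff_eq_mul]
      · rw [Nat.count_eq_card_filter_range, Finset.card_eq_zero, Finset.filter_eq_empty_iff]
        intro r hr
        rw [Finset.mem_range] at hr
        by_cases hrN : r = N
        · subst hrN; exact hlast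
        · rw [hmid r (by omega)]
          intro h
          have hk := hEK b (p (r + 1) * (p r)⁻¹)
          rw [h] at hk
          by_cases hi : i = K b
          · rw [← hi, Equiv.swap_apply_left] at hk; exact hij hk.symm
          · have hj : j = K b := by tauto
            rw [← hj, Equiv.swap_apply_right] at hk; exact hij hk
    have hcard : (Finset.univ.filter (fun s : Fin (M + 1) =>
          (s : ℕ) < M ∧ F ((s + 1 : Fin (M + 1)) : ℕ) = Equiv.swap i j * F s)).card
        = Nat.count (fun x => x < M ∧ F (x + 1) = Equiv.swap i j * F x) (M + 1) := by
      rw [← gc_card_fin]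
      congr 1
      apply Finset.filter_congr
      intro s _
      constructor
      · rintro ⟨h1, h2⟩; exact ⟨h1, by rw [← hρ1 s h1]; exact h2⟩
      · rintro ⟨h1, h2⟩; exact ⟨h1, by rw [hρ1 s h1]; exact h2⟩
    rw [hcard, hM, gc_count_blocks, Finset.sum_congr rfl hblock, ← Finset.sum_filter,
      Finset.sum_const, smul_eq_mul]
    have hset : (Finset.range (n + 1)).filter (fun b => i ≠ K b ∧ j ≠ K b)
        = ((Finset.range (n + 1)).erase (n - i)).erase (n - j) := by
      ext b
      have hi := i.2
      have hj := j.2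
      have hk := hKv b
      simp only [Finset.mem_filter, Finset.mem_erase, Finset.mem_range, ne_eq, Fin.ext_iff]
      omega
    have hij2 : (i : ℕ) ≠ j := fun h => hij (Fin.ext h)
    have hi := i.2
    have hj := j.2
    rw [hset, Finset.card_erase_of_mem, Finset.card_erase_of_mem, Finset.card_range]
    · obtain ⟨m, rfl⟩ : ∃ m, n = m + 2 := ⟨n - 2, by omega⟩
      simp only [show m + 2 + 1 - 1 - 1 = m + 1 by omega, show m + 2 - 2 = m by omega,
        show m + 2 - 1 = m + 1 by omega, Nat.factorial_succ]
      ring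
    · simp only [Finset.mem_range]; omega
    · simp only [Finset.mem_erase, Finset.mem_range]; omega
end

section
/- Let n ≥ 2 be even. Suppose there exists an almost balanced Gray code for S_n from the word 12⋯n to the word 23⋯n1, i.e., a Gray code in which every wide transposition on [n] is applied exactly 2(n−2)! times. Then there exists a balanced cyclic Gray code for S_{n+1} under all transpositions from 12⋯n(n+1) to 12⋯(n+1)n whose closing transposition is (n, n+1); in particular each of the (n+1)n/2 transpositions on [n+1] is applied exactly 2(n−1)! times along the cycle, counting the closing transposition. -/
namespace BalGray

/-- extend a permutation of `Fin n` to `Fin (n+1)` fixing the last value. -/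
def ext {n : ℕ} (σ : Equiv.Perm (Fin n)) : Equiv.Perm (Fin (n + 1)) where
  toFun := Fin.lastCases (Fin.last n) (fun i => (σ i).castSucc)
  invFun := Fin.lastCases (Fin.last n) (fun i => (σ.symm i).castSucc)
  left_inv := by
    intro x
    refine Fin.lastCases ?_ (fun i => ?_) x <;> simp
  right_inv := by
    intro x
    refine Fin.lastCases ?_ (fun i => ?_) x <;> simp

@[simp] lemma ext_last {n : ℕ} (σ : Equiv.Perm (Fin n)) : ext σ (Fin.last n) = Fin.last n := by
  simp [ext]

@[simp] lemma ext_castSucc {n : ℕ} (σ : Equiv.Perm (Fin n)) (i : Fin n) :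
    ext σ i.castSucc = (σ i).castSucc := by
  simp [ext]

lemma ext_mul {n : ℕ} (σ τ : Equiv.Perm (Fin n)) : ext (σ * τ) = ext σ * ext τ := by
  ext x : 1
  refine Fin.lastCases ?_ (fun i => ?_) x <;> simp

lemma ext_one {n : ℕ} : ext (1 : Equiv.Perm (Fin n)) = 1 := by
  ext x : 1
  refine Fin.lastCases ?_ (fun i => ?_) x <;> simp

lemma ext_injective {n : ℕ} : Function.Injective (ext (n := n)) := by
  intro σ τ h
  ext i : 1
  have := congrArg (fun f => f i.castSucc) h
  simpa using this

lemma ext_swap {n : ℕ} (i j : Fin n) :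
    ext (Equiv.swap i j) = Equiv.swap i.castSucc j.castSucc := by
  ext x : 1
  refine Fin.lastCases ?_ (fun k => ?_) x
  · rw [ext_last, Equiv.swap_apply_of_ne_of_ne] <;>
    exact (Fin.castSucc_lt_last _).ne'
  · rw [ext_castSucc, Equiv.swap_apply_def, Equiv.swap_apply_def]
    simp only [Fin.castSucc_inj]
    split_ifs <;> rfl

/-- translation by `b` -/
def tr {n : ℕ} (b : Fin (n + 1)) : Equiv.Perm (Fin (n + 1)) := Equiv.addRight b

@[simp] lemma tr_apply {n : ℕ} (b x : Fin (n + 1)) : tr b x = x + b := rfl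

lemma tr_add {n : ℕ} (b c : Fin (n + 1)) : tr (b + c) = tr b * tr c := by
  ext x : 1
  simp [add_comm, add_left_comm]

lemma tr_zero {n : ℕ} : tr (0 : Fin (n + 1)) = 1 := by
  ext x : 1
  simp

lemma tr_swap {n : ℕ} (b i j : Fin (n + 1)) :
    tr b * Equiv.swap i j = Equiv.swap (i + b) (j + b) * tr b := by
  rw [Equiv.mul_swap_eq_swap_mul]; rfl

lemma last_add_one {n : ℕ} : Fin.last n + 1 = 0 := by simp

lemma rot_eq {n : ℕ} (hn : 2 ≤ n) :
    tr (1 : Fin (n + 1)) = Equiv.swap 0 (Fin.last n) * ext (finRotate n) := by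
  obtain ⟨m, rfl⟩ : ∃ m, n = m + 1 := ⟨n - 1, by omega⟩
  ext x : 1
  refine Fin.lastCases ?_ (fun i => ?_) x
  · simp
  · rw [Equiv.Perm.mul_apply, ext_castSucc, tr_apply, finRotate_apply]
    by_cases h : i = Fin.last m
    · subst h
      simp
    · have hi : (i : ℕ) < m := by
        have := i.2
        have h2 : (i : ℕ) ≠ m := fun hq => h (Fin.ext hq)
        omega
      have h1 : ((i + 1 : Fin (m + 1)) : ℕ) = i + 1 := by
        rw [Fin.val_add_one, if_neg h]
      have h2 : (i.castSucc + 1 : Fin (m + 2)) = (i + 1 : Fin (m + 1)).castSucc := by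
        apply Fin.ext
        rw [Fin.val_add_one, if_neg (Fin.castSucc_lt_last _).ne]
        simp [h1]
      rw [h2, Equiv.swap_apply_of_ne_of_ne]
      · intro h3
        have := congrArg Fin.val h3
        simp [h1] at this
      · exact (Fin.castSucc_lt_last _).ne

/-- cyclic successor on pairs -/
def nx {n N : ℕ} (p : Fin (n + 1) × Fin (N + 1)) : Fin (n + 1) × Fin (N + 1) :=
  if (p.2 : ℕ) < N then (p.1, p.2 + 1) else (p.1 + 1, 0)

/-- the list of permutations, indexed by pairs -/
def gr {n N : ℕ} (π : Fin (N + 1) → Equiv.Perm (Fin n)) (p : Fin (n + 1) × Fin (N + 1)) :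
    Equiv.Perm (Fin (n + 1)) := tr p.1 * ext (π p.2)

/-- shift of the block -/
def sh {n N : ℕ} (c : Fin (n + 1)) : Fin (n + 1) × Fin (N + 1) ≃ Fin (n + 1) × Fin (N + 1) :=
  (Equiv.addLeft c).prodCongr (Equiv.refl _)

lemma sh_apply {n N : ℕ} (c : Fin (n + 1)) (p : Fin (n + 1) × Fin (N + 1)) :
    sh c p = (c + p.1, p.2) := rfl

lemma nx_sh {n N : ℕ} (c : Fin (n + 1)) (p : Fin (n + 1) × Fin (N + 1)) :
    nx (sh c p) = sh c (nx p) := by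
  rw [sh_apply, sh_apply]
  unfold nx
  by_cases h : (p.2 : ℕ) < N
  · rw [if_pos h, if_pos h]
  · rw [if_neg h, if_neg h, add_assoc]

lemma gr_sh {n N : ℕ} (π : Fin (N + 1) → Equiv.Perm (Fin n)) (c : Fin (n + 1))
    (p : Fin (n + 1) × Fin (N + 1)) : gr π (sh c p) = tr c * gr π p := by
  simp [gr, sh_apply, tr_add, mul_assoc]

/-- number of uses of the transposition -/
def cnt {n N : ℕ} (π : Fin (N + 1) → Equiv.Perm (Fin n)) (i j : Fin (n + 1)) : ℕ :=
  (Finset.univ.filter (fun p : Fin (n + 1) × Fin (N + 1) =>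
    gr π (nx p) = Equiv.swap i j * gr π p)).card

lemma cnt_shift {n N : ℕ} (π : Fin (N + 1) → Equiv.Perm (Fin n)) (c i j : Fin (n + 1)) :
    cnt π (i + c) (j + c) = cnt π i j := by
  symm
  unfold cnt
  refine Finset.card_equiv (sh c) ?_
  intro p
  simp only [Finset.mem_filter, Finset.mem_univ, true_and]
  rw [nx_sh, gr_sh, gr_sh, ← mul_assoc, ← tr_swap, mul_assoc, mul_right_inj]

lemma cnt_comm {n N : ℕ} (π : Fin (N + 1) → Equiv.Perm (Fin n)) (i j : Fin (n + 1)) :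
    cnt π i j = cnt π j i := by
  unfold cnt
  rw [Equiv.swap_comm]

lemma gr_inj {n N : ℕ} (π : Fin (N + 1) → Equiv.Perm (Fin n)) (hπ : Function.Injective π) :
    Function.Injective (gr π) := by
  rintro ⟨b, r⟩ ⟨c, s⟩ h
  have h1 := congrArg (fun f => f (Fin.last n)) h
  simp [gr] at h1
  subst h1
  simp only [gr, mul_right_inj] at h
  rw [hπ (ext_injective h)]

lemma step_end {n N : ℕ} (hn : 2 ≤ n) (π : Fin (N + 1) → Equiv.Perm (Fin n))
    (h0 : π 0 = 1) (hl : π (Fin.last N) = finRotate n) (b : Fin (n + 1)) :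
    gr π (nx (b, Fin.last N)) = Equiv.swap b (Fin.last n + b) * gr π (b, Fin.last N) := by
  have : nx (b, Fin.last N) = (b + 1, 0) := by simp [nx]
  rw [this]
  simp only [gr, h0, hl, ext_one, mul_one]
  rw [tr_add, rot_eq hn, ← mul_assoc, tr_swap, mul_assoc, zero_add]

lemma step_mid {n N : ℕ} (π : Fin (N + 1) → Equiv.Perm (Fin n))
    (b : Fin (n + 1)) (r : Fin (N + 1)) (hr : (r : ℕ) < N) (i j : Fin n)
    (h : π (r + 1) = Equiv.swap i j * π r) :
    gr π (nx (b, r)) = Equiv.swap (i.castSucc + b) (j.castSucc + b) * gr π (b, r) := by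
  have : nx (b, r) = (b, r + 1) := by simp [nx, hr]
  rw [this]
  simp only [gr, h]
  rw [ext_mul, ext_swap, ← mul_assoc, tr_swap, mul_assoc]

lemma step_mid_iff {n N : ℕ} (π : Fin (N + 1) → Equiv.Perm (Fin n))
    (b : Fin (n + 1)) (r : Fin (N + 1)) (hr : (r : ℕ) < N) (i j : Fin n) :
    gr π (nx (b, r)) = Equiv.swap (i.castSucc + b) (j.castSucc + b) * gr π (b, r) ↔
    π (r + 1) = Equiv.swap i j * π r := by
  refine ⟨fun h => ?_, step_mid π b r hr i j⟩
  have : nx (b, r) = (b, r + 1) := by simp [nx, hr]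
  rw [this] at h
  simp only [gr] at h
  rw [← mul_assoc, ← tr_swap, mul_assoc, mul_right_inj, ← ext_swap, ← ext_mul] at h
  exact ext_injective h

lemma step_mid_last {n N : ℕ} (π : Fin (N + 1) → Equiv.Perm (Fin n))
    (b : Fin (n + 1)) (r : Fin (N + 1)) (hr : (r : ℕ) < N) (i j : Fin (n + 1)) (hij : i ≠ j)
    (h : gr π (nx (b, r)) = Equiv.swap i j * gr π (b, r)) :
    i ≠ Fin.last n + b := by
  have : nx (b, r) = (b, r + 1) := by simp [nx, hr]
  rw [this] at h
  rintro rfl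
  have h1 := congrArg (fun f => f (Fin.last n)) h
  simp [gr] at h1
  exact hij h1

lemma exists_step {n N : ℕ} (hn : 2 ≤ n) (π : Fin (N + 1) → Equiv.Perm (Fin n))
    (h0 : π 0 = 1) (hl : π (Fin.last N) = finRotate n)
    (hs : ∀ s : Fin (N + 1), (s : ℕ) < N →
        ∃ i j : Fin n, i ≠ j ∧ π (s + 1) = Equiv.swap i j * π s)
    (p : Fin (n + 1) × Fin (N + 1)) :
    ∃ i j : Fin (n + 1), i ≠ j ∧ gr π (nx p) = Equiv.swap i j * gr π p := by
  obtain ⟨b, r⟩ := p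
  by_cases hr : (r : ℕ) < N
  · obtain ⟨i, j, hij, h⟩ := hs r hr
    refine ⟨_, _, ?_, step_mid π b r hr i j h⟩
    simpa using hij
  · have : r = Fin.last N := by
      apply Fin.ext
      have := r.2
      simp; omega
    subst this
    refine ⟨_, _, ?_, step_end hn π h0 hl b⟩
    intro h
    have h2 : Fin.last n = 0 := by simpa using h.symm
    have := congrArg Fin.val h2
    simp at this
    omega

lemma swap_pairs {m : ℕ} (a b : Fin m) (hab : a ≠ b) :
    (Finset.univ.filter (fun q : Fin m × Fin m =>
      q.1 ≠ q.2 ∧ Equiv.swap a b = Equiv.swap q.1 q.2)).card = 2 := by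
  have : (Finset.univ.filter (fun q : Fin m × Fin m =>
      q.1 ≠ q.2 ∧ Equiv.swap a b = Equiv.swap q.1 q.2)) = {(a, b), (b, a)} := by
    ext ⟨x, y⟩
    simp only [Finset.mem_filter, Finset.mem_univ, true_and, Finset.mem_insert,
      Finset.mem_singleton, Prod.mk.injEq]
    constructor
    · rintro ⟨hxy, h⟩
      have h1 := congrArg (fun f => f a) h
      have h2 := congrArg (fun f => f b) h
      simp only [Equiv.swap_apply_left, Equiv.swap_apply_right, Equiv.swap_apply_def] at h1 h2
      grind
    · rintro (⟨rfl, rfl⟩ | ⟨rfl, rfl⟩)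
      · exact ⟨hab, rfl⟩
      · exact ⟨hab.symm, Equiv.swap_comm _ _⟩
  rw [this, Finset.card_pair]
  simp [hab]

/-- total count -/
lemma sum_cnt {n N : ℕ} (π : Fin (N + 1) → Equiv.Perm (Fin n))
    (hex : ∀ p : Fin (n + 1) × Fin (N + 1),
      ∃ i j : Fin (n + 1), i ≠ j ∧ gr π (nx p) = Equiv.swap i j * gr π p) :
    ∑ q : Fin (n + 1) × Fin (n + 1), (if q.1 ≠ q.2 then cnt π q.1 q.2 else 0)
      = 2 * ((n + 1) * (N + 1)) := by
  have h1 : ∀ q : Fin (n + 1) × Fin (n + 1), (if q.1 ≠ q.2 then cnt π q.1 q.2 else 0) =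
      ∑ p : Fin (n + 1) × Fin (N + 1),
        if q.1 ≠ q.2 ∧ gr π (nx p) = Equiv.swap q.1 q.2 * gr π p then 1 else 0 := by
    intro q
    by_cases h : q.1 = q.2
    · simp [h]
    · simp [h, cnt]
  rw [Finset.sum_congr rfl (fun q _ => h1 q), Finset.sum_comm]
  have h2 : ∀ p : Fin (n + 1) × Fin (N + 1), (∑ q : Fin (n + 1) × Fin (n + 1),
        if q.1 ≠ q.2 ∧ gr π (nx p) = Equiv.swap q.1 q.2 * gr π p then 1 else 0) = 2 := by
    intro p
    obtain ⟨i, j, hij, h⟩ := hex p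
    rw [← swap_pairs i j hij, h, Finset.card_filter]
    simp only [mul_left_inj]
  rw [Finset.sum_congr rfl (fun p _ => h2 p)]
  simp [mul_comm]

lemma sum_cnt_zero {n N : ℕ} (π : Fin (N + 1) → Equiv.Perm (Fin n))
    (hex : ∀ p : Fin (n + 1) × Fin (N + 1),
      ∃ i j : Fin (n + 1), i ≠ j ∧ gr π (nx p) = Equiv.swap i j * gr π p) :
    ∑ d : Fin (n + 1), (if d ≠ 0 then cnt π 0 d else 0) = 2 * (N + 1) := by
  have h := sum_cnt π hex
  rw [Fintype.sum_prod_type] at h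
  have h1 : ∀ i : Fin (n + 1), (∑ j : Fin (n + 1), if i ≠ j then cnt π i j else 0) =
      ∑ d : Fin (n + 1), (if d ≠ 0 then cnt π 0 d else 0) := by
    intro i
    symm
    refine Fintype.sum_equiv (Equiv.addRight i) _ _ ?_
    intro d
    have h3 : (i ≠ d + i) ↔ d ≠ 0 := by
      simp [eq_comm]
    simp only [Equiv.coe_addRight, h3]
    have := cnt_shift π i 0 d
    rw [zero_add] at this
    rw [this]
  rw [Finset.sum_congr rfl (fun i _ => h1 i)] at h
  simp only [Finset.sum_const, Finset.card_univ, Fintype.card_fin, smul_eq_mul] at h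
  have : (n + 1) * (∑ d : Fin (n + 1), (if d ≠ 0 then cnt π 0 d else 0))
    = (n + 1) * (2 * (N + 1)) := by rw [h]; ring
  exact Nat.eq_of_mul_eq_mul_left (Nat.succ_pos n) this

lemma last_eq {n : ℕ} : Fin.last n = -1 := eq_neg_of_add_eq_zero_left (by simp)

lemma cnt_wide {n N : ℕ} (hn : 2 ≤ n) (π : Fin (N + 1) → Equiv.Perm (Fin n))
    (h0 : π 0 = 1) (hl : π (Fin.last N) = finRotate n) 
    (hw : ∀ i j : Fin n, i ≠ j →
        ¬((i : ℕ) + 1 = (j : ℕ) ∨ (j : ℕ) + 1 = (i : ℕ)) →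
        (Finset.univ.filter (fun s : Fin (N + 1) =>
          (s : ℕ) < N ∧ π (s + 1) = Equiv.swap i j * π s)).card
            = 2 * Nat.factorial (n - 2))
    (d : Fin (n + 1)) (hd0 : d ≠ 0) (hd1 : d ≠ 1) (hd2 : d ≠ -1) :
    cnt π 0 d = 2 * Nat.factorial (n - 1) := by
  have h1 : cnt π 0 d = ∑ b : Fin (n + 1), (Finset.univ.filter (fun r : Fin (N + 1) =>
      gr π (nx (b, r)) = Equiv.swap 0 d * gr π (b, r))).card := by
    simp only [cnt, Finset.card_filter]
    rw [Fintype.sum_prod_type]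
  have hne : (1 : Fin (n + 1)) ≠ d + 1 := by
    intro h; apply hd0; simpa using h.symm
  -- the connecting step never uses this transposition
  have hend : ∀ b : Fin (n + 1), ∀ r : Fin (N + 1),
      gr π (nx (b, r)) = Equiv.swap 0 d * gr π (b, r) → (r : ℕ) < N := by
    intro b r h
    by_contra hr
    have : r = Fin.last N := by
      apply Fin.ext
      have := r.2
      simp; omega
    subst this
    rw [step_end hn π h0 hl b, mul_left_inj] at h
    have h1 := congrArg (fun f => f 0) h
    simp only [Equiv.swap_apply_left, Equiv.swap_apply_def] at h1
    split_ifs at h1 with h2 h3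
    · subst h2; apply hd2; rw [← h1, last_eq]; simp
    · subst h1; apply hd1
      rw [last_eq] at h3
      exact (eq_neg_of_add_eq_zero_right h3.symm).trans (by simp)
    · exact hd0 h1.symm
  have h2 : ∀ b : Fin (n + 1), (Finset.univ.filter (fun r : Fin (N + 1) =>
      gr π (nx (b, r)) = Equiv.swap 0 d * gr π (b, r))).card =
      if b ∈ ({1, d + 1} : Finset (Fin (n + 1))) then 0 else 2 * Nat.factorial (n - 2) := by
    intro b
    split_ifs with hb
    · rw [Finset.card_eq_zero, Finset.filter_eq_empty_iff]
      intro r _ h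
      have hr := hend b r h
      have e1 := step_mid_last π b r hr 0 d (Ne.symm hd0) h
      rw [Equiv.swap_comm] at h
      have e2 := step_mid_last π b r hr d 0 hd0 h
      rw [last_eq] at e1 e2
      simp only [Finset.mem_insert, Finset.mem_singleton] at hb
      rcases hb with rfl | rfl
      · simp at e1
      · apply e2; abel
    · simp only [Finset.mem_insert, Finset.mem_singleton, not_or] at hb
      have hi : (0 - b : Fin (n + 1)) ≠ Fin.last n := by
        rw [last_eq]; intro h; apply hb.1
        have : b = 0 - (0 - b) := by abel
        rw [this, h]; simp
      have hj : (d - b : Fin (n + 1)) ≠ Fin.last n := by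
        rw [last_eq]; intro h; apply hb.2
        have : b = d - (d - b) := by abel
        rw [this, h]; simp
      obtain ⟨i, hi⟩ := Fin.exists_castSucc_eq.2 hi
      obtain ⟨j, hj⟩ := Fin.exists_castSucc_eq.2 hj
      have hi' : (0 : Fin (n + 1)) = i.castSucc + b := by rw [hi]; abel
      have hj' : d = j.castSucc + b := by rw [hj]; abel
      have hd : d = j.castSucc - i.castSucc := by rw [hi, hj]; abel
      rw [← hw i j]
      · congr 1
        apply Finset.filter_congr
        intro r _
        constructor
        · intro h
          have hr := hend b r h
          rw [hi', hj'] at h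
          exact ⟨hr, (step_mid_iff π b r hr i j).1 h⟩
        · rintro ⟨hr, h⟩
          rw [hi', hj']
          exact (step_mid_iff π b r hr i j).2 h
      · rintro rfl
        apply hd0; rw [hd]; abel
      · have key : ∀ x y : Fin n, (x : ℕ) + 1 = y → y.castSucc = x.castSucc + 1 := by
          intro x y h
          apply Fin.ext
          rw [Fin.val_add_one, if_neg (Fin.castSucc_lt_last _).ne]
          simp [h]
        rintro (h | h)
        · apply hd1; rw [hd, key i j h]; abel
        · apply hd2; rw [hd, key j i h]; abel
  rw [h1, Finset.sum_congr rfl (fun b _ => h2 b), Finset.sum_ite]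
  simp only [Finset.sum_const_zero, zero_add, Finset.sum_const, smul_eq_mul]
  have h3 : (Finset.univ.filter (fun b : Fin (n + 1) =>
      b ∉ ({1, d + 1} : Finset (Fin (n + 1))))).card = n - 1 := by
    rw [Finset.filter_not, Finset.filter_mem_eq_inter, Finset.univ_inter,
      ← Finset.compl_eq_univ_sdiff, Finset.card_compl, Finset.card_pair hne, Fintype.card_fin]
    omega
  rw [h3]
  obtain ⟨m, rfl⟩ : ∃ m, n = m + 2 := ⟨n - 2, by omega⟩
  have e1 : m + 2 - 1 = m + 1 := by omega
  rw [e1, Nat.factorial_succ, Nat.add_sub_cancel]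
  ring

lemma one_ne_neg_one {n : ℕ} (hn : 2 ≤ n) : (1 : Fin (n + 1)) ≠ -1 := by
  rw [← last_eq]
  intro h
  have := congrArg Fin.val h
  rw [Fin.val_one', Nat.mod_eq_of_lt (by omega)] at this
  simp at this
  omega

lemma cnt_all {n N : ℕ} (hn : 2 ≤ n) (hN : N + 1 = Nat.factorial n)
    (π : Fin (N + 1) → Equiv.Perm (Fin n))
    (h0 : π 0 = 1) (hl : π (Fin.last N) = finRotate n) 
    (hs : ∀ s : Fin (N + 1), (s : ℕ) < N →
        ∃ i j : Fin n, i ≠ j ∧ π (s + 1) = Equiv.swap i j * π s)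
    (hw : ∀ i j : Fin n, i ≠ j →
        ¬((i : ℕ) + 1 = (j : ℕ) ∨ (j : ℕ) + 1 = (i : ℕ)) →
        (Finset.univ.filter (fun s : Fin (N + 1) =>
          (s : ℕ) < N ∧ π (s + 1) = Equiv.swap i j * π s)).card
            = 2 * Nat.factorial (n - 2))
    (i j : Fin (n + 1)) (hij : i ≠ j) :
    cnt π i j = 2 * Nat.factorial (n - 1) := by
  have hneg : cnt π 0 (-1) = cnt π 0 1 := by
    have := cnt_shift π 1 (-1) 0
    rw [neg_add_cancel, zero_add] at this
    rw [cnt_comm, ← this]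
  have hne := one_ne_neg_one hn
  have h10 : (1 : Fin (n + 1)) ≠ 0 := by
    intro h; apply hne; rw [h]; simp
  have hm10 : (-1 : Fin (n + 1)) ≠ 0 := by simpa using h10
  have hone : cnt π 0 1 = 2 * Nat.factorial (n - 1) := by
    have hsum := sum_cnt_zero π (exists_step hn π h0 hl hs)
    set S : Finset (Fin (n + 1)) := {0, 1, -1} with hS
    have hScard : S.card = 3 := by
      rw [hS, Finset.card_insert_of_notMem, Finset.card_pair hne]
      simp [h10.symm, hm10.symm]
    rw [← Finset.sum_add_sum_compl S] at hsum
    have e1 : ∑ d ∈ S, (if d ≠ 0 then cnt π 0 d else 0) = 2 * cnt π 0 1 := by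
      rw [hS, Finset.sum_insert, Finset.sum_pair hne]
      · rw [if_neg (by simp), if_pos h10, if_pos hm10, hneg]; ring
      · simp [h10.symm, hm10.symm]
    have e2 : ∑ d ∈ Sᶜ, (if d ≠ 0 then cnt π 0 d else 0)
        = (n - 2) * (2 * Nat.factorial (n - 1)) := by
      have : ∀ d ∈ Sᶜ, (if d ≠ 0 then cnt π 0 d else 0) = 2 * Nat.factorial (n - 1) := by
        intro d hd
        simp only [hS, Finset.mem_compl, Finset.mem_insert, Finset.mem_singleton, not_or] at hd
        rw [if_pos hd.1]
        exact cnt_wide hn π h0 hl hw d hd.1 hd.2.1 hd.2.2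
      rw [Finset.sum_congr rfl this, Finset.sum_const, Finset.card_compl, hScard,
        Fintype.card_fin, smul_eq_mul]
      congr 1
    rw [e1, e2, hN] at hsum
    obtain ⟨m, rfl⟩ : ∃ m, n = m + 2 := ⟨n - 2, by omega⟩
    have e3 : m + 2 - 1 = m + 1 := by omega
    rw [Nat.factorial_succ (m + 1)] at hsum
    rw [e3] at hsum ⊢
    simp only [Nat.add_sub_cancel] at hsum
    nlinarith
  have hsh : cnt π i j = cnt π 0 (j - i) := by
    have := cnt_shift π i 0 (j - i)
    rw [zero_add, sub_add_cancel] at this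
    exact this
  rw [hsh]
  have hd0 : j - i ≠ 0 := sub_ne_zero.2 hij.symm
  generalize j - i = d at hd0
  by_cases hd1 : d = 1
  · rw [hd1, hone]
  by_cases hd2 : d = -1
  · rw [hd2, hneg, hone]
  exact cnt_wide hn π h0 hl hw d hd0 hd1 hd2

end BalGray

/-- Let `n ≥ 2` be even. Suppose `S_n` has an almost balanced Gray code from
the identity word `12⋯n` to the word `23⋯n1` (the rotation `finRotate n`): a (non-cyclic)
listing of all `n!` permutations, each exactly once, consecutive ones differing by applying
a transposition, in which every wide transposition (`|i−j| ≠ 1`) on `[n]` is applied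
exactly `2·(n−2)!` times. Then `S_{n+1}` has a balanced cyclic Gray code under all
transpositions from `12⋯n(n+1)` (the identity) to `12⋯(n+1)n` with closing transposition
`(n, n+1)`: each of the `(n+1)n/2` transpositions on `[n+1]` is applied exactly `2·(n−1)!`
times along the cycle, counting the closing step. -/
theorem balanced_cyclic_from_almost_balanced (n : ℕ) (hn : 2 ≤ n) (he : Even n)
    (h : ∃ (N : ℕ) (π : Fin (N + 1) → Equiv.Perm (Fin n)),
      N + 1 = Nat.factorial n ∧
      Function.Bijective π ∧
      π 0 = 1 ∧
      π (Fin.last N) = finRotate n ∧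
      (∀ s : Fin (N + 1), (s : ℕ) < N →
        ∃ i j : Fin n, i ≠ j ∧ π (s + 1) = Equiv.swap i j * π s) ∧
      (∀ i j : Fin n, i ≠ j →
        ¬((i : ℕ) + 1 = (j : ℕ) ∨ (j : ℕ) + 1 = (i : ℕ)) →
        (Finset.univ.filter (fun s : Fin (N + 1) =>
          (s : ℕ) < N ∧ π (s + 1) = Equiv.swap i j * π s)).card
            = 2 * Nat.factorial (n - 2))) :
    ∃ (M : ℕ) (ρ : Fin (M + 1) → Equiv.Perm (Fin (n + 1))),
      M + 1 = Nat.factorial (n + 1) ∧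
      Function.Bijective ρ ∧
      ρ 0 = 1 ∧
      ρ (Fin.last M) = Equiv.swap ⟨n - 1, by omega⟩ ⟨n, by omega⟩ ∧
      ρ 0 = Equiv.swap ⟨n - 1, by omega⟩ ⟨n, by omega⟩ * ρ (Fin.last M) ∧
      (∀ s : Fin (M + 1), ∃ i j : Fin (n + 1), i ≠ j ∧ ρ (s + 1) = Equiv.swap i j * ρ s) ∧
      (∀ i j : Fin (n + 1), i ≠ j →
        (Finset.univ.filter (fun s : Fin (M + 1) =>
          ρ (s + 1) = Equiv.swap i j * ρ s)).card = 2 * Nat.factorial (n - 1)) := by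
  obtain ⟨N, π, hN, hbij, h0, hl, hs, hw⟩ := h
  have hM : n * (N + 1) + N + 1 = (n + 1) * (N + 1) := by ring
  let e : Fin (n * (N + 1) + N + 1) ≃ Fin (n + 1) × Fin (N + 1) :=
    (finCongr hM).trans finProdFinEquiv.symm
  have hval : ∀ p, ((e.symm p : Fin (n * (N + 1) + N + 1)) : ℕ) = p.2 + (N + 1) * p.1 := by
    intro p
    simp [e, finProdFinEquiv]
  have hsymm : ∀ p, e.symm (BalGray.nx p) = e.symm p + 1 := by
    rintro ⟨b, r⟩
    apply Fin.ext
    have hb := b.2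
    have hr := r.2
    rw [Fin.val_add_one, hval, hval]
    have hlast : e.symm (b, r) = Fin.last _ ↔ (r : ℕ) + (N + 1) * b = n * (N + 1) + N := by
      rw [Fin.ext_iff, hval]; simp
    rw [if_congr hlast rfl rfl]
    unfold BalGray.nx
    by_cases h1 : (r : ℕ) < N
    · have hrl : r ≠ Fin.last N := by
        rintro rfl; simp at h1
      rw [if_pos h1, if_neg]
      · simp only [Fin.val_add_one, if_neg hrl]
        ring
      · have : (b : ℕ) ≤ n := by omega
        nlinarith
    · rw [if_neg h1]
      have hrN : (r : ℕ) = N := by omega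
      by_cases h2 : b = Fin.last n
      · subst h2
        rw [if_pos (by rw [hrN, Fin.val_last]; ring)]
        simp
      · have hbn : (b : ℕ) < n := by
          have : (b : ℕ) ≠ n := fun hq => h2 (Fin.ext hq)
          omega
        rw [if_neg (by rw [hrN]; nlinarith)]
        simp only [Fin.val_add_one, if_neg h2, Fin.val_zero, hrN]
        ring
  have hnext : ∀ s, e (s + 1) = BalGray.nx (e s) := by
    intro s
    have := hsymm (e s)
    rw [Equiv.symm_apply_apply] at this
    rw [← this, Equiv.apply_symm_apply]
  have he0 : e 0 = (0, 0) := by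
    rw [← Equiv.eq_symm_apply]
    apply Fin.ext
    rw [hval]; simp
  have hel : e (Fin.last _) = (Fin.last n, Fin.last N) := by
    rw [← Equiv.eq_symm_apply]
    apply Fin.ext
    rw [hval]; simp; ring
  have hr0 : BalGray.gr π (e 0) = 1 := by
    rw [he0]; simp [BalGray.gr, h0, BalGray.ext_one, BalGray.tr_zero]
  have hclose : BalGray.gr π (e 0) = Equiv.swap (⟨n - 1, by omega⟩ : Fin (n + 1))
      ⟨n, by omega⟩ * BalGray.gr π (e (Fin.last _)) := by
    have h1 := BalGray.step_end hn π h0 hl (Fin.last n)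
    rw [← hel, ← hnext, Fin.last_add_one] at h1
    have e1 : Fin.last n + Fin.last n = (⟨n - 1, by omega⟩ : Fin (n + 1)) := by
      apply Fin.ext
      rw [Fin.val_add]
      simp only [Fin.val_last]
      have : n + n = (n - 1) + (n + 1) := by omega
      rw [this, Nat.add_mod_right, Nat.mod_eq_of_lt (by omega)]
    rw [h1, e1, Equiv.swap_comm]
    rfl
  refine ⟨n * (N + 1) + N, fun s => BalGray.gr π (e s), ?_, ?_, hr0, ?_, hclose, ?_, ?_⟩
  · rw [hM, hN, Nat.factorial_succ]
  · rw [Fintype.bijective_iff_injective_and_card]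
    refine ⟨(BalGray.gr_inj π hbij.1).comp e.injective, ?_⟩
    rw [Fintype.card_fin, Fintype.card_perm, Fintype.card_fin, hM, hN, Nat.factorial_succ]
  · rw [hr0] at hclose
    have h3 := congrArg (fun x => Equiv.swap (⟨n - 1, by omega⟩ : Fin (n + 1))
      ⟨n, by omega⟩ * x) hclose
    simp only [mul_one, Equiv.swap_mul_self_mul] at h3
    exact h3.symm
  · intro s
    simp only [hnext]
    exact BalGray.exists_step hn π h0 hl hs (e s)
  · intro i j hij
    rw [← BalGray.cnt_all hn hN π h0 hl hs hw i j hij]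
    unfold BalGray.cnt
    refine Finset.card_equiv e ?_
    intro s
    simp [hnext]
end
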